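/- Let α ∈ (0,2). For a compact set E ⊆ ℝ² let W_α(E) = inf over Borel probability measures μ supported in E of ∫_E ∫_E |x − y|^{α−2} dμ(x) dμ(y), and define the Riesz α-capacity 𝓘_α(E) = 1 / W_α(E). Then, for any regular hexagon H* with |H*| = 1, 𝓘_α(H*) ≤ 𝓘_α(H) for every H ∈ 𝓗 with |H| = 1; equivalently W_α(H*) ≥ W_α(H), i.e. among convex polygons of unit area that tile the plane by translations, the regular hexagon minimizes the Riesz α-capacity. -/

import Mathlib

open MeasureTheory Metric Filter Real Set
open scoped Topology ENNReal NNReal RealInnerProductSpace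

noncomputable section

/-- The Euclidean plane. -/
abbrev E2 : Type := EuclideanSpace ℝ (Fin 2)

/-- The line through `x` with direction `v`. -/
def lineThrough (x v : E2) : Set E2 := {y : E2 | ∃ t : ℝ, y = x + t • v}

/-- Steiner symmetrization of `A` with respect to the affine line `{x | ⟪x, v⟫ = c}`,
where `v` is a unit normal vector of the line. -/
def steiner (v : E2) (c : ℝ) (A : Set E2) : Set E2 :=
  {y : E2 | ∃ x : E2, ⟪x, v⟫ = c ∧ (A ∩ lineThrough x v).Nonempty ∧
    ∃ r : ℝ, y = x + r • v ∧
      ENNReal.ofReal (2 * |r|) ≤ μH[1] (A ∩ lineThrough x v)}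

/-- The class `𝓗` of centrally symmetric convex hexagons (possibly degenerated to
parallelograms), i.e. the convex polygons tiling the plane by translations. -/
def Hex (H : Set E2) : Prop :=
  (∃ x₀ p q r : E2, H = (fun y => x₀ + y) '' convexHull ℝ ({p, q, r, -p, -q, -r} : Set E2)) ∧
  (interior H).Nonempty

/-- The `k`-th vertex of the standard regular hexagon. -/
def hexVertex (k : ℕ) : E2 :=
  (WithLp.equiv 2 (Fin 2 → ℝ)).symm ![Real.cos (k * π / 3), Real.sin (k * π / 3)]

/-- The standard regular hexagon, with vertices `(cos (kπ/3), sin (kπ/3))`, `k = 0, …, 5`. -/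
def stdHexagon : Set E2 := convexHull ℝ (Set.range fun k : Fin 6 => hexVertex k)

/-- A similarity of the plane (composition of a rotation, a dilation and a translation,
possibly with a reflection). -/
def IsSimilarity (f : E2 → E2) : Prop :=
  ∃ s : ℝ, 0 < s ∧ ∀ x y, dist (f x) (f y) = s * dist x y

/-- A regular hexagon is any image of the standard one under a similarity. -/
def IsRegularHexagon (H : Set E2) : Prop := ∃ f : E2 → E2, IsSimilarity f ∧ H = f '' stdHexagon

/-- Convergence of a sequence of sets in the Hausdorff distance. -/
def HausdorffTendsto (Hn : ℕ → Set E2) (H : Set E2) : Prop :=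
  Tendsto (fun n => EMetric.hausdorffEdist (Hn n) H) atTop (𝓝 0)

/-- The planar cross product (determinant) of two vectors. -/
def det2 (u w : E2) : ℝ := u 0 * w 1 - u 1 * w 0

/-- `A, B, C, D, E, F` are (consecutive) vertices of the centrally symmetric hexagon `H`:
`H` is their convex hull, `D, E, F` are the antipodes of `A, B, C` with respect to a center
`o`, and `H` has nonempty interior. -/
def HexWithVertices (A B C D E F : E2) (H : Set E2) : Prop :=
  H = convexHull ℝ ({A, B, C, D, E, F} : Set E2) ∧
  (∃ o : E2, D = (2:ℝ) • o - A ∧ E = (2:ℝ) • o - B ∧ F = (2:ℝ) • o - C) ∧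
  (interior H).Nonempty

/-- The vertices `A, B, C, D, E, F` are listed in counterclockwise order. -/
def CCWList (A B C D E F : E2) : Prop :=
  0 ≤ det2 (B - A) (C - B) ∧ 0 ≤ det2 (C - B) (D - C) ∧ 0 ≤ det2 (D - C) (E - D) ∧
  0 ≤ det2 (E - D) (F - E) ∧ 0 ≤ det2 (F - E) (A - F) ∧ 0 ≤ det2 (A - F) (B - A)

/-- The six vertices are distinct and no three of them are collinear. -/
def NondegenerateHex (A B C D E F : E2) : Prop :=
  [A, B, C, D, E, F].Pairwise (· ≠ ·) ∧
  ∀ P Q R : E2, P ∈ ({A, B, C, D, E, F} : Set E2) → Q ∈ ({A, B, C, D, E, F} : Set E2) →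
    R ∈ ({A, B, C, D, E, F} : Set E2) → P ≠ Q → P ≠ R → Q ≠ R →
      ¬ Collinear ℝ ({P, Q, R} : Set E2)

/-- The Riesz `α`-energy infimum `W_α(E)`: the infimum over Borel probability measures
supported in `E` of `∫_E ∫_E |x−y|^{α−2} dμ dμ`. -/
def rieszW (α : ℝ) (E : Set E2) : ℝ≥0∞ :=
  ⨅ (μ : Measure E2) (_ : IsProbabilityMeasure μ) (_ : μ E = 1),
    ∫⁻ x in E, ∫⁻ y in E, edist x y ^ (α - 2) ∂μ ∂μ

/-- The Riesz `α`-capacity `𝓘_α(E) = 1 / W_α(E)`. -/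
def rieszCap (α : ℝ) (E : Set E2) : ℝ≥0∞ := 1 / rieszW α E

/-!
The Riesz kernel is, up to a constant, `∫ t^(α/2-1) heatKernel t dt`, a mixture of heat kernels.
Say that `E` heat-dominates `F` if every `f ∈ L²` with `f ≥ 1` on `E` has a counterpart `g ≥ 1` on
`F` with `‖g‖ ≤ ‖f‖` and no smaller heat contents `⟪g, P_t g⟫`. Then the least Riesz energy over
`E` is at most that over the interior of `F`: damped exponentially and discretized, the mixture
becomes `φ(P) = ∑ φₙ Pⁿ` for one heat operator `P` and a log-convex decreasing sequence `φₙ`. By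
Kaluza's theorem every non-constant coefficient of `1 / φ` is nonpositive, so
`⟪f, φ(P)⁻¹ f⟫` decreases when `f` is replaced by `g`. The potential `f = φ(P) m / ⟪m, φ(P) m⟫` of
the equilibrium density `m` of `E` is at least `1` on `E`, and Cauchy–Schwarz for `φ(P)⁻¹`, applied
to its counterpart `g`, bounds from below the energy of every density on `F`. Convolution does not
increase the Riesz energy and reduces general measures to densities.

Polarization produces heat domination, and so does Steiner symmetrization up to a loss `ε`: to
symmetrize, fold and recentre finitely often. Symmetrizing a hexagon of unit area along a diagonal
acts on its squared half-width `A` and on the area `s` of its central rectangle by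
`A ↦ A / 4 + 1 / (16 A)` and `s ↦ 1 - s / 2`. The iterates converge to `(√3 / 6, 2 / 3)`, the
parameters of the regular hexagon, so every hexagon of unit area heat-dominates all smaller copies
of the regular one. By scaling, the comparison of energies extends to the regular hexagon itself.
-/

/-! ### Kaluza's theorem -/

section Kaluza

open PowerSeries

variable {𝕜 : Type*} [Field 𝕜] {φ : PowerSeries 𝕜}

lemma sum_range_coeff_inv_mul_coeff (h0 : coeff 0 φ ≠ 0) (n : ℕ) :
    ∑ i ∈ Finset.range (n + 1), coeff i φ⁻¹ * coeff (n - i) φ = if n = 0 then 1 else 0 := by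
  rw [← Finset.Nat.sum_antidiagonal_eq_sum_range_succ fun i j => coeff i φ⁻¹ * coeff j φ,
    ← coeff_mul, PowerSeries.inv_mul_cancel φ (by simpa using h0), coeff_one]

variable [LinearOrder 𝕜] [IsStrictOrderedRing 𝕜]

lemma mul_le_mul_of_logConvex {u : ℕ → 𝕜} (hpos : ∀ n, 0 < u n)
    (hlog : ∀ n, u (n + 1) ^ 2 ≤ u n * u (n + 2)) {j n : ℕ} (hjn : j ≤ n) :
    u (j + 1) * u n ≤ u j * u (n + 1) := by
  induction n, hjn using Nat.le_induction with
  | base => rw [mul_comm]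
  | succ n _ ih =>
    refine le_of_mul_le_mul_right ?_ (hpos n)
    calc u (j + 1) * u (n + 1) * u n = u (j + 1) * u n * u (n + 1) := by ring
      _ ≤ u j * u (n + 1) * u (n + 1) := by gcongr; exact (hpos _).le
      _ = u j * u (n + 1) ^ 2 := by ring
      _ ≤ u j * (u n * u (n + 2)) := by gcongr; exacts [(hpos _).le, hlog n]
      _ = u j * u (n + 1 + 1) * u n := by ring

theorem coeff_succ_inv_nonpos (hpos : ∀ n, 0 < coeff n φ)
    (hlog : ∀ n, coeff (n + 1) φ ^ 2 ≤ coeff n φ * coeff (n + 2) φ) (n : ℕ) :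
    coeff (n + 1) φ⁻¹ ≤ 0 := by
  have hconv := sum_range_coeff_inv_mul_coeff (hpos 0).ne'
  induction n using Nat.strong_induction_on with
  | _ n ih =>
    have hlast : coeff (n + 1) φ⁻¹ * coeff 0 φ =
        -∑ i ∈ Finset.range (n + 1), coeff i φ⁻¹ * coeff (n + 1 - i) φ := by
      have := hconv (n + 1)
      rw [Finset.sum_range_succ, Nat.sub_self, if_neg n.succ_ne_zero] at this
      exact eq_neg_of_add_eq_zero_right this
    refine nonpos_of_mul_nonpos_left (b := coeff 0 φ) ?_ (hpos 0)
    rw [hlast, neg_nonpos]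
    refine nonneg_of_mul_nonneg_left (b := coeff n φ) ?_ (hpos n)
    calc 0 ≤ coeff (n + 1) φ * ∑ i ∈ Finset.range (n + 1), coeff i φ⁻¹ * coeff (n - i) φ := by
          rw [hconv n]
          have := hpos (n + 1)
          split_ifs <;> positivity
      _ ≤ (∑ i ∈ Finset.range (n + 1), coeff i φ⁻¹ * coeff (n + 1 - i) φ) * coeff n φ := by
          rw [Finset.mul_sum, Finset.sum_mul]
          refine Finset.sum_le_sum fun i hi => ?_
          rcases i with _ | i
          · exact (by simp only [Nat.sub_zero]; ring : _ = _).le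
          · have hi' : i + 1 ≤ n := Nat.lt_succ_iff.1 (Finset.mem_range.1 hi)
            have hratio := mul_le_mul_of_logConvex hpos hlog (n.sub_le (i + 1))
            rw [← Nat.sub_add_comm hi'] at hratio
            nlinarith [mul_le_mul_of_nonpos_left hratio (ih i hi')]

lemma sum_range_coeff_inv_nonneg (hpos : ∀ n, 0 < coeff n φ)
    (hlog : ∀ n, coeff (n + 1) φ ^ 2 ≤ coeff n φ * coeff (n + 2) φ)
    (hanti : Antitone fun n => coeff n φ) (n : ℕ) :
    0 ≤ ∑ i ∈ Finset.range (n + 1), coeff i φ⁻¹ := by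
  refine nonneg_of_mul_nonneg_left (b := coeff n φ) ?_ (hpos n)
  calc 0 ≤ ∑ i ∈ Finset.range (n + 1), coeff i φ⁻¹ * coeff (n - i) φ := by
        rw [sum_range_coeff_inv_mul_coeff (hpos 0).ne']
        split_ifs <;> norm_num
    _ ≤ (∑ i ∈ Finset.range (n + 1), coeff i φ⁻¹) * coeff n φ := by
        rw [Finset.sum_mul]
        refine Finset.sum_le_sum fun i _ => ?_
        rcases i with _ | i
        · rfl
        · exact mul_le_mul_of_nonpos_left (hanti (n.sub_le _)) (coeff_succ_inv_nonpos hpos hlog i)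

variable {ψ : PowerSeries ℝ}

lemma summable_abs_coeff_of_nonpos (hneg : ∀ n, coeff (n + 1) ψ ≤ 0)
    (hsum : ∀ n, 0 ≤ ∑ i ∈ Finset.range (n + 1), coeff i ψ) :
    Summable fun n => |coeff n ψ| := by
  rw [← summable_nat_add_iff 1]
  refine summable_of_sum_range_le (c := coeff 0 ψ) (fun _ => abs_nonneg _) fun n => ?_
  have := hsum n
  rw [Finset.sum_range_succ'] at this
  simp only [abs_of_nonpos (hneg _), Finset.sum_neg_distrib]
  linarith

lemma tsum_coeff_nonneg (hψ : Summable fun n => |coeff n ψ|)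
    (hsum : ∀ n, 0 ≤ ∑ i ∈ Finset.range (n + 1), coeff i ψ) : 0 ≤ ∑' n, coeff n ψ :=
  ge_of_tendsto' ((tendsto_add_atTop_iff_nat 1).2 hψ.of_abs.hasSum.tendsto_sum_nat) hsum

end Kaluza

/-! ### Power series of a contraction and minimisation of quadratic forms -/

section Hilbert

variable {E : Type*} [NormedAddCommGroup E] [InnerProductSpace ℝ E]

lemma norm_pow_le_one {P : E →L[ℝ] E} (hP : ‖P‖ ≤ 1) (n : ℕ) : ‖P ^ n‖ ≤ 1 := by
  rcases n.eq_zero_or_pos with rfl | hn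
  · exact ContinuousLinearMap.norm_id_le
  · exact (norm_pow_le' P hn).trans (pow_le_one₀ (norm_nonneg P) hP)

lemma inner_pow_le_norm_sq {P : E →L[ℝ] E} (hP : ‖P‖ ≤ 1) (n : ℕ) (x : E) :
    ⟪x, (P ^ n) x⟫ ≤ ‖x‖ ^ 2 :=
  calc ⟪x, (P ^ n) x⟫ ≤ ‖x‖ * ‖(P ^ n) x‖ := real_inner_le_norm _ _
    _ ≤ ‖x‖ * (1 * ‖x‖) := by gcongr; exact (P ^ n).le_of_opNorm_le (norm_pow_le_one hP n) x
    _ = ‖x‖ ^ 2 := by ring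

lemma inner_sq_le_of_isPositive {A : E →L[ℝ] E} (hA : A.IsPositive) (x y : E) :
    ⟪x, A y⟫ ^ 2 ≤ ⟪x, A x⟫ * ⟪y, A y⟫ := by
  let B : LinearMap.BilinForm ℝ E := LinearMap.mk₂ ℝ (fun x y => ⟪x, A y⟫)
    (by simp [inner_add_left]) (by simp [real_inner_smul_left])
    (by simp [inner_add_right]) (by simp [real_inner_smul_right])
  exact LinearMap.BilinForm.apply_sq_le_of_symm B hA.inner_nonneg_right
    ⟨fun x y => (real_inner_comm _ _).trans (hA.isSymmetric y x)⟩ x y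

/-- The operator `φ(P) = ∑ φₙ Pⁿ`. It is the junk value `0` if the series does not converge; it
converges in operator norm if `P` is a contraction and `φ` has absolutely summable coefficients. -/
def operatorSeries (P : E →L[ℝ] E) (φ : PowerSeries ℝ) : E →L[ℝ] E :=
  ∑' n, PowerSeries.coeff n φ • P ^ n

section OperatorSeries

open PowerSeries

variable {P : E →L[ℝ] E} {φ ψ : PowerSeries ℝ}

lemma summable_norm_coeff_smul_pow (hP : ‖P‖ ≤ 1) (hφ : Summable fun n => |coeff n φ|) :
    Summable fun n => ‖coeff n φ • P ^ n‖ := by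
  refine hφ.of_nonneg_of_le (fun _ => norm_nonneg _) fun n => ?_
  rw [norm_smul, Real.norm_eq_abs]
  exact mul_le_of_le_one_right (abs_nonneg _) (norm_pow_le_one hP n)

lemma operatorSeries_one : operatorSeries P 1 = 1 := by
  rw [operatorSeries, tsum_eq_single 0 fun n hn => by simp [coeff_one, hn]]
  simp

variable [CompleteSpace E]

lemma isSelfAdjoint_operatorSeries (hP : IsSelfAdjoint P) : IsSelfAdjoint (operatorSeries P φ) := by
  rw [IsSelfAdjoint, operatorSeries, tsum_star]
  simp only [star_smul, star_trivial, star_pow, hP.star_eq]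

lemma hasSum_inner_operatorSeries (hP : ‖P‖ ≤ 1) (hφ : Summable fun n => |coeff n φ|) (x y : E) :
    HasSum (fun n => coeff n φ * ⟪x, (P ^ n) y⟫) ⟪x, operatorSeries P φ y⟫ := by
  have h := ((innerSL ℝ x).comp (ContinuousLinearMap.apply ℝ E y)).hasSum
    (summable_norm_coeff_smul_pow hP hφ).of_norm.hasSum
  simpa [real_inner_smul_right, operatorSeries] using h

lemma operatorSeries_mul (hP : ‖P‖ ≤ 1) (hφ : Summable fun n => |coeff n φ|)
    (hψ : Summable fun n => |coeff n ψ|) :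
    operatorSeries P (φ * ψ) = operatorSeries P φ * operatorSeries P ψ := by
  simp only [operatorSeries]
  rw [tsum_mul_tsum_eq_tsum_sum_antidiagonal_of_summable_norm (summable_norm_coeff_smul_pow hP hφ)
    (summable_norm_coeff_smul_pow hP hψ)]
  refine tsum_congr fun n => ?_
  rw [coeff_mul, Finset.sum_smul]
  refine Finset.sum_congr rfl fun ij hij => ?_
  rw [smul_mul_smul_comm, ← pow_add, Finset.HasAntidiagonal.mem_antidiagonal.1 hij]

lemma norm_sq_le_inner_operatorSeries (hP : ‖P‖ ≤ 1) (hpow : ∀ n x, 0 ≤ ⟪x, (P ^ n) x⟫)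
    (hφ : Summable fun n => |coeff n φ|) (hnonneg : ∀ n, 0 ≤ coeff n φ) (h0 : 1 ≤ coeff 0 φ)
    (x : E) : ‖x‖ ^ 2 ≤ ⟪x, operatorSeries P φ x⟫ := by
  refine le_trans ?_ (le_hasSum (hasSum_inner_operatorSeries hP hφ x x) 0
    fun n _ => mul_nonneg (hnonneg n) (hpow n x))
  simpa using le_mul_of_one_le_left (sq_nonneg ‖x‖) h0

lemma isPositive_operatorSeries (hneg : ∀ n, coeff (n + 1) ψ ≤ 0)
    (hsum : ∀ n, 0 ≤ ∑ i ∈ Finset.range (n + 1), coeff i ψ) (hP : ‖P‖ ≤ 1)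
    (hPs : IsSelfAdjoint P) : (operatorSeries P ψ).IsPositive := by
  have hψ := summable_abs_coeff_of_nonpos hneg hsum
  refine ((operatorSeries P ψ).isPositive_iff').2 ⟨isSelfAdjoint_operatorSeries hPs, fun x => ?_⟩
  rw [real_inner_comm]
  refine (mul_nonneg (tsum_coeff_nonneg hψ hsum) (sq_nonneg ‖x‖)).trans
    (hasSum_le (fun n => ?_) (hψ.of_abs.hasSum.mul_right (‖x‖ ^ 2))
      (hasSum_inner_operatorSeries hP hψ x x))
  rcases n with _ | n
  · simp
  · exact mul_le_mul_of_nonpos_left (inner_pow_le_norm_sq hP _ x) (hneg n)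

lemma inner_operatorSeries_le (hneg : ∀ n, coeff (n + 1) ψ ≤ 0)
    (hsum : ∀ n, 0 ≤ ∑ i ∈ Finset.range (n + 1), coeff i ψ) (hP : ‖P‖ ≤ 1)
    {f g : E} (hnorm : ‖g‖ ≤ ‖f‖)
    (hpow : ∀ n, ⟪f, (P ^ (n + 1)) f⟫ ≤ ⟪g, (P ^ (n + 1)) g⟫) :
    ⟪g, operatorSeries P ψ g⟫ ≤ ⟪f, operatorSeries P ψ f⟫ := by
  have hψ := summable_abs_coeff_of_nonpos hneg hsum
  refine hasSum_le (fun n => ?_) (hasSum_inner_operatorSeries hP hψ g g)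
    (hasSum_inner_operatorSeries hP hψ f f)
  rcases n with _ | n
  · have h0 : 0 ≤ coeff 0 ψ := by simpa using hsum 0
    simp only [pow_zero, one_apply_eq_self, real_inner_self_eq_norm_sq]
    gcongr
  · exact mul_le_mul_of_nonpos_left (hpow n) (hneg n)

end OperatorSeries

lemma inner_sub_self_eq_parallelogram (G : E →L[ℝ] E) (y z : E) :
    ⟪y - z, G (y - z)⟫ = 2 * ⟪y, G y⟫ + 2 * ⟪z, G z⟫ -
      4 * ⟪(1 / 2 : ℝ) • y + (1 / 2 : ℝ) • z, G ((1 / 2 : ℝ) • y + (1 / 2 : ℝ) • z)⟫ := by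
  simp only [map_add, map_sub, map_smul, inner_add_left, inner_add_right, inner_sub_left,
    inner_sub_right, real_inner_smul_left, real_inner_smul_right]
  ring

variable [CompleteSpace E]

theorem exists_isMinOn_inner_of_coercive {G : E →L[ℝ] E} (hcoer : ∀ x, ‖x‖ ^ 2 ≤ ⟪x, G x⟫)
    {K : Set E} (hne : K.Nonempty) (hcl : IsClosed K) (hK : Convex ℝ K) :
    ∃ v ∈ K, IsMinOn (fun x => ⟪x, G x⟫) K v := by
  set q : E → ℝ := fun x => ⟪x, G x⟫
  have hbdd : BddBelow (q '' K) := ⟨0, by rintro _ ⟨x, _, rfl⟩; exact (sq_nonneg _).trans (hcoer x)⟩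
  have hinf : ∀ x ∈ K, sInf (q '' K) ≤ q x := fun x hx => csInf_le hbdd ⟨x, hx, rfl⟩
  obtain ⟨w, hanti, hlim, hw⟩ := exists_seq_tendsto_sInf (hne.image q) hbdd
  choose x hxK hxw using hw
  have hcauchy : CauchySeq x := by
    refine cauchySeq_of_le_tendsto_0 (fun N => √(4 * (w N - sInf (q '' K))))
      (fun n m N hn hm => ?_) ?_
    · rw [dist_eq_norm]
      refine Real.le_sqrt_of_sq_le ((hcoer _).trans ?_)
      have hmid := hinf _ (hK (hxK n) (hxK m) one_half_pos.le one_half_pos.le (add_halves 1))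
      rw [inner_sub_self_eq_parallelogram]
      linarith [hanti hn, hanti hm, hxw n, hxw m]
    · simpa using ((hlim.sub_const (sInf (q '' K))).const_mul 4).sqrt
  obtain ⟨v, hv⟩ := cauchySeq_tendsto_of_complete hcauchy
  have hqv : q v = sInf (q '' K) :=
    tendsto_nhds_unique (((by fun_prop : Continuous q).tendsto v).comp hv)
      (by simpa [Function.comp_def, hxw] using hlim)
  exact ⟨v, hcl.mem_of_tendsto hv (Eventually.of_forall hxK), fun k hk => hqv.trans_le (hinf k hk)⟩

lemma inner_self_le_inner_of_isMinOn {G : E →L[ℝ] E} (hG : IsSelfAdjoint G) {K : Set E}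
    (hK : Convex ℝ K) {v : E} (hv : v ∈ K) (hmin : IsMinOn (fun x => ⟪x, G x⟫) K v) {k : E}
    (hk : k ∈ K) : ⟪v, G v⟫ ≤ ⟪G v, k⟫ := by
  have hline : ∀ t ∈ Ioo (0 : ℝ) 1, 0 ≤ 2 * (⟪G v, k⟫ - ⟪v, G v⟫) + t * ⟪k - v, G (k - v)⟫ := by
    intro t ht
    have hmem : v + t • (k - v) ∈ K := by
      rw [show v + t • (k - v) = (1 - t) • v + t • k by module]
      exact hK hv hk (by linarith [ht.2]) ht.1.le (by ring)
    have hle : ⟪v, G v⟫ ≤ ⟪v + t • (k - v), G (v + t • (k - v))⟫ := hmin hmem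
    have hsymm : ⟪k, G v⟫ = ⟪G v, k⟫ := real_inner_comm _ _
    have hsymm' : ⟪v, G k⟫ = ⟪G v, k⟫ := (hG.isSymmetric v k).symm
    refine nonneg_of_mul_nonneg_right (a := t) ?_ ht.1
    simp only [map_add, map_sub, map_smul, inner_add_left, inner_add_right, inner_sub_left,
      inner_sub_right, real_inner_smul_left, real_inner_smul_right] at hle ⊢
    rw [hsymm, hsymm'] at hle ⊢
    linarith
  have hlim : Tendsto (fun t : ℝ => 2 * (⟪G v, k⟫ - ⟪v, G v⟫) + t * ⟪k - v, G (k - v)⟫) (𝓝[>] 0)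
      (𝓝 (2 * (⟪G v, k⟫ - ⟪v, G v⟫) + 0 * ⟪k - v, G (k - v)⟫)) :=
    (Continuous.tendsto (by fun_prop) 0).mono_left nhdsWithin_le_nhds
  have := ge_of_tendsto hlim (eventually_of_mem (Ioo_mem_nhdsGT one_pos) hline)
  linarith

/-- A power series `φ` with `φ₀ = 1` and positive, decreasing, log-convex, summable coefficients.
By Kaluza's theorem `1 / φ` has nonpositive coefficients apart from the constant one. -/
structure IsKaluzaSeries (φ : PowerSeries ℝ) : Prop where
  coeff_zero : PowerSeries.coeff 0 φ = 1
  coeff_pos : ∀ n, 0 < PowerSeries.coeff n φ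
  antitone : Antitone fun n => PowerSeries.coeff n φ
  logConvex : ∀ n, PowerSeries.coeff (n + 1) φ ^ 2 ≤
    PowerSeries.coeff n φ * PowerSeries.coeff (n + 2) φ
  summable : Summable fun n => PowerSeries.coeff n φ

namespace IsKaluzaSeries

open PowerSeries

variable {φ : PowerSeries ℝ}

lemma summable_abs (hφ : IsKaluzaSeries φ) : Summable fun n => |coeff n φ| := hφ.summable.abs

lemma coeff_succ_inv_nonpos (hφ : IsKaluzaSeries φ) (n : ℕ) : coeff (n + 1) φ⁻¹ ≤ 0 :=
  _root_.coeff_succ_inv_nonpos hφ.coeff_pos hφ.logConvex n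

lemma sum_range_coeff_inv_nonneg (hφ : IsKaluzaSeries φ) (n : ℕ) :
    0 ≤ ∑ i ∈ Finset.range (n + 1), coeff i φ⁻¹ :=
  _root_.sum_range_coeff_inv_nonneg hφ.coeff_pos hφ.logConvex hφ.antitone n

lemma operatorSeries_inv_apply (hφ : IsKaluzaSeries φ) {P : E →L[ℝ] E} (hP : ‖P‖ ≤ 1) (x : E) :
    operatorSeries P φ⁻¹ (operatorSeries P φ x) = x := by
  have hinv := summable_abs_coeff_of_nonpos hφ.coeff_succ_inv_nonpos hφ.sum_range_coeff_inv_nonneg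
  have hconst : constantCoeff φ ≠ 0 := by
    rw [← coeff_zero_eq_constantCoeff_apply]; exact (hφ.coeff_pos 0).ne'
  rw [← mul_apply_eq_comp, ← operatorSeries_mul hP hinv hφ.summable_abs,
    PowerSeries.inv_mul_cancel φ hconst, operatorSeries_one, one_apply_eq_self]

theorem inner_sq_le (hφ : IsKaluzaSeries φ) {P : E →L[ℝ] E} (hP : ‖P‖ ≤ 1)
    (hPs : IsSelfAdjoint P) {f g : E} (hnorm : ‖g‖ ≤ ‖f‖)
    (hpow : ∀ n, ⟪f, (P ^ (n + 1)) f⟫ ≤ ⟪g, (P ^ (n + 1)) g⟫)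
    (m : E) : ⟪g, m⟫ ^ 2 ≤ ⟪f, operatorSeries P φ⁻¹ f⟫ * ⟪m, operatorSeries P φ m⟫ := by
  have hpos := isPositive_operatorSeries hφ.coeff_succ_inv_nonpos hφ.sum_range_coeff_inv_nonneg
    hP hPs
  have hcs := inner_sq_le_of_isPositive hpos g (operatorSeries P φ m)
  have hGm := hpos.inner_nonneg_right (operatorSeries P φ m)
  rw [hφ.operatorSeries_inv_apply hP, real_inner_comm] at hcs hGm
  rw [real_inner_comm m, real_inner_comm g] at hcs
  refine hcs.trans (mul_le_mul_of_nonneg_right ?_ hGm)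
  exact inner_operatorSeries_le hφ.coeff_succ_inv_nonpos hφ.sum_range_coeff_inv_nonneg hP hnorm hpow

end IsKaluzaSeries

end Hilbert

/-! ### The heat semigroup on `L²` -/

section Heat

open Module (finrank)

variable {V : Type*} [NormedAddCommGroup V] [InnerProductSpace ℝ V]

/-- The heat kernel `(π t)^(-d/2) exp (-|x|² / t)`, `d = dim V`, with time scaled by a factor `4`
compared with the semigroup generated by the Laplacian. -/
def heatKernel (t : ℝ) (x : V) : ℝ := (π * t) ^ (-(finrank ℝ V : ℝ) / 2) * rexp (-(‖x‖ ^ 2 / t))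

lemma heatKernel_pos {t : ℝ} (ht : 0 < t) (x : V) : 0 < heatKernel t x := by
  unfold heatKernel; positivity

lemma heatKernel_nonneg {t : ℝ} (ht : 0 < t) (x : V) : 0 ≤ heatKernel t x :=
  (heatKernel_pos ht x).le

lemma heatKernel_neg (t : ℝ) (x : V) : heatKernel t (-x) = heatKernel t x := by
  simp [heatKernel]

lemma heatKernel_sub_comm (t : ℝ) (x y : V) : heatKernel t (x - y) = heatKernel t (y - x) := by
  rw [← heatKernel_neg, neg_sub]

lemma heatKernel_sub_congr {t : ℝ} {x y z w : V} (h : dist x y = dist z w) :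
    heatKernel t (x - y) = heatKernel t (z - w) := by
  rw [dist_eq_norm, dist_eq_norm] at h
  rw [heatKernel, heatKernel, h]

lemma heatKernel_le_of_norm_le {t : ℝ} (ht : 0 < t) {x y : V} (h : ‖y‖ ≤ ‖x‖) :
    heatKernel t x ≤ heatKernel t y := by
  unfold heatKernel
  gcongr

@[fun_prop]
lemma continuous_heatKernel (t : ℝ) : Continuous (heatKernel t : V → ℝ) := by
  unfold heatKernel; fun_prop

lemma heatKernel_mul_heatKernel {t s : ℝ} (ht : 0 < t) (hs : 0 < s) (u z : V) :
    heatKernel t z * heatKernel s (u - z) =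
      heatKernel (t + s) u * heatKernel (t * s / (t + s)) (z - (t / (t + s)) • u) := by
  have hexp : -(‖z‖ ^ 2 / t) + -(‖u - z‖ ^ 2 / s) = -(‖u‖ ^ 2 / (t + s)) +
      -(‖z - (t / (t + s)) • u‖ ^ 2 / (t * s / (t + s))) := by
    rw [norm_sub_sq_real u z, norm_sub_sq_real z, real_inner_smul_right, real_inner_comm, norm_smul,
      mul_pow, Real.norm_eq_abs, sq_abs]
    field_simp
    ring
  unfold heatKernel
  rw [mul_mul_mul_comm, mul_mul_mul_comm ((π * (t + s)) ^ _), ← Real.exp_add, ← Real.exp_add, hexp,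
    ← Real.mul_rpow (by positivity) (by positivity),
    ← Real.mul_rpow (by positivity) (by positivity)]
  congr 2
  field_simp

variable [MeasurableSpace V] [BorelSpace V]

lemma measurable_heatKernel_uncurry : Measurable fun p : ℝ × V => heatKernel p.1 p.2 := by
  unfold heatKernel; fun_prop

variable [FiniteDimensional ℝ V]

lemma integral_heatKernel {t : ℝ} (ht : 0 < t) : ∫ x : V, heatKernel t x = 1 := by
  have hgauss := GaussianFourier.integral_rexp_neg_mul_sq_norm (V := V) (one_div_pos.2 ht)
  simp only [heatKernel, integral_const_mul, ← one_div_mul_eq_div t (‖_‖ ^ 2), ← neg_mul, hgauss,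
    div_div_eq_mul_div, div_one]
  rw [← Real.rpow_add (by positivity), neg_div, neg_add_cancel, Real.rpow_zero]

lemma integrable_heatKernel {t : ℝ} (ht : 0 < t) : Integrable (heatKernel t : V → ℝ) :=
  Integrable.of_integral_ne_zero (by rw [integral_heatKernel ht]; exact one_ne_zero)

lemma integral_heatKernel_mul {t s : ℝ} (ht : 0 < t) (hs : 0 < s) (u : V) :
    ∫ z, heatKernel t z * heatKernel s (u - z) = heatKernel (t + s) u := by
  simp_rw [heatKernel_mul_heatKernel ht hs u]
  rw [integral_const_mul, integral_sub_right_eq_self (heatKernel _),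
    integral_heatKernel (by positivity), mul_one]

variable (V) in
/-- The real Hilbert space `L²(V)`. -/
abbrev LTwo : Type _ := Lp ℝ 2 (volume : Measure V)

/-- Translation `f ↦ f (z + ·)` as an isometry of `L²(V)`. -/
def translateL2 (z : V) : LTwo V →ₗᵢ[ℝ] LTwo V :=
  Lp.compMeasurePreservingₗᵢ ℝ (fun x => z + x) (measurePreserving_add_left volume z)

lemma translateL2_ae (z : V) (f : LTwo V) : translateL2 z f =ᵐ[volume] fun x => f (z + x) :=
  Lp.coeFn_compMeasurePreserving f (measurePreserving_add_left volume z)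

lemma continuous_translateL2 (f : LTwo V) : Continuous fun z => translateL2 z f := by
  have hg : Continuous fun z : V => (⟨fun x => z + x, by fun_prop⟩ : C(V, V)) :=
    ContinuousMap.continuous_of_continuous_uncurry _ continuous_add
  exact Continuous.compMeasurePreservingLp (continuous_const (y := f)) hg
    (fun z => measurePreserving_add_left volume z) (by simp)

lemma translateL2_translateL2 (z w : V) (f : LTwo V) :
    translateL2 z (translateL2 w f) = translateL2 (w + z) f := by
  refine Lp.ext ?_
  filter_upwards [translateL2_ae z (translateL2 w f), translateL2_ae (w + z) f,
    (measurePreserving_add_left volume z).quasiMeasurePreserving.ae (translateL2_ae w f)]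
    with x h1 h2 h3
  rw [h1, h2, h3, add_assoc]

lemma translateL2_zero (f : LTwo V) : translateL2 0 f = f := by
  refine Lp.ext ?_
  filter_upwards [translateL2_ae 0 f] with x h1
  rw [h1, zero_add]

lemma integrable_heatKernel_smul_translateL2 {t : ℝ} (ht : 0 < t) (f : LTwo V) :
    Integrable fun z => heatKernel t z • translateL2 z f := by
  refine ((integrable_heatKernel ht).mul_const ‖f‖).mono'
    ((continuous_heatKernel t).smul (continuous_translateL2 f)).aestronglyMeasurable ?_
  filter_upwards with z
  rw [norm_smul, LinearIsometry.norm_map, Real.norm_of_nonneg (heatKernel_nonneg ht z)]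

/-- The heat semigroup on `L²(V)`; it is the identity for `t ≤ 0`. -/
def heatOp (t : ℝ) : LTwo V →L[ℝ] LTwo V :=
  if ht : 0 < t then
    LinearMap.mkContinuous
      { toFun := fun f => ∫ z, heatKernel t z • translateL2 z f
        map_add' := fun f g => by
          simp only [map_add, smul_add]
          exact integral_add (integrable_heatKernel_smul_translateL2 ht f)
            (integrable_heatKernel_smul_translateL2 ht g)
        map_smul' := fun c f => by
          simp only [map_smul, RingHom.id_apply, smul_comm _ c, integral_smul] }
      1 fun f => by
        refine (norm_integral_le_integral_norm _).trans_eq ?_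
        simp_rw [norm_smul, LinearIsometry.norm_map, Real.norm_of_nonneg (heatKernel_nonneg ht _)]
        rw [integral_mul_const, integral_heatKernel ht]
  else 1

lemma heatOp_apply {t : ℝ} (ht : 0 < t) (f : LTwo V) :
    heatOp t f = ∫ z, heatKernel t z • translateL2 z f := by
  rw [heatOp, dif_pos ht]; rfl

lemma heatOp_zero : (heatOp 0 : LTwo V →L[ℝ] LTwo V) = 1 := dif_neg (lt_irrefl 0)

lemma norm_heatOp_le (t : ℝ) : ‖(heatOp t : LTwo V →L[ℝ] LTwo V)‖ ≤ 1 := by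
  rw [heatOp]
  split_ifs
  · exact LinearMap.mkContinuous_norm_le _ zero_le_one _
  · exact ContinuousLinearMap.norm_id_le

lemma integrable_heatKernel_mul_smul_translateL2 {t s : ℝ} (ht : 0 < t) (hs : 0 < s) (f : LTwo V) :
    Integrable (fun p : V × V => (heatKernel t p.1 * heatKernel s (p.2 - p.1)) • translateL2 p.2 f)
      (volume.prod volume) := by
  have hconv := ((integrable_heatKernel ht).convolution_integrand (ContinuousLinearMap.mul ℝ ℝ)
    (integrable_heatKernel (V := V) hs)).swap.mul_const ‖f‖
  have hcont : Continuous fun p : V × V => heatKernel t p.1 * heatKernel s (p.2 - p.1) := by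
    fun_prop
  refine hconv.mono'
    (hcont.smul ((continuous_translateL2 f).comp continuous_snd)).aestronglyMeasurable ?_
  filter_upwards with p
  rw [norm_smul, LinearIsometry.norm_map, Real.norm_of_nonneg
    (mul_nonneg (heatKernel_nonneg ht _) (heatKernel_nonneg hs _))]
  rfl

lemma translateL2_heatOp {s : ℝ} (hs : 0 < s) (z : V) (f : LTwo V) :
    translateL2 z (heatOp s f) = ∫ u, heatKernel s (u - z) • translateL2 u f := by
  rw [heatOp_apply hs, ← LinearIsometry.coe_toContinuousLinearMap,
    ← ContinuousLinearMap.integral_comp_comm _ (integrable_heatKernel_smul_translateL2 hs f),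
    ← integral_sub_right_eq_self _ z]
  simp [translateL2_translateL2]

lemma heatOp_heatOp {t s : ℝ} (ht : 0 < t) (hs : 0 < s) (f : LTwo V) :
    heatOp t (heatOp s f) = heatOp (t + s) f :=
  calc heatOp t (heatOp s f)
      = ∫ z, ∫ u, (heatKernel t z * heatKernel s (u - z)) • translateL2 u f := by
        simp_rw [heatOp_apply ht, translateL2_heatOp hs, ← integral_smul, smul_smul]
    _ = ∫ u, ∫ z, (heatKernel t z * heatKernel s (u - z)) • translateL2 u f :=
        integral_integral_swap (integrable_heatKernel_mul_smul_translateL2 ht hs f)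
    _ = heatOp (t + s) f := by
        simp_rw [integral_smul_const, integral_heatKernel_mul ht hs, heatOp_apply (add_pos ht hs)]

lemma heatOp_pow {t : ℝ} (ht : 0 < t) (n : ℕ) :
    (heatOp t : LTwo V →L[ℝ] LTwo V) ^ n = heatOp (n * t) := by
  induction n with
  | zero => simp [heatOp_zero]
  | succ n ih =>
    ext1 f
    rcases n.eq_zero_or_pos with rfl | hn
    · simp
    · rw [pow_succ', ih, mul_apply_eq_comp, heatOp_heatOp ht (by positivity), Nat.cast_succ,
        add_one_mul, add_comm]

lemma inner_translateL2 (z : V) (f g : LTwo V) :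
    ⟪f, translateL2 z g⟫ = ⟪translateL2 (-z) f, g⟫ := by
  rw [← (translateL2 z).inner_map_map (translateL2 (-z) f) g, translateL2_translateL2,
    neg_add_cancel, translateL2_zero]

lemma inner_heatOp_eq_integral_translateL2 {t : ℝ} (ht : 0 < t) (f g : LTwo V) :
    ⟪f, heatOp t g⟫ = ∫ z, heatKernel t z * ⟪f, translateL2 z g⟫ := by
  rw [heatOp_apply ht, ← integral_inner (integrable_heatKernel_smul_translateL2 ht g)]
  simp_rw [real_inner_smul_right]

lemma isSelfAdjoint_heatOp {t : ℝ} (ht : 0 < t) :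
    IsSelfAdjoint (heatOp t : LTwo V →L[ℝ] LTwo V) := by
  refine ContinuousLinearMap.isSelfAdjoint_iff_isSymmetric.2 fun f g => ?_
  change ⟪heatOp t f, g⟫ = ⟪f, heatOp t g⟫
  rw [real_inner_comm, inner_heatOp_eq_integral_translateL2 ht,
    inner_heatOp_eq_integral_translateL2 ht, ← integral_neg_eq_self]
  congr 1
  ext1 z
  rw [heatKernel_neg, inner_translateL2, neg_neg, real_inner_comm]

lemma inner_heatOp_self {t : ℝ} (ht : 0 < t) (f : LTwo V) :
    ⟪f, heatOp t f⟫ = ‖heatOp (t / 2) f‖ ^ 2 := by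
  have hsymm : ⟪heatOp (t / 2) f, heatOp (t / 2) f⟫ = ⟪f, heatOp (t / 2) (heatOp (t / 2) f)⟫ :=
    (isSelfAdjoint_heatOp (half_pos ht)).isSymmetric f _
  rw [← real_inner_self_eq_norm_sq, hsymm, heatOp_heatOp (half_pos ht) (half_pos ht), add_halves]

lemma inner_heatOp_self_nonneg {t : ℝ} (ht : 0 ≤ t) (f : LTwo V) : 0 ≤ ⟪f, heatOp t f⟫ := by
  rcases ht.eq_or_lt with rfl | ht
  · simp [heatOp_zero]
  · rw [inner_heatOp_self ht]; positivity

lemma inner_heatOp_self_le_norm_sq {t : ℝ} (f : LTwo V) : ⟪f, heatOp t f⟫ ≤ ‖f‖ ^ 2 := by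
  simpa using inner_pow_le_norm_sq (norm_heatOp_le t) 1 f

lemma inner_heatOp_self_anti {s t : ℝ} (hs : 0 < s) (hst : s ≤ t) (f : LTwo V) :
    ⟪f, heatOp t f⟫ ≤ ⟪f, heatOp s f⟫ := by
  rcases hst.eq_or_lt with rfl | hlt
  · rfl
  · have hhalf : t / 2 = (t - s) / 2 + s / 2 := by ring
    rw [inner_heatOp_self hs, inner_heatOp_self (hs.trans hlt), hhalf,
      ← heatOp_heatOp (half_pos (sub_pos.2 hlt)) (half_pos hs)]
    gcongr
    simpa using (heatOp ((t - s) / 2)).le_of_opNorm_le (norm_heatOp_le _) (heatOp (s / 2) f)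

lemma integrable_heatKernel_sub_mul {t : ℝ} (ht : 0 < t) {f g : V → ℝ}
    (hf : MemLp f 2 volume) (hg : MemLp g 2 volume) :
    Integrable (fun p : V × V => heatKernel t (p.1 - p.2) * (f p.1 * g p.2))
      (volume.prod volume) := by
  have hgsq := hg.integrable_sq.convolution_integrand (ContinuousLinearMap.mul ℝ ℝ)
    (integrable_heatKernel ht)
  have hfsq := (hf.integrable_sq.convolution_integrand (ContinuousLinearMap.mul ℝ ℝ)
    (integrable_heatKernel ht)).swap
  have hcont : Continuous fun p : V × V => heatKernel t (p.1 - p.2) := by fun_prop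
  refine (hgsq.add hfsq).mono' ?_ ?_
  · exact hcont.aestronglyMeasurable.mul (hf.1.comp_fst.mul hg.1.comp_snd)
  · filter_upwards with p
    simp only [Pi.add_apply, Function.comp_apply, Prod.swap, ContinuousLinearMap.mul_apply']
    rw [heatKernel_sub_comm t p.2 p.1, norm_mul, Real.norm_of_nonneg (heatKernel_nonneg ht _),
      Real.norm_eq_abs, ← add_mul, mul_comm]
    refine mul_le_mul_of_nonneg_right ?_ (heatKernel_nonneg ht _)
    exact abs_le.2
      (by constructor <;> nlinarith [sq_nonneg (f p.1 - g p.2), sq_nonneg (f p.1 + g p.2)])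

lemma inner_heatOp {t : ℝ} (ht : 0 < t) (f g : LTwo V) :
    ⟪f, heatOp t g⟫ = ∫ p : V × V, heatKernel t (p.1 - p.2) * (f p.1 * g p.2)
      ∂(volume.prod volume) := by
  have hinteg := integrable_heatKernel_sub_mul ht (Lp.memLp f) (Lp.memLp g)
  have hshear := (measurePreserving_prod_add_swap (volume : Measure V) volume)
    |>.integrable_comp_of_integrable hinteg
  rw [inner_heatOp_eq_integral_translateL2 ht, integral_prod _ hinteg]
  calc ∫ z, heatKernel t z * ⟪f, translateL2 z g⟫
      = ∫ z, ∫ x, heatKernel t (x - (x + z)) * (f x * g (x + z)) := by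
        congr 1; ext1 z
        rw [L2.inner_def, ← integral_const_mul]
        refine integral_congr_ae ?_
        filter_upwards [translateL2_ae z g] with x hx
        rw [hx, add_comm z x, sub_add_cancel_left, heatKernel_neg]
        simp [mul_comm]
    _ = ∫ x, ∫ z, heatKernel t (x - (x + z)) * (f x * g (x + z)) :=
        integral_integral_swap hshear
    _ = _ := by
        congr 1; ext1 x
        exact integral_add_left_eq_self (fun y => heatKernel t (x - y) * (f x * g y)) x

end Heat

/-! ### Duality between capacitary potentials and equilibrium densities -/

section Duality

section ProbDensities

variable {X : Type*} [MeasurableSpace X] {μ : Measure X}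

lemma real_inner_eq_integral_mul (f g : Lp ℝ 2 μ) : ⟪f, g⟫ = ∫ x, f x * g x ∂μ := by
  simp [L2.inner_def, mul_comm]

lemma integrable_coeFn_mul_coeFn (f g : Lp ℝ 2 μ) : Integrable (fun x => f x * g x) μ :=
  (Lp.memLp f).integrable_mul (Lp.memLp g)

lemma isClosed_setOf_ae_mem {C : X → Set ℝ} (hC : ∀ x, IsClosed (C x)) :
    IsClosed {f : Lp ℝ 2 μ | ∀ᵐ x ∂μ, f x ∈ C x} := by
  refine isClosed_of_closure_subset fun f hf => ?_
  obtain ⟨F, hFC, hFf⟩ := mem_closure_iff_seq_limit.1 hf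
  obtain ⟨k, -, hk⟩ := (tendstoInMeasure_of_tendsto_Lp hFf).exists_seq_tendsto_ae
  filter_upwards [hk, ae_all_iff.2 hFC] with x hx hxC
  exact (hC x).mem_of_tendsto hx (Eventually.of_forall fun n => hxC (k n))

/-- The square integrable probability densities that vanish outside `H`. -/
def probDensities (μ : Measure X) (H : Set X) : Set (Lp ℝ 2 μ) :=
  {m | (∀ᵐ x ∂μ, 0 ≤ m x ∧ (x ∉ H → m x = 0)) ∧ ∫ x, m x ∂μ = 1}

variable {H : Set X}

lemma integrable_of_mem_probDensities {m : Lp ℝ 2 μ} (hm : m ∈ probDensities μ H) :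
    Integrable m μ :=
  Integrable.of_integral_ne_zero (by rw [hm.2]; exact one_ne_zero)

lemma ae_nonneg_of_mem_probDensities {m : Lp ℝ 2 μ} (hm : m ∈ probDensities μ H) :
    ∀ᵐ x ∂μ, 0 ≤ m x :=
  hm.1.mono fun _ hx => hx.1

lemma ae_eq_zero_of_mem_probDensities {m : Lp ℝ 2 μ} (hm : m ∈ probDensities μ H) :
    ∀ᵐ x ∂μ, x ∉ H → m x = 0 :=
  hm.1.mono fun _ hx => hx.2

lemma one_le_inner_of_mem_probDensities {g m : Lp ℝ 2 μ} (hg : ∀ᵐ x ∂μ, x ∈ H → 1 ≤ g x)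
    (hm : m ∈ probDensities μ H) : 1 ≤ ⟪g, m⟫ := by
  rw [real_inner_eq_integral_mul, ← hm.2]
  refine integral_mono_ae (integrable_of_mem_probDensities hm) (integrable_coeFn_mul_coeFn g m) ?_
  filter_upwards [hg, hm.1] with x hgx hmx
  by_cases hx : x ∈ H
  · exact le_mul_of_one_le_left hmx.1 (hgx hx)
  · simp [hmx.2 hx]

lemma ne_zero_of_mem_probDensities {m : Lp ℝ 2 μ} (hm : m ∈ probDensities μ H) : m ≠ 0 := by
  rintro rfl
  refine zero_ne_one (α := ℝ) ?_
  rw [← hm.2, integral_congr_ae (Lp.coeFn_zero ℝ 2 μ)]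
  simp

lemma convex_probDensities : Convex ℝ (probDensities μ H) := by
  intro f hf g hg a b ha hb hab
  have hadd := (Lp.coeFn_add (a • f) (b • g)).trans
    ((Lp.coeFn_smul a f).add (Lp.coeFn_smul b g))
  refine ⟨?_, ?_⟩
  · filter_upwards [hadd, hf.1, hg.1] with x hx hfx hgx
    simp only [hx, Pi.add_apply, Pi.smul_apply, smul_eq_mul]
    exact ⟨add_nonneg (mul_nonneg ha hfx.1) (mul_nonneg hb hgx.1),
      fun hxH => by rw [hfx.2 hxH, hgx.2 hxH, mul_zero, mul_zero, add_zero]⟩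
  · rw [integral_congr_ae hadd, integral_add' ((integrable_of_mem_probDensities hf).smul a)
      ((integrable_of_mem_probDensities hg).smul b)]
    simp only [Pi.smul_apply, smul_eq_mul, integral_const_mul, hf.2, hg.2, mul_one, hab]

lemma isClosed_probDensities (hH : MeasurableSet H) (hHt : μ H ≠ ∞) :
    IsClosed (probDensities μ H) := by
  have heq : probDensities μ H = {m | ∀ᵐ x ∂μ, m x ∈ {y : ℝ | 0 ≤ y ∧ (x ∉ H → y = 0)}} ∩
      {m | ⟪indicatorConstLp 2 hH hHt (1 : ℝ), m⟫ = 1} := by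
    ext m
    refine and_congr_right fun hm => ?_
    rw [mem_ofPred_eq, L2.inner_indicatorConstLp_one,
      setIntegral_eq_integral_of_ae_compl_eq_zero (hm.mono fun x hx => hx.2)]
  rw [heq]
  refine (isClosed_setOf_ae_mem fun x => ?_).inter (isClosed_eq (by fun_prop) (by fun_prop))
  exact isClosed_Ici.inter (isClosed_imp isOpen_const isClosed_singleton)

lemma inv_smul_indicatorConstLp_mem_probDensities {S : Set X} (hS : MeasurableSet S)
    (hSt : μ S ≠ ∞) (hSH : S ⊆ H) (hS0 : μ S ≠ 0) :
    (μ.real S)⁻¹ • indicatorConstLp 2 hS hSt (1 : ℝ) ∈ probDensities μ H := by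
  have hae := (Lp.coeFn_smul (μ.real S)⁻¹ (indicatorConstLp 2 hS hSt (1 : ℝ))).trans
    (indicatorConstLp_coeFn.const_smul _)
  refine ⟨?_, ?_⟩
  · filter_upwards [hae] with x hx
    rw [hx, Pi.smul_apply]
    exact ⟨smul_nonneg (by positivity) (indicator_nonneg (fun _ _ => zero_le_one) x),
      fun hxH => by rw [indicator_of_notMem fun hxS => hxH (hSH hxS), smul_zero]⟩
  · rw [integral_congr_ae hae]
    simp only [Pi.smul_apply, smul_eq_mul, integral_const_mul, integral_indicator_const _ hS,
      mul_one]
    exact inv_mul_cancel₀ ((measureReal_ne_zero_iff hSt).2 hS0)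

lemma ae_le_of_forall_le_inner (hH : MeasurableSet H) (hHt : μ H ≠ ∞) {f : Lp ℝ 2 μ} {c : ℝ}
    (hc : ∀ m ∈ probDensities μ H, c ≤ ⟪f, m⟫) : ∀ᵐ x ∂μ, x ∈ H → c ≤ f x := by
  rw [← ae_restrict_iff' hH]
  refine ae_le_of_forall_setIntegral_le (integrableOn_const hHt)
    (integrableOn_Lp_of_measure_ne_top f Fact.out hHt) fun s hs _ => ?_
  rw [Measure.restrict_restrict hs]
  rcases eq_or_ne (μ (s ∩ H)) 0 with h0 | h0
  · simp [Measure.restrict_eq_zero.2 h0]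
  · have hst : μ (s ∩ H) ≠ ∞ := measure_ne_top_of_subset inter_subset_right hHt
    have hmean := hc _ (inv_smul_indicatorConstLp_mem_probDensities (hs.inter hH) hst
      inter_subset_right h0)
    have hpos : 0 < μ.real (s ∩ H) := ENNReal.toReal_pos h0 hst
    rw [real_inner_smul_right, real_inner_comm, L2.inner_indicatorConstLp_one, inv_mul_eq_div,
      le_div_iff₀ hpos] at hmean
    rwa [setIntegral_const, smul_eq_mul, mul_comm]

theorem exists_equilibrium (hH : MeasurableSet H) (hHt : μ H ≠ ∞) (hH0 : μ H ≠ 0)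
    {G : Lp ℝ 2 μ →L[ℝ] Lp ℝ 2 μ} (hG : IsSelfAdjoint G) (hcoer : ∀ x, ‖x‖ ^ 2 ≤ ⟪x, G x⟫) :
    ∃ ν ∈ probDensities μ H, ∀ᵐ x ∂μ, x ∈ H → ⟪ν, G ν⟫ ≤ G ν x := by
  obtain ⟨ν, hν, hmin⟩ := exists_isMinOn_inner_of_coercive hcoer
    ⟨_, inv_smul_indicatorConstLp_mem_probDensities hH hHt subset_rfl hH0⟩
    (isClosed_probDensities hH hHt) convex_probDensities
  exact ⟨ν, hν, ae_le_of_forall_le_inner hH hHt fun m hm =>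
    inner_self_le_inner_of_isMinOn hG convex_probDensities hν hmin hm⟩

end ProbDensities

section HeatDominates

variable {V : Type*} [NormedAddCommGroup V] [InnerProductSpace ℝ V] [MeasurableSpace V]
  [BorelSpace V] [FiniteDimensional ℝ V]

/-- `HeatDominates E F`: every `f ∈ L²` with `f ≥ 1` on `E` has a counterpart `g ≥ 1` on `F` which
is no larger in norm and at least as large in heat content. This forces `E` to have the larger
capacity for every kernel that is a mixture of heat kernels. -/
def HeatDominates (E F : Set V) : Prop :=
  ∀ f : LTwo V, (∀ᵐ x, x ∈ E → 1 ≤ f x) → ∃ g : LTwo V, (∀ᵐ x, x ∈ F → 1 ≤ g x) ∧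
    ‖g‖ ≤ ‖f‖ ∧ ∀ t, 0 < t → ⟪f, heatOp t f⟫ ≤ ⟪g, heatOp t g⟫

lemma HeatDominates.trans {E F G : Set V} (h : HeatDominates E F) (h' : HeatDominates F G) :
    HeatDominates E G := fun f hf => by
  obtain ⟨g, hg, hgf, hheat⟩ := h f hf
  obtain ⟨k, hk, hkg, hheat'⟩ := h' g hg
  exact ⟨k, hk, hkg.trans hgf, fun t ht => (hheat t ht).trans (hheat' t ht)⟩

lemma HeatDominates.of_subset {E F : Set V} (h : F ⊆ E) : HeatDominates E F :=
  fun f hf => ⟨f, hf.mono fun _ hx hF => hx (h hF), le_rfl, fun _ _ => le_rfl⟩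

lemma inner_heatOp_pow_self_nonneg {τ : ℝ} (hτ : 0 < τ) (n : ℕ) (f : LTwo V) :
    0 ≤ ⟪f, (heatOp τ ^ n) f⟫ := by
  rw [heatOp_pow hτ]
  exact inner_heatOp_self_nonneg (by positivity) f

theorem HeatDominates.exists_inner_operatorSeries_le {E F : Set V} (hEF : HeatDominates E F)
    (hE : MeasurableSet E) (hEt : volume E ≠ ∞) (hE0 : volume E ≠ 0) {φ : PowerSeries ℝ}
    (hφ : IsKaluzaSeries φ) {τ : ℝ} (hτ : 0 < τ) {m : LTwo V} (hm : m ∈ probDensities volume F) :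
    ∃ ν ∈ probDensities volume E, ⟪ν, operatorSeries (heatOp τ) φ ν⟫ ≤
      ⟪m, operatorSeries (heatOp τ) φ m⟫ := by
  set P : LTwo V →L[ℝ] LTwo V := heatOp τ
  set G := operatorSeries P φ
  have hP : ‖P‖ ≤ 1 := norm_heatOp_le τ
  have hPs : IsSelfAdjoint P := isSelfAdjoint_heatOp hτ
  have hcoer : ∀ x, ‖x‖ ^ 2 ≤ ⟪x, G x⟫ :=
    norm_sq_le_inner_operatorSeries hP (inner_heatOp_pow_self_nonneg hτ) hφ.summable_abs
      (fun n => (hφ.coeff_pos n).le) hφ.coeff_zero.ge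
  obtain ⟨ν, hν, hνE⟩ := exists_equilibrium hE hEt hE0 (isSelfAdjoint_operatorSeries hPs) hcoer
  set W := ⟪ν, G ν⟫
  have hW : 0 < W :=
    (pow_pos (norm_pos_iff.2 (ne_zero_of_mem_probDensities hν)) 2).trans_le (hcoer ν)
  obtain ⟨g, hg, hnorm, hheat⟩ := hEF (W⁻¹ • G ν) <| by
    filter_upwards [hνE, Lp.coeFn_smul W⁻¹ (G ν)] with x hx hsmul hxE
    rw [hsmul, Pi.smul_apply, smul_eq_mul, inv_mul_eq_div, le_div_iff₀ hW, one_mul]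
    exact hx hxE
  have hinner : ⟪W⁻¹ • G ν, operatorSeries P φ⁻¹ (W⁻¹ • G ν)⟫ = W⁻¹ := by
    rw [map_smul, hφ.operatorSeries_inv_apply hP, real_inner_smul_left, real_inner_smul_right,
      real_inner_comm, inv_mul_cancel₀ hW.ne', mul_one]
  have hcs := hφ.inner_sq_le hP hPs hnorm (fun n => by
    rw [heatOp_pow hτ]; exact hheat _ (by positivity)) m
  have hpair : 1 ≤ ⟪g, m⟫ ^ 2 := one_le_pow₀ (one_le_inner_of_mem_probDensities hg hm)
  refine ⟨ν, hν, ?_⟩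
  rw [hinner, inv_mul_eq_div, le_div_iff₀ hW] at hcs
  exact (le_mul_of_one_le_left hW.le hpair).trans hcs

end HeatDominates

end Duality

/-! ### The Riesz kernel as a mixture of heat kernels -/

section RieszEnergy

open Module (finrank)

variable {V : Type*} [NormedAddCommGroup V] [InnerProductSpace ℝ V] {α : ℝ}

variable (V) in
/-- The constant `c` in `∫₀^∞ t^(α/2-1) heatKernel t x dt = c |x|^(α-d)`, `d = dim V`. -/
def rieszConst (α : ℝ) : ℝ := π ^ (-(finrank ℝ V : ℝ) / 2) * Real.Gamma ((finrank ℝ V - α) / 2)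

lemma rieszConst_pos (hα : α < finrank ℝ V) : 0 < rieszConst V α :=
  mul_pos (by positivity) (Real.Gamma_pos_of_pos (by linarith))

lemma integral_rpow_mul_heatKernel (hα : α < finrank ℝ V) {x : V} (hx : x ≠ 0) :
    ∫ t in Ioi (0 : ℝ), t ^ (α / 2 - 1) * heatKernel t x =
      rieszConst V α * ‖x‖ ^ (α - finrank ℝ V) := by
  set d : ℝ := ((finrank ℝ V : ℕ) : ℝ)
  have hsubst : ∫ t in Ioi (0 : ℝ), t ^ (α / 2 - 1) * heatKernel t x =
      ∫ v in Ioi (0 : ℝ), π ^ (-d / 2) * (v ^ ((d - α) / 2 - 1) * rexp (-(‖x‖ ^ 2 * v))) := by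
    rw [← integral_comp_rpow_Ioi (fun v => π ^ (-d / 2) * (v ^ ((d - α) / 2 - 1) *
      rexp (-(‖x‖ ^ 2 * v)))) (neg_ne_zero.2 one_ne_zero)]
    refine setIntegral_congr_fun measurableSet_Ioi fun t (ht : 0 < t) => ?_
    have hpow : t ^ (α / 2 - 1) * t ^ (-d / 2) = t ^ (-1 - 1 : ℝ) * t ^ (-((d - α) / 2 - 1)) := by
      rw [← Real.rpow_add ht, ← Real.rpow_add ht]
      congr 1; ring
    simp only [heatKernel, abs_neg, abs_one, one_mul, smul_eq_mul]
    rw [Real.rpow_neg_one, Real.inv_rpow ht.le, ← Real.rpow_neg ht.le, ← div_eq_mul_inv,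
      Real.mul_rpow pi_pos.le ht.le]
    linear_combination (π ^ (-d / 2) * rexp (-(‖x‖ ^ 2 / t))) * hpow
  rw [hsubst, integral_const_mul, Real.integral_rpow_mul_exp_neg_mul_Ioi (by linarith)
    (by positivity), one_div, Real.inv_rpow (by positivity), ← Real.rpow_neg (by positivity),
    ← Real.rpow_natCast, ← Real.rpow_mul (norm_nonneg x), rieszConst,
    show ((2 : ℕ) : ℝ) * -((d - α) / 2) = α - d by push_cast; ring]
  ring

lemma not_integrableOn_rpow_mul_heatKernel_zero :
    ¬ IntegrableOn (fun t => t ^ (α / 2 - 1) * heatKernel t (0 : V)) (Ioi 0) := by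
  intro hinteg
  refine not_integrableOn_Ioi_rpow (α / 2 - 1 + -(finrank ℝ V : ℝ) / 2) (IntegrableOn.congr_fun
    (hinteg.const_mul (π ^ (-(finrank ℝ V : ℝ) / 2))⁻¹) ?_ measurableSet_Ioi)
  intro t (ht : 0 < t)
  simp only [heatKernel, norm_zero]
  rw [Real.rpow_add ht, Real.mul_rpow pi_pos.le ht.le, zero_pow two_ne_zero, zero_div, neg_zero,
    Real.exp_zero]
  field_simp

variable [MeasurableSpace V]

/-- The heat energy `∬ heatKernel t (x - y) dμ(x) dμ(y)`. -/
def heatEnergy (μ : Measure V) (t : ℝ) : ℝ≥0∞ :=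
  ∫⁻ x, ∫⁻ y, ENNReal.ofReal (heatKernel t (x - y)) ∂μ ∂μ

/-- The Riesz energy `∬ |x - y|^(α-d) dμ(x) dμ(y)`, `d = dim V`. -/
def rieszEnergy (α : ℝ) (μ : Measure V) : ℝ≥0∞ :=
  ∫⁻ x, ∫⁻ y, edist x y ^ (α - finrank ℝ V) ∂μ ∂μ

lemma heatEnergy_le {μ : Measure V} [IsProbabilityMeasure μ] {t : ℝ} (ht : 0 < t) :
    heatEnergy μ t ≤ ENNReal.ofReal ((π * t) ^ (-(finrank ℝ V : ℝ) / 2)) :=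
  calc heatEnergy μ t
      ≤ ∫⁻ _, ∫⁻ _, ENNReal.ofReal ((π * t) ^ (-(finrank ℝ V : ℝ) / 2)) ∂μ ∂μ := by
        refine lintegral_mono fun x => lintegral_mono fun y => ENNReal.ofReal_le_ofReal ?_
        refine (heatKernel_le_of_norm_le ht (y := 0) (by simp)).trans_eq ?_
        simp [heatKernel]
    _ = _ := by simp

lemma lintegral_Ioi_rpow_mul_heatEnergy_le (hα : α < finrank ℝ V) {μ : Measure V}
    [IsProbabilityMeasure μ] {T : ℝ} (hT : 0 < T) :
    ∫⁻ t in Ioi T, ENNReal.ofReal (t ^ (α / 2 - 1)) * heatEnergy μ t ≤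
      ENNReal.ofReal (π ^ (-(finrank ℝ V : ℝ) / 2) *
        (T ^ (-((finrank ℝ V - α) / 2)) / ((finrank ℝ V - α) / 2))) := by
  set d : ℝ := ((finrank ℝ V : ℕ) : ℝ)
  have hexp : -((d - α) / 2) - 1 < -1 := by linarith
  calc ∫⁻ t in Ioi T, ENNReal.ofReal (t ^ (α / 2 - 1)) * heatEnergy μ t
      ≤ ∫⁻ t in Ioi T, ENNReal.ofReal (π ^ (-d / 2) * t ^ (-((d - α) / 2) - 1)) := by
        refine setLIntegral_mono_ae' measurableSet_Ioi (Eventually.of_forall fun t ht => ?_)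
        have ht0 : 0 < t := hT.trans ht
        grw [heatEnergy_le ht0]
        rw [← ENNReal.ofReal_mul (by positivity), Real.mul_rpow pi_pos.le ht0.le, mul_left_comm,
          ← Real.rpow_add ht0]
        refine le_of_eq ?_
        congr 3
        ring
    _ = _ := by
        rw [← ofReal_integral_eq_lintegral_ofReal
            ((integrableOn_Ioi_rpow_of_lt hexp hT).const_mul _)
            ((ae_restrict_mem measurableSet_Ioi).mono fun t (ht : T < t) =>
              have : 0 < t := hT.trans ht; by dsimp only [Pi.zero_apply]; positivity),
          integral_const_mul, integral_Ioi_rpow_of_lt hexp hT, sub_add_cancel, neg_div_neg_eq]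

variable [BorelSpace V]

lemma lintegral_rpow_mul_heatKernel (hα : α < finrank ℝ V) (x y : V) :
    ∫⁻ t in Ioi (0 : ℝ), ENNReal.ofReal (t ^ (α / 2 - 1)) * ENNReal.ofReal (heatKernel t (x - y)) =
      ENNReal.ofReal (rieszConst V α) * edist x y ^ (α - finrank ℝ V) := by
  have hC := rieszConst_pos hα
  have hnn : 0 ≤ᵐ[volume.restrict (Ioi (0 : ℝ))]
      fun t => t ^ (α / 2 - 1) * heatKernel t (x - y) :=
    (ae_restrict_mem measurableSet_Ioi).mono fun t (ht : 0 < t) =>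
      mul_nonneg (Real.rpow_nonneg ht.le _) (heatKernel_nonneg ht _)
  rw [setLIntegral_congr_fun measurableSet_Ioi fun t (ht : 0 < t) =>
    (ENNReal.ofReal_mul (Real.rpow_nonneg ht.le _)).symm]
  rcases eq_or_ne x y with rfl | hxy
  · rw [edist_self, ENNReal.zero_rpow_of_neg (by linarith),
      ENNReal.mul_top (ENNReal.ofReal_pos.2 hC).ne']
    rw [sub_self] at hnn ⊢
    by_contra hne
    refine not_integrableOn_rpow_mul_heatKernel_zero (V := V) (α := α) ⟨?_, ?_⟩
    · exact ((by fun_prop : Measurable fun t : ℝ => t ^ (α / 2 - 1)).mul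
        (measurable_heatKernel_uncurry.comp measurable_prodMk_right)).aestronglyMeasurable
    · exact (hasFiniteIntegral_iff_ofReal hnn).2 (lt_top_iff_ne_top.2 hne)
  · have hv := integral_rpow_mul_heatKernel hα (sub_ne_zero.2 hxy)
    have hpos : 0 < ‖x - y‖ := norm_pos_iff.2 (sub_ne_zero.2 hxy)
    rw [← ofReal_integral_eq_lintegral_ofReal
      (Integrable.of_integral_ne_zero (by rw [hv]; positivity)) hnn, hv, ENNReal.ofReal_mul hC.le,
      edist_dist, dist_eq_norm, ENNReal.ofReal_rpow_of_pos hpos]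

variable [FiniteDimensional ℝ V]

lemma lintegral_rpow_mul_heatEnergy (hα : α < finrank ℝ V) (μ : Measure V) [SFinite μ] :
    ∫⁻ t in Ioi (0 : ℝ), ENNReal.ofReal (t ^ (α / 2 - 1)) * heatEnergy μ t =
      ENNReal.ofReal (rieszConst V α) * rieszEnergy α μ := by
  have hmeas : Measurable fun p : (ℝ × V) × V => ENNReal.ofReal (p.1.1 ^ (α / 2 - 1)) *
      ENNReal.ofReal (heatKernel p.1.1 (p.1.2 - p.2)) := by
    refine Measurable.mul (by fun_prop) (Measurable.ennreal_ofReal ?_)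
    exact measurable_heatKernel_uncurry.comp
      (by fun_prop : Measurable fun p : (ℝ × V) × V => (p.1.1, p.1.2 - p.2))
  calc ∫⁻ t in Ioi (0 : ℝ), ENNReal.ofReal (t ^ (α / 2 - 1)) * heatEnergy μ t
      = ∫⁻ t in Ioi (0 : ℝ), ∫⁻ x, ∫⁻ y, ENNReal.ofReal (t ^ (α / 2 - 1)) *
          ENNReal.ofReal (heatKernel t (x - y)) ∂μ ∂μ := by
        simp_rw [heatEnergy, ← lintegral_const_mul' _ _ ENNReal.ofReal_ne_top]
    _ = ∫⁻ x, ∫⁻ t in Ioi (0 : ℝ), ∫⁻ y, ENNReal.ofReal (t ^ (α / 2 - 1)) *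
          ENNReal.ofReal (heatKernel t (x - y)) ∂μ ∂volume ∂μ :=
        lintegral_lintegral_swap (Measurable.lintegral_prod_right' hmeas).aemeasurable
    _ = ∫⁻ x, ∫⁻ y, (∫⁻ t in Ioi (0 : ℝ), ENNReal.ofReal (t ^ (α / 2 - 1)) *
          ENNReal.ofReal (heatKernel t (x - y))) ∂μ ∂μ := by
        refine lintegral_congr fun x => lintegral_lintegral_swap (Measurable.aemeasurable ?_)
        exact hmeas.comp (by fun_prop : Measurable fun p : ℝ × V => ((p.1, x), p.2))
    _ = ENNReal.ofReal (rieszConst V α) * rieszEnergy α μ := by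
        simp_rw [lintegral_rpow_mul_heatKernel hα,
          lintegral_const_mul' _ _ ENNReal.ofReal_ne_top, rieszEnergy]

/-- The measure with density `m`; a probability measure if `m` is a probability density. -/
def densityMeasure {X : Type*} [MeasurableSpace X] {μ : Measure X} (m : Lp ℝ 2 μ) : Measure X :=
  μ.withDensity fun x => ENNReal.ofReal (m x)

section densityMeasure

variable {X : Type*} [MeasurableSpace X] {μ : Measure X} {H : Set X} {m : Lp ℝ 2 μ}

lemma measurable_ofReal_coeFn (m : Lp ℝ 2 μ) : Measurable fun x => ENNReal.ofReal (m x) :=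
  (Lp.stronglyMeasurable m).measurable.ennreal_ofReal

lemma isProbabilityMeasure_densityMeasure (hm : m ∈ probDensities μ H) :
    IsProbabilityMeasure (densityMeasure m) := by
  refine ⟨?_⟩
  rw [densityMeasure, withDensity_apply _ MeasurableSet.univ, Measure.restrict_univ,
    ← ofReal_integral_eq_lintegral_ofReal (integrable_of_mem_probDensities hm)
      (ae_nonneg_of_mem_probDensities hm), hm.2, ENNReal.ofReal_one]

lemma densityMeasure_apply_eq_one (hH : MeasurableSet H) (hm : m ∈ probDensities μ H) :
    densityMeasure m H = 1 := by
  have := isProbabilityMeasure_densityMeasure hm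
  rw [← prob_compl_eq_zero_iff hH, densityMeasure, withDensity_apply _ hH.compl,
    setLIntegral_eq_zero_iff hH.compl (measurable_ofReal_coeFn m)]
  filter_upwards [ae_eq_zero_of_mem_probDensities hm] with x hx hxH
  rw [hx hxH, ENNReal.ofReal_zero]

end densityMeasure

lemma heatEnergy_densityMeasure {m : LTwo V} (hm : ∀ᵐ x, 0 ≤ m x) {t : ℝ} (ht : 0 < t) :
    heatEnergy (densityMeasure m) t = ENNReal.ofReal ⟪m, heatOp t m⟫ := by
  have hmeas := measurable_ofReal_coeFn m
  have hk : Measurable fun p : V × V => ENNReal.ofReal (heatKernel t (p.1 - p.2)) := by fun_prop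
  have hfst : ∀ᵐ p : V × V ∂(volume.prod volume), 0 ≤ m p.1 :=
    Measure.quasiMeasurePreserving_fst.ae hm
  have hsnd : ∀ᵐ p : V × V ∂(volume.prod volume), 0 ≤ m p.2 :=
    Measure.quasiMeasurePreserving_snd.ae hm
  have hfactor : ∫⁻ p : V × V, ENNReal.ofReal (heatKernel t (p.1 - p.2) * (m p.1 * m p.2))
      ∂(volume.prod volume) = ∫⁻ p : V × V, ENNReal.ofReal (m p.1) *
        (ENNReal.ofReal (m p.2) * ENNReal.ofReal (heatKernel t (p.1 - p.2)))
      ∂(volume.prod volume) := by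
    refine lintegral_congr_ae ?_
    filter_upwards [hfst, hsnd] with p hp1 hp2
    rw [← ENNReal.ofReal_mul hp2, ← ENNReal.ofReal_mul hp1]
    congr 1; ring
  rw [inner_heatOp ht, ofReal_integral_eq_lintegral_ofReal
    (integrable_heatKernel_sub_mul ht (Lp.memLp m) (Lp.memLp m)), hfactor, lintegral_prod _
    (by exact ((hmeas.comp measurable_fst).mul
      ((hmeas.comp measurable_snd).mul hk)).aemeasurable)]
  · simp_rw [heatEnergy, densityMeasure]
    rw [lintegral_withDensity_eq_lintegral_mul _ hmeas (Measurable.lintegral_prod_right' hk)]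
    refine lintegral_congr fun x => ?_
    rw [Pi.mul_apply, lintegral_withDensity_eq_lintegral_mul _ hmeas (by fun_prop),
      ← lintegral_const_mul' _ _ ENNReal.ofReal_ne_top]
    rfl
  · filter_upwards [hfst, hsnd] with p hp1 hp2
    exact mul_nonneg (heatKernel_nonneg ht _) (mul_nonneg hp1 hp2)

end RieszEnergy

/-! ### Quadrature of the mixture and removal of the damping -/

section Quadrature

variable {s τ q : ℝ}

lemma iUnion_Ioc_nat_mul (hτ : 0 < τ) : ⋃ n : ℕ, Ioc (n * τ) ((n + 1) * τ) = Ioi (0 : ℝ) := by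
  have hbdd : ¬BddAbove (range fun n : ℕ => (n : ℝ) * τ) :=
    not_bddAbove_of_tendsto_atTop (tendsto_natCast_atTop_atTop.atTop_mul_const hτ)
  simpa using iUnion_Ioc_map_succ_eq_Ioi (f := fun n : ℕ => (n : ℝ) * τ)
    (fun n => by rw [Nat.bot_eq_zero, Nat.cast_zero, zero_mul]; positivity) hbdd

lemma lintegral_Ioi_eq_tsum_Ioc (hτ : 0 < τ) (f : ℝ → ℝ≥0∞) :
    ∫⁻ t in Ioi (0 : ℝ), f t = ∑' n : ℕ, ∫⁻ t in Ioc (n * τ) ((n + 1) * τ), f t := by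
  have hmono : Monotone fun n : ℕ => (n : ℝ) * τ := fun a b hab => by dsimp only; gcongr
  rw [← iUnion_Ioc_nat_mul hτ, lintegral_iUnion fun _ => measurableSet_Ioc]
  simpa using hmono.pairwise_disjoint_on_Ioc_succ

/-- The weights of the quadrature of `t ^ (s - 1) dt` on `(0, ∞)` at the nodes `n τ`, in units of
`τ ^ s / s`: the node `0` carries the exact mass of `(0, τ]`, the node `n τ` the value
`τ (n τ) ^ (s - 1)`. -/
def powWeight (s : ℝ) (n : ℕ) : ℝ := if n = 0 then 1 else s * n ^ (s - 1)

@[simp] lemma powWeight_zero : powWeight s 0 = 1 := if_pos rfl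

lemma powWeight_succ (n : ℕ) : powWeight s (n + 1) = s * ((n + 1 : ℕ) : ℝ) ^ (s - 1) :=
  if_neg n.succ_ne_zero

lemma powWeight_pos (hs : 0 < s) (n : ℕ) : 0 < powWeight s n := by
  cases n with
  | zero => simp
  | succ n => rw [powWeight_succ]; positivity

lemma antitone_powWeight (hs : s ∈ Ioo (0 : ℝ) 1) : Antitone (powWeight s) := by
  have hs0 := hs.1
  refine antitone_nat_of_succ_le fun n => ?_
  cases n with
  | zero => simp [powWeight_succ, hs.2.le]
  | succ n =>
    rw [powWeight_succ, powWeight_succ]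
    have hpow : ((n + 1 + 1 : ℕ) : ℝ) ^ (s - 1) ≤ ((n + 1 : ℕ) : ℝ) ^ (s - 1) :=
      Real.rpow_le_rpow_of_nonpos (by positivity) (by push_cast; linarith) (by linarith [hs.2])
    gcongr

lemma le_two_rpow_sub_one (hs : s ∈ Ioo (0 : ℝ) 1) : s ≤ 2 ^ (s - 1) := by
  have hbern := rpow_one_add_le_one_add_mul_self (s := 1) (p := 1 - s) (by norm_num)
    (by linarith [hs.2]) (by linarith [hs.1])
  have hpos : (0 : ℝ) < 2 ^ (1 - s) := by positivity
  rw [← neg_sub 1 s, Real.rpow_neg zero_le_two, le_inv_comm₀ hs.1 hpos]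
  have hinv : 2 - s ≤ s⁻¹ := by
    rw [le_inv_comm₀ (by linarith [hs.2]) hs.1, le_inv_comm₀ hs.1 (by linarith [hs.2]),
      ← one_div, le_div_iff₀ hs.1]
    nlinarith [sq_nonneg (1 - s)]
  norm_num at hbern
  linarith

lemma powWeight_succ_sq_le (hs : s ∈ Ioo (0 : ℝ) 1) (n : ℕ) :
    powWeight s (n + 1) ^ 2 ≤ powWeight s n * powWeight s (n + 2) := by
  have hs0 := hs.1
  cases n with
  | zero =>
    rw [powWeight_zero, powWeight_succ, powWeight_succ]
    norm_num
    nlinarith [le_two_rpow_sub_one hs]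
  | succ n =>
    rw [powWeight_succ, powWeight_succ, powWeight_succ, mul_pow, mul_mul_mul_comm, ← sq,
      ← Real.mul_rpow (by positivity) (by positivity), sq (_ ^ _),
      ← Real.mul_rpow (by positivity) (by positivity)]
    refine mul_le_mul_of_nonneg_left ?_ (sq_nonneg s)
    refine Real.rpow_le_rpow_of_nonpos (by positivity) ?_ (by linarith [hs.2])
    push_cast
    nlinarith

lemma isKaluzaSeries_geometric_mul_powWeight (hs : s ∈ Ioo (0 : ℝ) 1) (hq : q ∈ Ioo (0 : ℝ) 1) :
    IsKaluzaSeries (PowerSeries.mk fun n => q ^ n * powWeight s n) where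
  coeff_zero := by simp
  coeff_pos n := by
    rw [PowerSeries.coeff_mk]
    exact mul_pos (pow_pos hq.1 n) (powWeight_pos hs.1 n)
  antitone i j hij := by
    simp only [PowerSeries.coeff_mk]
    exact mul_le_mul (pow_le_pow_of_le_one hq.1.le hq.2.le hij) (antitone_powWeight hs hij)
      (powWeight_pos hs.1 j).le (pow_nonneg hq.1.le i)
  logConvex n := by
    simp only [PowerSeries.coeff_mk]
    calc (q ^ (n + 1) * powWeight s (n + 1)) ^ 2
        = (q ^ n * q ^ (n + 2)) * powWeight s (n + 1) ^ 2 := by ring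
      _ ≤ (q ^ n * q ^ (n + 2)) * (powWeight s n * powWeight s (n + 2)) := by
          have := powWeight_succ_sq_le hs n
          have := hq.1
          gcongr
      _ = _ := by ring
  summable := by
    simp only [PowerSeries.coeff_mk]
    refine Summable.of_nonneg_of_le (fun n => ?_) (fun n => ?_)
      (summable_geometric_of_lt_one hq.1.le hq.2)
    · exact mul_nonneg (pow_nonneg hq.1.le n) (powWeight_pos hs.1 n).le
    · refine mul_le_of_le_one_right (pow_nonneg hq.1.le n) ?_
      simpa using antitone_powWeight hs n.zero_le

lemma lintegral_Ioc_zero_rpow (hs : 0 < s) (hτ : 0 < τ) :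
    ∫⁻ t in Ioc 0 τ, ENNReal.ofReal (t ^ (s - 1)) = ENNReal.ofReal (τ ^ s / s) := by
  have hexp : -1 < s - 1 := by linarith
  rw [← ofReal_integral_eq_lintegral_ofReal (intervalIntegral.intervalIntegrable_rpow' hexp).1
    ((ae_restrict_mem measurableSet_Ioc).mono fun t ht => Real.rpow_nonneg ht.1.le _),
    ← intervalIntegral.integral_of_le hτ.le, integral_rpow (Or.inl hexp), sub_add_cancel,
    Real.zero_rpow hs.ne', sub_zero]

lemma rpow_div_mul_powWeight_succ (hs : 0 < s) (hτ : 0 < τ) (n : ℕ) :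
    τ ^ s / s * powWeight s (n + 1) = τ * (((n + 1 : ℕ) : ℝ) * τ) ^ (s - 1) := by
  rw [powWeight_succ, Real.mul_rpow (by positivity) hτ.le, Real.rpow_sub_one hτ.ne' s]
  field_simp

variable {ψ : ℝ → ℝ≥0∞}

lemma antitoneOn_rpow_mul (hs : s ≤ 1) (hψ : AntitoneOn ψ (Ici 0)) :
    AntitoneOn (fun t => ENNReal.ofReal (t ^ (s - 1)) * ψ t) (Ioi 0) := fun a ha b hb hab =>
  mul_le_mul' (ENNReal.ofReal_le_ofReal (Real.rpow_le_rpow_of_nonpos ha hab (by linarith)))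
    (hψ (mem_Ici.2 (le_of_lt ha)) (mem_Ici.2 (le_of_lt hb)) hab)

lemma lintegral_rpow_mul_le_tsum_powWeight (hs : s ∈ Ioo (0 : ℝ) 1) (hτ : 0 < τ)
    (hψ : AntitoneOn ψ (Ici 0)) :
    ∫⁻ t in Ioi (0 : ℝ), ENNReal.ofReal (t ^ (s - 1)) * ψ t ≤
      ENNReal.ofReal (τ ^ s / s) * ∑' n : ℕ, ENNReal.ofReal (powWeight s n) * ψ (n * τ) := by
  rw [lintegral_Ioi_eq_tsum_Ioc hτ, ← ENNReal.tsum_mul_left]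
  have hs0 := hs.1
  refine ENNReal.tsum_le_tsum fun n => ?_
  cases n with
  | zero =>
    rw [powWeight_zero, ENNReal.ofReal_one, one_mul, Nat.cast_zero, zero_mul, zero_add, one_mul,
      ← lintegral_Ioc_zero_rpow hs0 hτ, ← lintegral_mul_const _ (by fun_prop)]
    refine setLIntegral_mono_ae' measurableSet_Ioc (Eventually.of_forall fun t ht => ?_)
    gcongr
    exact hψ self_mem_Ici ht.1.le ht.1.le
  | succ n =>
    have hnode : (0 : ℝ) < ((n + 1 : ℕ) : ℝ) * τ := by positivity
    rw [← mul_assoc, ← ENNReal.ofReal_mul (by positivity), rpow_div_mul_powWeight_succ hs0 hτ,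
      ENNReal.ofReal_mul hτ.le, mul_assoc, mul_comm (ENNReal.ofReal τ)]
    refine (setLIntegral_mono_ae' measurableSet_Ioc (Eventually.of_forall fun t ht =>
      antitoneOn_rpow_mul hs.2.le hψ hnode (hnode.trans ht.1) ht.1.le)).trans_eq ?_
    rw [setLIntegral_const, Real.volume_Ioc]
    congr 2; ring

lemma tsum_powWeight_le_lintegral_rpow_mul (hs : s ∈ Ioo (0 : ℝ) 1) (hτ : 0 < τ)
    (hψ : AntitoneOn ψ (Ici 0)) :
    ENNReal.ofReal (τ ^ s / s) * ∑' n : ℕ, ENNReal.ofReal (powWeight s n) * ψ (n * τ) ≤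
      ENNReal.ofReal (τ ^ s / s) * ψ 0 +
        ∫⁻ t in Ioi (0 : ℝ), ENNReal.ofReal (t ^ (s - 1)) * ψ t := by
  rw [tsum_eq_zero_add' ENNReal.summable, mul_add, lintegral_Ioi_eq_tsum_Ioc hτ,
    ← ENNReal.tsum_mul_left, powWeight_zero, ENNReal.ofReal_one, one_mul, Nat.cast_zero, zero_mul]
  have hs0 := hs.1
  gcongr with n
  have hnode : (0 : ℝ) < ((n + 1 : ℕ) : ℝ) * τ := by positivity
  rw [← mul_assoc, ← ENNReal.ofReal_mul (by positivity), rpow_div_mul_powWeight_succ hs0 hτ,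
    ENNReal.ofReal_mul hτ.le, mul_assoc, mul_comm (ENNReal.ofReal τ)]
  calc _ = ∫⁻ _ in Ioc (n * τ) ((n + 1) * τ),
        ENNReal.ofReal ((((n + 1 : ℕ) : ℝ) * τ) ^ (s - 1)) * ψ (((n + 1 : ℕ) : ℝ) * τ) := by
        rw [setLIntegral_const, Real.volume_Ioc]
        congr 2; ring
    _ ≤ _ := setLIntegral_mono_ae' measurableSet_Ioc (Eventually.of_forall fun t ht =>
        antitoneOn_rpow_mul hs.2.le hψ (lt_of_le_of_lt (by positivity) ht.1) hnode
          (by push_cast; exact ht.2))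

end Quadrature

section HeatDominates

open Module (finrank)

variable {V : Type*} [NormedAddCommGroup V] [InnerProductSpace ℝ V] [MeasurableSpace V]
  [BorelSpace V] [FiniteDimensional ℝ V] {α ε τ : ℝ}

lemma antitoneOn_exp_mul_inner_heatOp (hε : 0 ≤ ε) (f : LTwo V) :
    AntitoneOn (fun t => ENNReal.ofReal (rexp (-(ε * t)) * ⟪f, heatOp t f⟫)) (Ici 0) := by
  intro a (ha : 0 ≤ a) b hb hab
  refine ENNReal.ofReal_le_ofReal ?_
  have hanti : ⟪f, heatOp b f⟫ ≤ ⟪f, heatOp a f⟫ := by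
    rcases ha.eq_or_lt with rfl | ha
    · rw [heatOp_zero, one_apply_eq_self, real_inner_self_eq_norm_sq]
      exact inner_heatOp_self_le_norm_sq f
    · exact inner_heatOp_self_anti ha hab f
  have hnonneg := inner_heatOp_self_nonneg hb f
  gcongr

/-- The coefficients of the quadrature, with mesh `τ`, of the Riesz kernel with damping
`exp (-ε t)`. -/
def dampedSeries (s ε τ : ℝ) : PowerSeries ℝ :=
  PowerSeries.mk fun n => rexp (-(ε * τ)) ^ n * powWeight s n

lemma isKaluzaSeries_dampedSeries {s : ℝ} (hs : s ∈ Ioo (0 : ℝ) 1) (hε : 0 < ε) (hτ : 0 < τ) :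
    IsKaluzaSeries (dampedSeries s ε τ) :=
  isKaluzaSeries_geometric_mul_powWeight hs
    ⟨Real.exp_pos _, Real.exp_lt_one_iff.2 (neg_neg_of_pos (mul_pos hε hτ))⟩

lemma ofReal_inner_operatorSeries_dampedSeries {s : ℝ} (hs : s ∈ Ioo (0 : ℝ) 1) (hε : 0 < ε)
    (hτ : 0 < τ) (f : LTwo V) :
    ENNReal.ofReal ⟪f, operatorSeries (heatOp τ) (dampedSeries s ε τ) f⟫ =
      ∑' n : ℕ, ENNReal.ofReal (powWeight s n) *
        ENNReal.ofReal (rexp (-(ε * (n * τ))) * ⟪f, heatOp (n * τ) f⟫) := by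
  have hsum := hasSum_inner_operatorSeries (norm_heatOp_le τ)
    (isKaluzaSeries_dampedSeries hs hε hτ).summable_abs f f
  have hterm (n : ℕ) : PowerSeries.coeff n (dampedSeries s ε τ) * ⟪f, (heatOp τ ^ n) f⟫ =
      powWeight s n * (rexp (-(ε * (n * τ))) * ⟪f, heatOp (n * τ) f⟫) := by
    rw [dampedSeries, PowerSeries.coeff_mk, ← Real.exp_nat_mul, heatOp_pow hτ,
      show n * -(ε * τ) = -(ε * (n * τ)) by ring]
    ring
  have hw := powWeight_pos hs.1
  simp_rw [hterm] at hsum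
  rw [← hsum.tsum_eq, ENNReal.ofReal_tsum_of_nonneg _ hsum.summable]
  · simp_rw [ENNReal.ofReal_mul (hw _).le]
  · exact fun n => mul_nonneg (hw n).le
      (mul_nonneg (Real.exp_pos _).le (inner_heatOp_self_nonneg (by positivity) f))

variable {E F : Set V}

lemma lintegral_rpow_mul_inner_heatOp {m : LTwo V} (hα : α < finrank ℝ V)
    (hm : m ∈ probDensities volume F) :
    ∫⁻ t in Ioi (0 : ℝ), ENNReal.ofReal (t ^ (α / 2 - 1)) * ENNReal.ofReal ⟪m, heatOp t m⟫ =
      ENNReal.ofReal (rieszConst V α) * rieszEnergy α (densityMeasure m) := by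
  have := isProbabilityMeasure_densityMeasure hm
  rw [← lintegral_rpow_mul_heatEnergy hα]
  refine setLIntegral_congr_fun measurableSet_Ioi fun t (ht : 0 < t) => ?_
  simp only [heatEnergy_densityMeasure (ae_nonneg_of_mem_probDensities hm) ht]

lemma inner_dampedSeries_le_rieszEnergy (hα : α ∈ Ioo (0 : ℝ) 2) (hαV : α < finrank ℝ V)
    (hε : 0 < ε) (hτ : 0 < τ) {m : LTwo V} (hm : m ∈ probDensities volume F) :
    ENNReal.ofReal (τ ^ (α / 2) / (α / 2)) *
        ENNReal.ofReal ⟪m, operatorSeries (heatOp τ) (dampedSeries (α / 2) ε τ) m⟫ ≤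
      ENNReal.ofReal (τ ^ (α / 2) / (α / 2) * ‖m‖ ^ 2) +
        ENNReal.ofReal (rieszConst V α) * rieszEnergy α (densityMeasure m) := by
  have hs : α / 2 ∈ Ioo (0 : ℝ) 1 := ⟨by linarith [hα.1], by linarith [hα.2]⟩
  have hs0 := hs.1
  rw [ofReal_inner_operatorSeries_dampedSeries hs hε hτ]
  refine (tsum_powWeight_le_lintegral_rpow_mul hs hτ
    (antitoneOn_exp_mul_inner_heatOp hε.le m)).trans ?_
  rw [mul_zero, neg_zero, Real.exp_zero, one_mul, heatOp_zero, one_apply_eq_self,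
    real_inner_self_eq_norm_sq, ← ENNReal.ofReal_mul (by positivity),
    ← lintegral_rpow_mul_inner_heatOp hαV hm]
  refine add_le_add_right (setLIntegral_mono_ae' measurableSet_Ioi
    (Eventually.of_forall fun t (ht : 0 < t) => ?_)) _
  gcongr
  refine mul_le_of_le_one_left (inner_heatOp_self_nonneg ht.le m) (Real.exp_le_one_iff.2 ?_)
  exact neg_nonpos.2 (by positivity)

lemma rieszEnergy_le_inner_dampedSeries (hα : α ∈ Ioo (0 : ℝ) 2) (hαV : α < finrank ℝ V)
    (hε : 0 < ε) (hτ : 0 < τ) {T : ℝ} (hT : 0 < T) {m : LTwo V}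
    (hm : m ∈ probDensities volume F) :
    ENNReal.ofReal (rieszConst V α) * rieszEnergy α (densityMeasure m) ≤
      ENNReal.ofReal (rexp (ε * T)) * (ENNReal.ofReal (τ ^ (α / 2) / (α / 2)) *
          ENNReal.ofReal ⟪m, operatorSeries (heatOp τ) (dampedSeries (α / 2) ε τ) m⟫) +
        ENNReal.ofReal (π ^ (-(finrank ℝ V : ℝ) / 2) *
          (T ^ (-((finrank ℝ V - α) / 2)) / ((finrank ℝ V - α) / 2))) := by
  have hs : α / 2 ∈ Ioo (0 : ℝ) 1 := ⟨by linarith [hα.1], by linarith [hα.2]⟩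
  have := isProbabilityMeasure_densityMeasure hm
  set ψ : ℝ → ℝ≥0∞ := fun t => ENNReal.ofReal (rexp (-(ε * t)) * ⟪m, heatOp t m⟫)
  rw [← lintegral_rpow_mul_heatEnergy hαV, ← Ioc_union_Ioi_eq_Ioi hT.le,
    lintegral_union measurableSet_Ioi (Ioc_disjoint_Ioi le_rfl)]
  refine add_le_add ?_ (lintegral_Ioi_rpow_mul_heatEnergy_le hαV hT)
  calc ∫⁻ t in Ioc 0 T, ENNReal.ofReal (t ^ (α / 2 - 1)) * heatEnergy (densityMeasure m) t
      ≤ ∫⁻ t in Ioc 0 T, ENNReal.ofReal (rexp (ε * T)) *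
          (ENNReal.ofReal (t ^ (α / 2 - 1)) * ψ t) := by
        refine setLIntegral_mono_ae' measurableSet_Ioc (Eventually.of_forall fun t ht => ?_)
        rw [heatEnergy_densityMeasure (ae_nonneg_of_mem_probDensities hm) ht.1, mul_left_comm,
          ← ENNReal.ofReal_mul (Real.exp_pos _).le, ← mul_assoc, ← Real.exp_add]
        gcongr
        refine le_mul_of_one_le_left (inner_heatOp_self_nonneg ht.1.le m) (Real.one_le_exp ?_)
        nlinarith [ht.2]
    _ ≤ ENNReal.ofReal (rexp (ε * T)) *
          ∫⁻ t in Ioi (0 : ℝ), ENNReal.ofReal (t ^ (α / 2 - 1)) * ψ t := by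
        rw [lintegral_const_mul' _ _ ENNReal.ofReal_ne_top]
        gcongr
        exact Ioc_subset_Ioi_self
    _ ≤ _ := by
        rw [ofReal_inner_operatorSeries_dampedSeries hs hε hτ]
        gcongr
        exact lintegral_rpow_mul_le_tsum_powWeight hs hτ (antitoneOn_exp_mul_inner_heatOp hε.le m)

/-- Damping by `exp (-t / T²)` is negligible up to time `T`, and the error of the quadrature with
mesh `1 / T` is the contribution of its first cell. -/
lemma HeatDominates.exists_rieszEnergy_le (hEF : HeatDominates E F) (hE : MeasurableSet E)
    (hEt : volume E ≠ ∞) (hE0 : volume E ≠ 0) (hα : α ∈ Ioo (0 : ℝ) 2) (hαV : α < finrank ℝ V)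
    {m : LTwo V} (hm : m ∈ probDensities volume F) {T : ℝ} (hT : 0 < T) :
    ∃ ν ∈ probDensities volume E,
      ENNReal.ofReal (rieszConst V α) * rieszEnergy α (densityMeasure ν) ≤
        ENNReal.ofReal (rexp T⁻¹) * (ENNReal.ofReal (T⁻¹ ^ (α / 2) / (α / 2) * ‖m‖ ^ 2) +
            ENNReal.ofReal (rieszConst V α) * rieszEnergy α (densityMeasure m)) +
          ENNReal.ofReal (π ^ (-(finrank ℝ V : ℝ) / 2) *
            (T ^ (-((finrank ℝ V - α) / 2)) / ((finrank ℝ V - α) / 2))) := by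
  have hτ := inv_pos.2 hT
  have hε : 0 < T⁻¹ ^ 2 := by positivity
  obtain ⟨ν, hν, hle⟩ := hEF.exists_inner_operatorSeries_le hE hEt hE0
    (isKaluzaSeries_dampedSeries (s := α / 2) ⟨by linarith [hα.1], by linarith [hα.2]⟩ hε hτ) hτ hm
  refine ⟨ν, hν, ?_⟩
  grw [← inner_dampedSeries_le_rieszEnergy hα hαV hε hτ hm, ← hle,
    rieszEnergy_le_inner_dampedSeries hα hαV hε hτ hT hν, sq, mul_assoc,
    inv_mul_cancel₀ hT.ne', mul_one]

theorem HeatDominates.iInf_rieszEnergy_le (hEF : HeatDominates E F) (hE : MeasurableSet E)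
    (hEt : volume E ≠ ∞) (hE0 : volume E ≠ 0) (hα : α ∈ Ioo (0 : ℝ) 2) (hαV : α < finrank ℝ V)
    {m : LTwo V} (hm : m ∈ probDensities volume F) :
    ⨅ ν ∈ probDensities volume E, rieszEnergy α (densityMeasure ν) ≤
      rieszEnergy α (densityMeasure m) := by
  have hs : 0 < α / 2 := by linarith [hα.1]
  have hβ : 0 < (finrank ℝ V - α) / 2 := by linarith
  have hlim : Tendsto (fun T : ℝ =>
      ENNReal.ofReal (rexp T⁻¹) * (ENNReal.ofReal (T⁻¹ ^ (α / 2) / (α / 2) * ‖m‖ ^ 2) +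
          ENNReal.ofReal (rieszConst V α) * rieszEnergy α (densityMeasure m)) +
        ENNReal.ofReal (π ^ (-(finrank ℝ V : ℝ) / 2) *
          (T ^ (-((finrank ℝ V - α) / 2)) / ((finrank ℝ V - α) / 2)))) atTop
      (𝓝 (ENNReal.ofReal (rexp 0) * (ENNReal.ofReal ((0 : ℝ) ^ (α / 2) / (α / 2) * ‖m‖ ^ 2) +
          ENNReal.ofReal (rieszConst V α) * rieszEnergy α (densityMeasure m)) +
        ENNReal.ofReal (π ^ (-(finrank ℝ V : ℝ) / 2) * (0 / ((finrank ℝ V - α) / 2))))) := by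
    refine (ENNReal.Tendsto.mul (ENNReal.tendsto_ofReal ?_) (by simp)
      ((ENNReal.tendsto_ofReal ?_).add_const _) (by simp)).add (ENNReal.tendsto_ofReal ?_)
    · exact (Real.continuous_exp.tendsto 0).comp tendsto_inv_atTop_zero
    · exact ((tendsto_inv_atTop_zero.rpow_const (Or.inr hs.le)).div_const _).mul_const _
    · exact ((tendsto_rpow_neg_atTop hβ).div_const _).const_mul _
  simp only [Real.exp_zero, Real.zero_rpow hs.ne', zero_div, zero_mul, mul_zero, one_mul,
    ENNReal.ofReal_zero, ENNReal.ofReal_one, zero_add, add_zero] at hlim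
  refine (ENNReal.mul_le_mul_iff_right (by simpa using rieszConst_pos hαV)
    ENNReal.ofReal_ne_top).1 (ge_of_tendsto hlim ((eventually_gt_atTop 0).mono fun T hT => ?_))
  obtain ⟨ν, hν, hle⟩ := hEF.exists_rieszEnergy_le hE hEt hE0 hα hαV hm hT
  exact (mul_le_mul_right (biInf_le (fun ν => rieszEnergy α (densityMeasure ν)) hν) _).trans hle

end HeatDominates

/-! ### Smoothing of measures -/

section Smoothing

open Module (finrank)

lemma sq_lintegral_le_lintegral_sq {X : Type*} [MeasurableSpace X] {μ : Measure X}
    [IsProbabilityMeasure μ] {f : X → ℝ≥0∞} (hf : AEMeasurable f μ) :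
    (∫⁻ x, f x ∂μ) ^ 2 ≤ ∫⁻ x, f x ^ 2 ∂μ := by
  have h := ENNReal.lintegral_mul_le_Lp_mul_Lq μ Real.HolderConjugate.two_two hf
    aemeasurable_const (g := 1)
  simp only [mul_one, Pi.one_apply, Pi.mul_apply, ENNReal.rpow_two, one_pow, lintegral_const,
    measure_univ, ENNReal.one_rpow] at h
  grw [h, ← ENNReal.rpow_two, ← ENNReal.rpow_mul]
  norm_num

variable {X : Type*} [MeasurableSpace X] {μ ρ : Measure X} {H : Set X} {C : ℝ≥0∞}

lemma rnDeriv_le_of_le_smul [SigmaFinite μ] (hle : ρ ≤ C • μ) : ∀ᵐ x ∂μ, ρ.rnDeriv μ x ≤ C := by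
  refine ae_le_of_forall_setLIntegral_le_of_sigmaFinite (Measure.measurable_rnDeriv _ _)
    fun s _ _ => ?_
  grw [Measure.setLIntegral_rnDeriv_le, hle]
  simp

lemma memLp_two_rnDeriv_of_le_smul [SigmaFinite μ] [IsFiniteMeasure ρ] (hC : C ≠ ∞)
    (hle : ρ ≤ C • μ) : MemLp (fun x => (ρ.rnDeriv μ x).toReal) 2 μ := by
  have hmeas : AEStronglyMeasurable (fun x => (ρ.rnDeriv μ x).toReal) μ :=
    (Measure.measurable_rnDeriv ρ μ).ennreal_toReal.aestronglyMeasurable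
  refine (memLp_two_iff_integrable_sq hmeas).2
    (((Measure.integrable_toReal_rnDeriv (μ := ρ)).const_mul C.toReal).mono' (hmeas.pow 2) ?_)
  filter_upwards [rnDeriv_le_of_le_smul hle] with x hx
  rw [Real.norm_of_nonneg (sq_nonneg _), sq]
  gcongr

lemma exists_mem_probDensities_densityMeasure_eq [SigmaFinite μ] [IsProbabilityMeasure ρ]
    (hC : C ≠ ∞) (hle : ρ ≤ C • μ) (hH : ∀ᵐ x ∂ρ, x ∈ H) :
    ∃ m ∈ probDensities μ H, densityMeasure m = ρ := by
  have hac : ρ ≪ μ :=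
    (Measure.absolutelyContinuous_of_le hle).trans Measure.smul_absolutelyContinuous
  have hmem := memLp_two_rnDeriv_of_le_smul hC hle
  have hae := hmem.coeFn_toLp
  refine ⟨hmem.toLp, ⟨?_, ?_⟩, ?_⟩
  · have hH' : ∀ᵐ x ∂μ, ρ.rnDeriv μ x ≠ 0 → x ∈ H := by
      rw [← Measure.withDensity_rnDeriv_eq ρ μ hac] at hH
      exact (ae_withDensity_iff (Measure.measurable_rnDeriv ρ μ)).1 hH
    filter_upwards [hae, hH'] with x hx hxH
    rw [hx]
    exact ⟨ENNReal.toReal_nonneg, fun h => by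
      rw [not_not.1 (mt hxH h), ENNReal.toReal_zero]⟩
  · rw [integral_congr_ae hae, Measure.integral_toReal_rnDeriv hac, probReal_univ]
  · conv_rhs => rw [← Measure.withDensity_rnDeriv_eq ρ μ hac]
    refine withDensity_congr_ae ?_
    filter_upwards [hae, rnDeriv_le_of_le_smul hle] with x hx hxC
    rw [hx, ENNReal.ofReal_toReal (hxC.trans_lt hC.lt_top).ne]

lemma conv_le_smul_of_le_smul {G : Type*} [AddCommGroup G] [MeasurableSpace G] [MeasurableAdd₂ G]
    {μ ν σ : Measure G} [IsProbabilityMeasure μ] [SFinite ν] [σ.IsAddLeftInvariant]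
    {C : ℝ≥0∞} (hle : ν ≤ C • σ) : μ ∗ ν ≤ C • σ := by
  refine Measure.le_iff.2 fun s hs => ?_
  calc (μ ∗ ν) s = ∫⁻ x, ν ((x + ·) ⁻¹' s) ∂μ := by
        rw [← lintegral_indicator_one hs, Measure.lintegral_conv (measurable_one.indicator hs)]
        refine lintegral_congr fun x => ?_
        rw [← lintegral_indicator_one (measurable_const_add x hs)]
        rfl
    _ ≤ ∫⁻ _, (C • σ) s ∂μ := by
        refine lintegral_mono fun x => (hle _).trans_eq ?_
        rw [Measure.smul_apply, measure_preimage_add, Measure.smul_apply]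
    _ = (C • σ) s := by simp

variable {V : Type*} [NormedAddCommGroup V] [InnerProductSpace ℝ V] [MeasurableSpace V]
  [BorelSpace V] [FiniteDimensional ℝ V] {α t : ℝ} {μ ν : Measure V}

/-- The heat potential `x ↦ ∫ heatKernel t (x - a) dμ(a)`. -/
def heatPotential (μ : Measure V) (t : ℝ) (x : V) : ℝ≥0∞ :=
  ∫⁻ a, ENNReal.ofReal (heatKernel t (x - a)) ∂μ

lemma measurable_heatPotential [SFinite μ] : Measurable (heatPotential μ t) :=
  Measurable.lintegral_prod_right'
    (f := fun p : V × V => ENNReal.ofReal (heatKernel t (p.1 - p.2))) (by fun_prop)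

lemma lintegral_heatKernel_mul (ht : 0 < t) (a b : V) :
    ∫⁻ x, ENNReal.ofReal (heatKernel t (x - a)) * ENNReal.ofReal (heatKernel t (x - b)) =
      ENNReal.ofReal (heatKernel (t + t) (a - b)) := by
  have hsemi : ∫ x, heatKernel t (x - a) * heatKernel t (x - b) = heatKernel (t + t) (a - b) := by
    rw [← integral_heatKernel_mul ht ht (a - b),
      ← integral_sub_left_eq_self (fun z => heatKernel t z * heatKernel t (a - b - z)) volume a]
    refine integral_congr_ae (Eventually.of_forall fun x => ?_)
    simp only [sub_sub_sub_cancel_left]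
    rw [heatKernel_sub_comm t x a]
  have hnn : ∀ x : V, 0 ≤ heatKernel t (x - a) * heatKernel t (x - b) := fun x =>
    mul_nonneg (heatKernel_nonneg ht _) (heatKernel_nonneg ht _)
  rw [← hsemi, ofReal_integral_eq_lintegral_ofReal (Integrable.of_integral_ne_zero
    (by rw [hsemi]; exact (heatKernel_pos (by positivity) _).ne')) (Eventually.of_forall hnn)]
  simp_rw [ENNReal.ofReal_mul (heatKernel_nonneg ht _)]

lemma lintegral_heatPotential_sq [SFinite μ] (ht : 0 < t) :
    ∫⁻ x, heatPotential μ t x ^ 2 = heatEnergy μ (t + t) := by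
  have hmeas : Measurable fun p : (V × V) × V =>
      ENNReal.ofReal (heatKernel t (p.1.1 - p.1.2)) *
        ENNReal.ofReal (heatKernel t (p.1.1 - p.2)) := by
    fun_prop
  calc ∫⁻ x, heatPotential μ t x ^ 2
      = ∫⁻ x, ∫⁻ a, ∫⁻ b, ENNReal.ofReal (heatKernel t (x - a)) *
          ENNReal.ofReal (heatKernel t (x - b)) ∂μ ∂μ := by
        refine lintegral_congr fun x => ?_
        rw [sq, heatPotential, ← lintegral_mul_const _ (by fun_prop)]
        simp_rw [lintegral_const_mul' _ _ ENNReal.ofReal_ne_top]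
    _ = ∫⁻ a, ∫⁻ x, ∫⁻ b, ENNReal.ofReal (heatKernel t (x - a)) *
          ENNReal.ofReal (heatKernel t (x - b)) ∂μ ∂volume ∂μ :=
        lintegral_lintegral_swap (Measurable.lintegral_prod_right' hmeas).aemeasurable
    _ = ∫⁻ a, ∫⁻ b, ∫⁻ x, ENNReal.ofReal (heatKernel t (x - a)) *
          ENNReal.ofReal (heatKernel t (x - b)) ∂volume ∂μ ∂μ := by
        refine lintegral_congr fun a => lintegral_lintegral_swap (f := fun x b =>
          ENNReal.ofReal (heatKernel t (x - a)) * ENNReal.ofReal (heatKernel t (x - b))) ?_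
        exact (hmeas.comp
          (by fun_prop : Measurable fun p : V × V => ((p.1, a), p.2))).aemeasurable
    _ = heatEnergy μ (t + t) := by simp_rw [lintegral_heatKernel_mul ht, heatEnergy]

lemma heatPotential_conv [SFinite μ] [SFinite ν] (x : V) :
    heatPotential (μ ∗ ν) t x = ∫⁻ b, heatPotential μ t (x - b) ∂ν := by
  rw [Measure.conv_comm, heatPotential, Measure.lintegral_conv (by fun_prop)]
  simp only [heatPotential, sub_sub]

lemma heatEnergy_conv_le [SFinite μ] [IsProbabilityMeasure ν] (ht : 0 < t) :
    heatEnergy (μ ∗ ν) t ≤ heatEnergy μ t := by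
  have hpot : Measurable (heatPotential μ (t / 2)) := measurable_heatPotential
  rw [← add_halves t, ← lintegral_heatPotential_sq (half_pos ht),
    ← lintegral_heatPotential_sq (half_pos ht)]
  calc ∫⁻ x, heatPotential (μ ∗ ν) (t / 2) x ^ 2
      ≤ ∫⁻ x, ∫⁻ b, heatPotential μ (t / 2) (x - b) ^ 2 ∂ν := by
        gcongr with x
        rw [heatPotential_conv]
        exact sq_lintegral_le_lintegral_sq (by fun_prop)
    _ = ∫⁻ b, ∫⁻ x, heatPotential μ (t / 2) (x - b) ^ 2 ∂volume ∂ν :=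
        lintegral_lintegral_swap (Measurable.aemeasurable (by fun_prop))
    _ = ∫⁻ x, heatPotential μ (t / 2) x ^ 2 := by
        simp_rw [lintegral_sub_right_eq_self (fun x => heatPotential μ (t / 2) x ^ 2)]
        simp

lemma rieszEnergy_conv_le [SFinite μ] [IsProbabilityMeasure ν] (hα : α < finrank ℝ V) :
    rieszEnergy α (μ ∗ ν) ≤ rieszEnergy α μ := by
  refine (ENNReal.mul_le_mul_iff_right (by simpa using rieszConst_pos hα)
    ENNReal.ofReal_ne_top).1 ?_
  rw [← lintegral_rpow_mul_heatEnergy hα, ← lintegral_rpow_mul_heatEnergy hα]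
  exact setLIntegral_mono_ae' measurableSet_Ioi (Eventually.of_forall fun t ht =>
    mul_le_mul_right (heatEnergy_conv_le ht) _)

lemma exists_mem_probDensities_rieszEnergy_le [IsProbabilityMeasure μ] (hα : α < finrank ℝ V)
    {F F' : Set V} {δ : ℝ} (hδ : 0 < δ) (hFF' : thickening δ F ⊆ F')
    (hμ : ∀ᵐ x ∂μ, x ∈ F) :
    ∃ m ∈ probDensities volume F', rieszEnergy α (densityMeasure m) ≤ rieszEnergy α μ := by
  have hB0 : volume (ball (0 : V) δ) ≠ 0 := (measure_ball_pos _ _ hδ).ne'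
  set ν : Measure V := ProbabilityTheory.cond volume (ball 0 δ) with hν
  have : IsProbabilityMeasure ν :=
    ProbabilityTheory.cond_isProbabilityMeasure_of_finite hB0 measure_ball_lt_top.ne
  have hνB : ∀ᵐ y ∂ν, y ∈ ball (0 : V) δ := ProbabilityTheory.ae_cond_mem measurableSet_ball
  have hνle : ν ≤ (volume (ball (0 : V) δ))⁻¹ • volume := by
    rw [hν, ProbabilityTheory.cond]
    gcongr
    exact Measure.restrict_le_self
  have hF' : ∀ᵐ z ∂(μ ∗ ν), z ∈ F' := by
    refine ((ae_map_iff (by fun_prop) isOpen_thickening.measurableSet).2 ?_).mono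
      fun z hz => hFF' hz
    filter_upwards [Measure.quasiMeasurePreserving_fst.ae hμ,
      Measure.quasiMeasurePreserving_snd.ae hνB] with p hp1 hp2
    exact mem_thickening_iff.2 ⟨p.1, hp1, by simpa [dist_eq_norm] using hp2⟩
  obtain ⟨m, hm, hmeq⟩ := exists_mem_probDensities_densityMeasure_eq (ENNReal.inv_ne_top.2 hB0)
    (conv_le_smul_of_le_smul (μ := μ) hνle) hF'
  exact ⟨m, hm, hmeq ▸ rieszEnergy_conv_le hα⟩

end Smoothing

/-! ### Isometries and polarization -/

section Polarization

variable {V : Type*} [NormedAddCommGroup V] [InnerProductSpace ℝ V]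

section Isometries

variable [MeasurableSpace V] [BorelSpace V] [FiniteDimensional ℝ V]

lemma measurePreserving_affineIsometryEquiv (e : V ≃ᵃⁱ[ℝ] V) :
    MeasurePreserving e volume volume := by
  have h : ⇑e = (e.linearIsometryEquiv · + e 0) := by
    funext x
    simpa using e.map_vadd 0 x
  rw [h]
  exact (measurePreserving_add_right volume (e 0)).comp e.linearIsometryEquiv.measurePreserving

lemma HeatDominates.preimage (e : V ≃ᵃⁱ[ℝ] V) (E : Set V) : HeatDominates E (e ⁻¹' E) := by
  intro f hf
  have he := measurePreserving_affineIsometryEquiv e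
  have hcoe := Lp.coeFn_compMeasurePreserving f he
  refine ⟨Lp.compMeasurePreserving e he f, ?_, (Lp.norm_compMeasurePreserving f he).le,
    fun t ht => le_of_eq ?_⟩
  · filter_upwards [hcoe, he.quasiMeasurePreserving.ae hf] with x hx hfx hxE
    rw [hx]
    exact hfx hxE
  · have hemb := e.toHomeomorph.measurableEmbedding
    rw [inner_heatOp ht, inner_heatOp ht, ← (he.prod he).integral_comp (hemb.prodMap hemb)]
    refine integral_congr_ae ?_
    filter_upwards [Measure.quasiMeasurePreserving_fst.ae_eq_comp hcoe,
      Measure.quasiMeasurePreserving_snd.ae_eq_comp hcoe] with p h₁ h₂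
    simp only [Function.comp_apply] at h₁ h₂
    simp only [h₁, h₂, Prod.map_fst, Prod.map_snd, heatKernel_sub_congr (e.dist_map p.1 p.2)]

end Isometries

/-- The reflection in the hyperplane orthogonal to `v`. -/
def hyperplaneReflection (v : V) : V ≃ₗᵢ[ℝ] V := (ℝ ∙ v)ᗮ.reflection

variable {v : V}

lemma hyperplaneReflection_apply (v x : V) :
    hyperplaneReflection v x = x - (2 * ⟪v, x⟫ / ‖v‖ ^ 2) • v := by
  rw [hyperplaneReflection, Submodule.reflection_orthogonal_apply,
    Submodule.reflection_singleton_apply, neg_sub, mul_div_assoc, mul_smul, ofNat_smul_eq_nsmul ℝ,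
    RCLike.ofReal_real_eq_id, id]

@[simp] lemma hyperplaneReflection_hyperplaneReflection (v x : V) :
    hyperplaneReflection v (hyperplaneReflection v x) = x :=
  Submodule.reflection_reflection _ x

lemma inner_hyperplaneReflection (v x : V) : ⟪v, hyperplaneReflection v x⟫ = -⟪v, x⟫ := by
  rw [← (hyperplaneReflection v).inner_map_map, hyperplaneReflection_hyperplaneReflection,
    hyperplaneReflection, Submodule.reflection_orthogonalComplement_singleton_eq_neg,
    inner_neg_left]

lemma hyperplaneReflection_eq_self {x : V} (hx : ⟪v, x⟫ = 0) : hyperplaneReflection v x = x := by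
  simp [hyperplaneReflection_apply, hx]

lemma norm_sub_le_norm_sub_hyperplaneReflection {x y : V} (hx : ⟪v, x⟫ ≤ 0) (hy : ⟪v, y⟫ ≤ 0) :
    ‖x - y‖ ≤ ‖x - hyperplaneReflection v y‖ := by
  rcases eq_or_ne v 0 with rfl | hv
  · simp [hyperplaneReflection_apply]
  have hsub : x - hyperplaneReflection v y = (x - y) + (2 * ⟪v, y⟫ / ‖v‖ ^ 2) • v := by
    rw [hyperplaneReflection_apply]
    abel
  have hsq : ‖x - hyperplaneReflection v y‖ ^ 2 =
      ‖x - y‖ ^ 2 + 4 * (⟪v, x⟫ * ⟪v, y⟫) / ‖v‖ ^ 2 := by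
    rw [hsub, norm_add_sq_real, norm_smul, mul_pow, inner_smul_right, inner_sub_left,
      real_inner_comm v x, real_inner_comm v y, Real.norm_eq_abs, sq_abs]
    field_simp
    ring
  refine le_of_sq_le_sq ?_ (norm_nonneg _)
  rw [hsq]
  have := mul_nonneg_of_nonpos_of_nonpos hx hy
  exact le_add_of_nonneg_right (by positivity)

lemma heatKernel_sub_hyperplaneReflection_le {t : ℝ} (ht : 0 < t) {x y : V} (hx : ⟪v, x⟫ ≤ 0)
    (hy : ⟪v, y⟫ ≤ 0) : heatKernel t (x - hyperplaneReflection v y) ≤ heatKernel t (x - y) :=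
  heatKernel_le_of_norm_le ht (norm_sub_le_norm_sub_hyperplaneReflection hx hy)

/-- The two-point rearrangement of `f` towards the half-space `⟪v, x⟫ ≤ 0`: the larger of the
values of `f` at two mirror points goes to the point in that half-space. -/
def polarization (v : V) (f : V → ℝ) (x : V) : ℝ :=
  if ⟪v, x⟫ ≤ 0 then max (f x) (f (hyperplaneReflection v x))
  else min (f x) (f (hyperplaneReflection v x))

lemma polarization_of_nonpos (f : V → ℝ) {x : V} (hx : ⟪v, x⟫ ≤ 0) :
    polarization v f x = max (f x) (f (hyperplaneReflection v x)) :=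
  if_pos hx

lemma polarization_hyperplaneReflection (f : V → ℝ) {x : V} (hx : ⟪v, x⟫ ≤ 0) :
    polarization v f (hyperplaneReflection v x) =
      min (f x) (f (hyperplaneReflection v x)) := by
  rcases hx.eq_or_lt with h0 | h0
  · simp [polarization, hyperplaneReflection_eq_self h0]
  · rw [polarization, if_neg (by simpa [inner_hyperplaneReflection] using h0),
      hyperplaneReflection_hyperplaneReflection, min_comm]

lemma inner_nonpos_or (v x : V) : ⟪v, x⟫ ≤ 0 ∨ ⟪v, hyperplaneReflection v x⟫ ≤ 0 := by
  rw [inner_hyperplaneReflection, neg_nonpos]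
  exact le_total _ _

lemma polarization_sq_add (v : V) (f : V → ℝ) (x : V) :
    polarization v f x ^ 2 + polarization v f (hyperplaneReflection v x) ^ 2 =
      f x ^ 2 + f (hyperplaneReflection v x) ^ 2 := by
  wlog hx : ⟪v, x⟫ ≤ 0 generalizing x
  · have h := this _ ((inner_nonpos_or v x).resolve_left hx)
    rwa [hyperplaneReflection_hyperplaneReflection, add_comm, add_comm (f _ ^ 2)] at h
  rw [polarization_of_nonpos f hx, polarization_hyperplaneReflection f hx]
  rcases le_total (f x) (f (hyperplaneReflection v x)) with h | h
  · rw [max_eq_right h, min_eq_left h, add_comm]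
  · rw [max_eq_left h, min_eq_right h]

lemma two_point_rearrangement {a b : ℝ} (hab : b ≤ a) (p q r s : ℝ) :
    a * (p * r) + a * (q * s) + b * (p * s) + b * (q * r) ≤
      a * (max p q * max r s) + a * (min p q * min r s) + b * (max p q * min r s) +
        b * (min p q * max r s) := by
  rcases le_total p q with h | h <;> rcases le_total r s with h' | h' <;>
    simp only [max_eq_left, max_eq_right, min_eq_left, min_eq_right, h, h'] <;>
    nlinarith [mul_nonneg (sub_nonneg.2 hab) (mul_nonneg (sub_nonneg.2 h) (sub_nonneg.2 h'))]

/-- The integrand of the quadratic form `⟪f, heatOp t f⟫`. -/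
def heatIntegrand (t : ℝ) (f : V → ℝ) (p : V × V) : ℝ :=
  heatKernel t (p.1 - p.2) * (f p.1 * f p.2)

/-- The sum of `Φ` over the four pairs obtained by reflecting either entry of `p`. -/
def reflectionSum (v : V) (Φ : V × V → ℝ) (p : V × V) : ℝ :=
  Φ p + Φ (hyperplaneReflection v p.1, hyperplaneReflection v p.2) +
    Φ (p.1, hyperplaneReflection v p.2) + Φ (hyperplaneReflection v p.1, p.2)

lemma reflectionSum_fst (v : V) (Φ : V × V → ℝ) (x y : V) :
    reflectionSum v Φ (hyperplaneReflection v x, y) = reflectionSum v Φ (x, y) := by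
  simp only [reflectionSum, hyperplaneReflection_hyperplaneReflection]
  ring

lemma reflectionSum_snd (v : V) (Φ : V × V → ℝ) (x y : V) :
    reflectionSum v Φ (x, hyperplaneReflection v y) = reflectionSum v Φ (x, y) := by
  simp only [reflectionSum, hyperplaneReflection_hyperplaneReflection]
  ring

lemma reflectionSum_heatIntegrand_le {t : ℝ} (ht : 0 < t) (v : V) (f : V → ℝ) (x y : V) :
    reflectionSum v (heatIntegrand t f) (x, y) ≤
      reflectionSum v (heatIntegrand t (polarization v f)) (x, y) := by
  wlog hx : ⟪v, x⟫ ≤ 0 generalizing x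
  · simpa only [reflectionSum_fst] using this _ ((inner_nonpos_or v x).resolve_left hx)
  wlog hy : ⟪v, y⟫ ≤ 0 generalizing y
  · simpa only [reflectionSum_snd] using this _ ((inner_nonpos_or v y).resolve_left hy)
  have hboth : heatKernel t (hyperplaneReflection v x - hyperplaneReflection v y) =
      heatKernel t (x - y) :=
    heatKernel_sub_congr ((hyperplaneReflection v).dist_map x y)
  have hone : heatKernel t (hyperplaneReflection v x - y) =
      heatKernel t (x - hyperplaneReflection v y) := by
    refine heatKernel_sub_congr ?_
    rw [← (hyperplaneReflection v).dist_map, hyperplaneReflection_hyperplaneReflection]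
  simp only [reflectionSum, heatIntegrand, hboth, hone, polarization_of_nonpos f hx,
    polarization_of_nonpos f hy, polarization_hyperplaneReflection f hx,
    polarization_hyperplaneReflection f hy]
  exact two_point_rearrangement (heatKernel_sub_hyperplaneReflection_le ht hx hy) _ _ _ _

variable [MeasurableSpace V] [BorelSpace V]

lemma measurableEmbedding_hyperplaneReflection (v : V) :
    MeasurableEmbedding (hyperplaneReflection v) :=
  (hyperplaneReflection v).toHomeomorph.measurableEmbedding

variable [FiniteDimensional ℝ V]

lemma measurePreserving_hyperplaneReflection (v : V) :
    MeasurePreserving (hyperplaneReflection v) volume volume :=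
  (hyperplaneReflection v).measurePreserving

lemma integrable_reflectionSum (v : V) {Φ : V × V → ℝ} (hΦ : Integrable Φ (volume.prod volume)) :
    Integrable (reflectionSum v Φ) (volume.prod volume) := by
  have hσ := measurePreserving_hyperplaneReflection v
  have hid := MeasurePreserving.id (volume : Measure V)
  exact ((hΦ.add ((hσ.prod hσ).integrable_comp_of_integrable hΦ)).add
    ((hid.prod hσ).integrable_comp_of_integrable hΦ)).add
    ((hσ.prod hid).integrable_comp_of_integrable hΦ)

lemma integral_reflectionSum (v : V) {Φ : V × V → ℝ} (hΦ : Integrable Φ (volume.prod volume)) :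
    ∫ p, reflectionSum v Φ p ∂(volume.prod volume) = 4 * ∫ p, Φ p ∂(volume.prod volume) := by
  have hσ := measurePreserving_hyperplaneReflection v
  have hσe := measurableEmbedding_hyperplaneReflection v
  have hid := MeasurePreserving.id (volume : Measure V)
  have i₁ := (hσ.prod hσ).integrable_comp_of_integrable hΦ
  have i₂ := (hid.prod hσ).integrable_comp_of_integrable hΦ
  have i₃ := (hσ.prod hid).integrable_comp_of_integrable hΦ
  have e₁ := (hσ.prod hσ).integral_comp (hσe.prodMap hσe) Φ
  have e₂ := (hid.prod hσ).integral_comp (MeasurableEmbedding.id.prodMap hσe) Φ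
  have e₃ := (hσ.prod hid).integral_comp (hσe.prodMap MeasurableEmbedding.id) Φ
  refine (integral_add ((hΦ.add i₁).add i₂) i₃).trans ?_
  rw [integral_add' (hΦ.add i₁) i₂, integral_add' hΦ i₁]
  simp only [Function.comp_apply]
  linarith

lemma memLp_polarization (v : V) {f : V → ℝ} (hf : MemLp f 2 volume) :
    MemLp (polarization v f) 2 volume := by
  have hfσ := hf.comp_measurePreserving (measurePreserving_hyperplaneReflection v)
  have hs : MeasurableSet {x : V | ⟪v, x⟫ ≤ 0} := measurableSet_le (by fun_prop) measurable_const
  refine (((hf.sup hfσ).indicator hs).add ((hf.inf hfσ).indicator hs.compl)).ae_eq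
    (Eventually.of_forall fun x => ?_)
  by_cases hx : ⟪v, x⟫ ≤ 0 <;> simp [polarization, hx, indicator]

lemma integral_polarization_sq (v : V) {f : V → ℝ} (hf : MemLp f 2 volume) :
    ∫ x, polarization v f x ^ 2 = ∫ x, f x ^ 2 := by
  have hσ := measurePreserving_hyperplaneReflection v
  have hsymm {k : V → ℝ} (hk : MemLp k 2 volume) :
      ∫ x, (k x ^ 2 + k (hyperplaneReflection v x) ^ 2) = (∫ x, k x ^ 2) + ∫ x, k x ^ 2 := by
    refine (integral_add hk.integrable_sq
      (hσ.integrable_comp_of_integrable hk.integrable_sq)).trans (congrArg (_ + ·) ?_)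
    exact hσ.integral_comp (measurableEmbedding_hyperplaneReflection v) (fun x => k x ^ 2)
  have h := hsymm (memLp_polarization v hf)
  simp_rw [polarization_sq_add, hsymm hf] at h
  linarith

lemma norm_toLp_polarization (v : V) (f : LTwo V) :
    ‖(memLp_polarization v (Lp.memLp f)).toLp‖ = ‖f‖ := by
  refine (sq_eq_sq₀ (norm_nonneg _) (norm_nonneg _)).1 ?_
  rw [← real_inner_self_eq_norm_sq, ← real_inner_self_eq_norm_sq, real_inner_eq_integral_mul,
    real_inner_eq_integral_mul]
  simp only [← pow_two]
  rw [← integral_polarization_sq v (Lp.memLp f)]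
  refine integral_congr_ae ?_
  filter_upwards [(memLp_polarization v (Lp.memLp f)).coeFn_toLp] with x hx
  rw [hx]

lemma inner_heatOp_toLp {t : ℝ} (ht : 0 < t) {f : V → ℝ} (hf : MemLp f 2 volume) :
    ⟪hf.toLp f, heatOp t (hf.toLp f)⟫ = ∫ p, heatIntegrand t f p ∂(volume.prod volume) := by
  rw [inner_heatOp ht]
  refine integral_congr_ae ?_
  filter_upwards [Measure.quasiMeasurePreserving_fst.ae_eq_comp hf.coeFn_toLp,
    Measure.quasiMeasurePreserving_snd.ae_eq_comp hf.coeFn_toLp] with p h₁ h₂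
  simp only [Function.comp_apply] at h₁ h₂
  rw [h₁, h₂, heatIntegrand]

lemma inner_heatOp_le_polarization {t : ℝ} (ht : 0 < t) (v : V) (f : LTwo V) :
    ⟪f, heatOp t f⟫ ≤ ⟪(memLp_polarization v (Lp.memLp f)).toLp,
      heatOp t (memLp_polarization v (Lp.memLp f)).toLp⟫ := by
  have hf := Lp.memLp f
  have hp := memLp_polarization v hf
  have hfi : Integrable (heatIntegrand t f) (volume.prod volume) :=
    integrable_heatKernel_sub_mul ht hf hf
  have hpi : Integrable (heatIntegrand t (polarization v f)) (volume.prod volume) :=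
    integrable_heatKernel_sub_mul ht hp hp
  rw [inner_heatOp_toLp ht, inner_heatOp ht]
  refine le_of_mul_le_mul_left (a := (4 : ℝ)) ?_ four_pos
  rw [← integral_reflectionSum v hpi]
  refine (integral_reflectionSum v hfi).symm.trans_le ?_
  exact integral_mono (integrable_reflectionSum v hfi) (integrable_reflectionSum v hpi)
    fun p => reflectionSum_heatIntegrand_le ht v f p.1 p.2

theorem HeatDominates.of_polarization (v : V) {E F : Set V}
    (hF : ∀ x ∈ F, ⟪v, x⟫ ≤ 0 → x ∈ E ∨ hyperplaneReflection v x ∈ E)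
    (hF' : ∀ x ∈ F, 0 < ⟪v, x⟫ → x ∈ E ∧ hyperplaneReflection v x ∈ E) : HeatDominates E F := by
  intro f hf
  have hp := memLp_polarization v (Lp.memLp f)
  have hσ := (measurePreserving_hyperplaneReflection v).quasiMeasurePreserving
  refine ⟨hp.toLp, ?_, (norm_toLp_polarization v f).le,
    fun t ht => inner_heatOp_le_polarization ht v f⟩
  filter_upwards [hp.coeFn_toLp, hf, hσ.ae hf] with x hx hfx hfσx hxF
  rw [hx, polarization]
  split_ifs with h
  · exact le_max_iff.2 ((hF x hxF h).imp hfx hfσx)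
  · exact le_min_iff.2 ((hF' x hxF (not_le.1 h)).imp hfx hfσx)

end Polarization

/-! ### Plane sets described by their horizontal sections -/

section Plane

lemma plane_ext {x y : E2} (h0 : x 0 = y 0) (h1 : x 1 = y 1) : x = y := by
  ext i
  fin_cases i
  exacts [h0, h1]

lemma plane_norm_sq (x : E2) : ‖x‖ ^ 2 = x 0 ^ 2 + x 1 ^ 2 := by
  simp [EuclideanSpace.norm_sq_eq, Fin.sum_univ_two]

/-- The reflection exchanging the two coordinates. -/
def swapAxes : E2 ≃ₗᵢ[ℝ] E2 := LinearIsometryEquiv.piLpCongrLeft 2 ℝ ℝ (Equiv.swap 0 1)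

@[simp] lemma swapAxes_zero (x : E2) : swapAxes x 0 = x 1 := rfl

@[simp] lemma swapAxes_one (x : E2) : swapAxes x 1 = x 0 := rfl

/-- The set whose horizontal section at height `y` has centre `c y` and half-width `ρ y`; the
section is empty when `ρ y < 0`. -/
def fiberSet (c ρ : ℝ → ℝ) : Set E2 := {x | |x 0 - c (x 1)| ≤ ρ (x 1)}

lemma mem_fiberSet {c ρ : ℝ → ℝ} {x : E2} : x ∈ fiberSet c ρ ↔ |x 0 - c (x 1)| ≤ ρ (x 1) :=
  Iff.rfl

lemma neg_mem_fiberSet {c ρ : ℝ → ℝ} (hc : ∀ y, c (-y) = -c y) (hρ : ∀ y, ρ (-y) = ρ y) {x : E2} :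
    -x ∈ fiberSet c ρ ↔ x ∈ fiberSet c ρ := by
  rw [mem_fiberSet, mem_fiberSet, PiLp.neg_apply, PiLp.neg_apply, hc, hρ, ← neg_add', abs_neg,
    sub_eq_add_neg]

lemma volume_fiberSet {c ρ : ℝ → ℝ} (hc : Measurable c) (hρ : Measurable ρ) :
    volume (fiberSet c ρ) = ∫⁻ y, ENNReal.ofReal (2 * ρ y) := by
  have hcoords : MeasurePreserving (fun x : E2 => (x 1, x 0)) volume volume :=
    (Measure.measurePreserving_swap (μ := (volume : Measure ℝ)) (ν := volume)).comp
      ((volume_preserving_finTwoArrow ℝ).comp (PiLp.volume_preserving_ofLp (Fin 2)))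
  have hS : MeasurableSet {p : ℝ × ℝ | |p.2 - c p.1| ≤ ρ p.1} :=
    measurableSet_le (by fun_prop) (by fun_prop)
  refine (hcoords.measure_preimage hS.nullMeasurableSet).trans ?_
  rw [Measure.volume_eq_prod, Measure.prod_apply hS]
  refine lintegral_congr fun y => ?_
  have hsection : Prod.mk y ⁻¹' {p : ℝ × ℝ | |p.2 - c p.1| ≤ ρ p.1} =
      closedBall (c y) (ρ y) := by
    ext x
    simp [Real.dist_eq]
  rw [hsection, Real.volume_closedBall]

lemma hyperplaneReflection_single_apply (x : E2) :
    hyperplaneReflection (EuclideanSpace.single 0 1) x = !₂[-x 0, x 1] := by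
  refine plane_ext ?_ ?_ <;> simp [hyperplaneReflection_apply, EuclideanSpace.inner_single_left]
  ring

lemma HeatDominates.fiberSet_fold (c ρ : ℝ → ℝ) :
    HeatDominates (fiberSet c ρ) (fiberSet (fun y => -|c y|) ρ) := by
  refine HeatDominates.of_polarization (EuclideanSpace.single 0 1) ?_ ?_
  all_goals
    intro x hxF hx
    simp only [EuclideanSpace.inner_single_left, map_one, one_mul] at hx
    simp only [mem_fiberSet, hyperplaneReflection_single_apply, Matrix.cons_val, abs_le] at hxF ⊢
  · rcases abs_cases (c (x 1)) with ⟨h, hc⟩ | ⟨h, hc⟩ <;> rw [h] at hxF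
    · exact Or.inr ⟨by linarith, by linarith⟩
    · exact Or.inl ⟨by linarith, by linarith⟩
  · rcases abs_cases (c (x 1)) with ⟨h, hc⟩ | ⟨h, hc⟩ <;> rw [h] at hxF <;>
      exact ⟨⟨by linarith, by linarith⟩, ⟨by linarith, by linarith⟩⟩

lemma HeatDominates.fiberSet_translate (c ρ : ℝ → ℝ) (s : ℝ) :
    HeatDominates (fiberSet c ρ) (fiberSet (fun y => c y + s) ρ) := by
  have h := HeatDominates.preimage
    (AffineIsometryEquiv.constVAdd ℝ E2 (EuclideanSpace.single 0 (-s))) (fiberSet c ρ)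
  convert h using 1
  ext x
  simp [mem_fiberSet, sub_add_eq_sub_sub, neg_add_eq_sub, sub_right_comm]

lemma HeatDominates.exists_fiberSet_small {c : ℝ → ℝ} {M : ℝ} (hc : ∀ y, |c y| ≤ M) (ρ : ℝ → ℝ)
    (n : ℕ) : ∃ c' : ℝ → ℝ, (∀ y, |c' y| ≤ M / 2 ^ n) ∧
      HeatDominates (fiberSet c ρ) (fiberSet c' ρ) := by
  induction n with
  | zero => exact ⟨c, by simpa using hc, HeatDominates.of_subset subset_rfl⟩
  | succ n ih =>
    obtain ⟨c', hc', hdom⟩ := ih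
    refine ⟨_, fun y => ?_, (hdom.trans (HeatDominates.fiberSet_fold c' ρ)).trans
      (HeatDominates.fiberSet_translate _ ρ (M / 2 ^ n / 2))⟩
    have := hc' y
    have := abs_nonneg (c' y)
    rw [pow_succ, ← div_div, abs_le]
    constructor <;> linarith

/-- Folding about a vertical line and recentring halves the bound on the centres, so that the
sections are centred up to `ε` after finitely many polarizations. -/
theorem HeatDominates.fiberSet_steiner {c : ℝ → ℝ} {M : ℝ} (hc : ∀ y, |c y| ≤ M) (ρ : ℝ → ℝ)
    {ε : ℝ} (hε : 0 < ε) : HeatDominates (fiberSet c ρ) (fiberSet 0 fun y => ρ y - ε) := by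
  obtain ⟨n, hn⟩ := ((tendsto_const_nhds (x := M)).div_atTop
    (tendsto_pow_atTop_atTop_of_one_lt (one_lt_two (α := ℝ)))).eventually_lt_const hε |>.exists
  obtain ⟨c', hc', hdom⟩ := HeatDominates.exists_fiberSet_small hc ρ n
  refine hdom.trans (HeatDominates.of_subset fun x hx => ?_)
  simp only [mem_fiberSet, Pi.zero_apply, sub_zero] at hx ⊢
  have := abs_sub (x 0) (c' (x 1))
  have := hc' (x 1)
  linarith

end Plane

section HexSet

/-- The hexagon with vertices `(±a, ±b)` and `(0, ±(b + h))`. -/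
def hexSet (a b h : ℝ) : Set E2 := {x | |x 0| ≤ a ∧ h * |x 0| ≤ a * (b + h - |x 1|)}

/-- The half-width of `hexSet a b h` at height `y`, with the value `-1` where the section is
empty. -/
def hexWidth (a b h y : ℝ) : ℝ :=
  if |y| ≤ b then a else if |y| ≤ b + h then a * (b + h - |y|) / h else -1

lemma hexWidth_neg (a b h y : ℝ) : hexWidth a b h (-y) = hexWidth a b h y := by
  simp [hexWidth]

lemma measurable_hexWidth (a b h : ℝ) : Measurable (hexWidth a b h) := by
  unfold hexWidth
  exact Measurable.ite (measurableSet_le (by fun_prop) measurable_const) measurable_const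
    (Measurable.ite (measurableSet_le (by fun_prop) measurable_const) (by fun_prop)
      measurable_const)

variable {a b h : ℝ}

lemma hexSet_eq_fiberSet (ha : 0 < a) (hh : 0 ≤ h) :
    hexSet a b h = fiberSet 0 (hexWidth a b h) := by
  ext x
  simp only [hexSet, mem_fiberSet, hexWidth, mem_ofPred_eq, Pi.zero_apply, sub_zero]
  split_ifs with hband hcap
  · refine ⟨And.left, fun hx => ⟨hx, ?_⟩⟩
    nlinarith [mul_nonneg hh (sub_nonneg.2 hx)]
  · have hpos : 0 < h := by linarith
    rw [le_div_iff₀ hpos, mul_comm |x 0| h]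
    refine ⟨And.right, fun hx => ⟨?_, hx⟩⟩
    nlinarith
  · refine ⟨fun hx => ?_, fun hx => ?_⟩
    · nlinarith [mul_nonneg hh (abs_nonneg (x 0))]
    · linarith [abs_nonneg (x 0)]

/-- The half-height of `hexSet a b h` at abscissa `x`, with the value `-1` where the section is
empty. -/
def hexHeight (a b h x : ℝ) : ℝ := if |x| ≤ a then b + h - h * |x| / a else -1

lemma measurable_hexHeight (a b h : ℝ) : Measurable (hexHeight a b h) := by
  unfold hexHeight
  exact Measurable.ite (measurableSet_le (by fun_prop) measurable_const) (by fun_prop)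
    measurable_const

lemma swapAxes_preimage_fiberSet_hexHeight (ha : 0 < a) :
    swapAxes ⁻¹' fiberSet 0 (hexHeight a b h) = hexSet a b h := by
  ext x
  change |x 1 - 0| ≤ hexHeight a b h (x 0) ↔ |x 0| ≤ a ∧ h * |x 0| ≤ a * (b + h - |x 1|)
  rw [sub_zero, hexHeight]
  split_ifs with hx
  · rw [le_sub_comm, div_le_iff₀ ha, mul_comm a]
    exact (and_iff_right hx).symm
  · exact iff_of_false (fun h => by linarith [abs_nonneg (x 1)]) fun h => hx h.1

lemma integral_abs_neg_self (ha : 0 ≤ a) : ∫ x in (-a)..a, |x| = a ^ 2 := by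
  have hpos : ∫ x in (0 : ℝ)..a, |x| = a ^ 2 / 2 := by
    rw [intervalIntegral.integral_congr (g := fun x => x), integral_id, zero_pow two_ne_zero,
      sub_zero]
    intro x hx
    rw [uIcc_of_le ha] at hx
    exact abs_of_nonneg hx.1
  have hneg : ∫ x in (-a)..0, |x| = ∫ x in (0 : ℝ)..a, |x| := by
    simpa using (intervalIntegral.integral_comp_neg (a := 0) (b := a) (fun x : ℝ => |x|)).symm
  rw [← intervalIntegral.integral_add_adjacent_intervals (b := 0)
    (continuous_abs.intervalIntegrable _ _) (continuous_abs.intervalIntegrable _ _), hneg, hpos,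
    add_halves]

lemma integral_hexHeight (ha : 0 < a) :
    ∫ x in Icc (-a) a, 2 * (b + h - h * |x| / a) = 4 * a * b + 2 * a * h := by
  rw [integral_Icc_eq_integral_Ioc, ← intervalIntegral.integral_of_le (by linarith),
    intervalIntegral.integral_const_mul, intervalIntegral.integral_sub (by simp)
      (Continuous.intervalIntegrable (by fun_prop) _ _), intervalIntegral.integral_div,
    intervalIntegral.integral_const_mul, integral_abs_neg_self ha.le,
    intervalIntegral.integral_const, smul_eq_mul]
  field_simp
  ring

lemma volume_hexSet (ha : 0 < a) (hb : 0 ≤ b) (hh : 0 ≤ h) :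
    volume (hexSet a b h) = ENNReal.ofReal (4 * a * b + 2 * a * h) := by
  have hind : ∀ x, ENNReal.ofReal (2 * hexHeight a b h x) =
      (Icc (-a) a).indicator (fun x => ENNReal.ofReal (2 * (b + h - h * |x| / a))) x := by
    intro x
    by_cases hx : |x| ≤ a
    · rw [indicator_of_mem (mem_Icc.2 (abs_le.1 hx)), hexHeight, if_pos hx]
    · rw [indicator_of_notMem fun hmem : x ∈ Icc (-a) a => hx (abs_le.2 hmem), hexHeight, if_neg hx,
        ENNReal.ofReal_of_nonpos (by norm_num)]
  rw [← swapAxes_preimage_fiberSet_hexHeight ha,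
    swapAxes.measurePreserving.measure_preimage_emb swapAxes.toHomeomorph.measurableEmbedding,
    volume_fiberSet measurable_zero (measurable_hexHeight a b h)]
  simp_rw [hind]
  rw [lintegral_indicator measurableSet_Icc, ← integral_hexHeight ha,
    ofReal_integral_eq_lintegral_ofReal (Continuous.integrableOn_Icc (by fun_prop))]
  refine (ae_restrict_iff' measurableSet_Icc).2 (Eventually.of_forall fun x hx => ?_)
  have : h * |x| / a ≤ h := (div_le_iff₀ ha).2 (by gcongr; exact abs_le.2 hx)
  simp only [Pi.zero_apply]
  linarith

lemma volume_fiberSet_hexWidth (ha : 0 < a) (hb : 0 ≤ b) (hh : 0 ≤ h) {c : ℝ → ℝ}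
    (hc : Measurable c) :
    volume (fiberSet c (hexWidth a b h)) = ENNReal.ofReal (4 * a * b + 2 * a * h) := by
  rw [← volume_hexSet ha hb hh, hexSet_eq_fiberSet ha hh,
    volume_fiberSet hc (measurable_hexWidth a b h),
    volume_fiberSet measurable_zero (measurable_hexWidth a b h)]

lemma hexSet_scale_subset (ha : 0 < a) (hb : 0 ≤ b) (hh : 0 ≤ h) {θ : ℝ} (hθ : 0 < θ)
    (hθ1 : θ < 1) : hexSet (θ * a) (θ * b) (θ * h) ⊆
      fiberSet 0 fun y => hexWidth a b h y - (1 - θ) * a := by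
  rintro x ⟨hx, hslope⟩
  have hslope' : h * |x 0| ≤ a * (θ * (b + h) - |x 1|) := by
    refine le_of_mul_le_mul_left ?_ hθ
    linarith
  have hheight : |x 1| ≤ θ * (b + h) := by
    by_contra! hc
    nlinarith [mul_nonneg hh (abs_nonneg (x 0)), mul_pos ha (sub_pos.2 hc)]
  simp only [mem_fiberSet, hexWidth, Pi.zero_apply, sub_zero]
  split_ifs with hband hcap
  · linarith
  · have hpos : 0 < h := by linarith
    rw [le_sub_iff_add_le, le_div_iff₀ hpos]
    have := mul_nonneg (mul_nonneg (sub_nonneg.2 hθ1.le) ha.le) hb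
    nlinarith
  · exfalso
    nlinarith [abs_nonneg (x 1)]

end HexSet

/-! ### Centrally symmetric hexagons -/

/-- The centrally symmetric hexagon with centre `0` spanned by three of its vertices. -/
def symmHull (p q r : E2) : Set E2 := convexHull ℝ {p, q, r, -p, -q, -r}

lemma convex_symmHull (p q r : E2) : Convex ℝ (symmHull p q r) := convex_convexHull ℝ _

lemma mem_symmHull (p q r : E2) :
    p ∈ symmHull p q r ∧ q ∈ symmHull p q r ∧ r ∈ symmHull p q r := by
  refine ⟨?_, ?_, ?_⟩ <;> exact subset_convexHull ℝ _ (by simp)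

lemma neg_mem_symmHull {p q r x : E2} (hx : x ∈ symmHull p q r) : -x ∈ symmHull p q r := by
  rw [← Set.mem_neg]
  refine convexHull_min ?_ (convex_symmHull p q r).neg hx
  rintro x (rfl | rfl | rfl | rfl | rfl | rfl) <;> rw [Set.mem_neg] <;>
    exact subset_convexHull ℝ _ (by simp)

lemma symmHull_subset {p q r : E2} {C : Set E2} (hC : Convex ℝ C) (hsymm : ∀ x ∈ C, -x ∈ C)
    (hp : p ∈ C) (hq : q ∈ C) (hr : r ∈ C) : symmHull p q r ⊆ C := by
  refine convexHull_min ?_ hC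
  rintro x (rfl | rfl | rfl | rfl | rfl | rfl)
  exacts [hp, hq, hr, hsymm _ hp, hsymm _ hq, hsymm _ hr]

lemma exists_mem_smul_eq_abs_smul {E : Type*} [AddCommGroup E] [Module ℝ E] {C : Set E}
    (hsymm : ∀ x ∈ C, -x ∈ C) {x : E} (hx : x ∈ C) (t : ℝ) : ∃ x' ∈ C, t • x = |t| • x' := by
  rcases abs_choice t with h | h
  · exact ⟨x, hx, by rw [h]⟩
  · exact ⟨-x, hsymm x hx, by rw [h, neg_smul_neg]⟩

lemma smul_add_smul_mem_of_convex_of_symm {E : Type*} [AddCommGroup E] [Module ℝ E] {C : Set E}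
    (hC : Convex ℝ C) (hsymm : ∀ x ∈ C, -x ∈ C) {p r : E} (hp : p ∈ C) (hr : r ∈ C) {s t : ℝ}
    (hst : |s| + |t| ≤ 1) : s • p + t • r ∈ C := by
  obtain ⟨p', hp', hs⟩ := exists_mem_smul_eq_abs_smul hsymm hp s
  obtain ⟨r', hr', ht⟩ := exists_mem_smul_eq_abs_smul hsymm hr t
  have hzero : (0 : E) ∈ C := by
    simpa using hC hp (hsymm p hp) (a := 1 / 2) (b := 1 / 2) (by norm_num) (by norm_num)
      (by norm_num)
  have hsum := hC.sum_mem (t := Finset.univ) (w := ![|s|, |t|, 1 - (|s| + |t|)])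
    (z := ![p', r', 0]) (by simp [Fin.forall_fin_succ, hst])
    (by simp [Fin.sum_univ_three]) (by simp [Fin.forall_fin_succ, hp', hr', hzero])
  simpa [Fin.sum_univ_three, hs, ht] using hsum

lemma abs_linear_le_of_mem_symmHull {p q r : E2} {u v B : ℝ} (hp : |u * p 0 + v * p 1| ≤ B)
    (hq : |u * q 0 + v * q 1| ≤ B) (hr : |u * r 0 + v * r 1| ≤ B) {x : E2}
    (hx : x ∈ symmHull p q r) : |u * x 0 + v * x 1| ≤ B := by
  let φ : E2 →ₗ[ℝ] ℝ := u • (EuclideanSpace.proj 0 : E2 →L[ℝ] ℝ).toLinearMap +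
    v • (EuclideanSpace.proj 1 : E2 →L[ℝ] ℝ).toLinearMap
  have hsub : symmHull p q r ⊆ φ ⁻¹' closedBall 0 B := by
    refine symmHull_subset ((convex_closedBall 0 B).linear_preimage φ) (fun x hx => ?_) ?_ ?_ ?_
    · simpa only [mem_preimage, map_neg, mem_closedBall_zero_iff, norm_neg] using hx
    all_goals simpa [φ]
  simpa [φ] using hsub hx

/-- The centre of the section at height `y` of the symmetric hexagon with vertices
`(m ± a, b)` and `(q, b + h)`; the factor `y / |y|` extends the upper cap to an odd function. -/
def hexCenter (m b q h y : ℝ) : ℝ :=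
  if |y| ≤ b then m * (y / b) else
    if |y| ≤ b + h then y / |y| * (((b + h - |y|) * m + (|y| - b) * q) / h) else 0

lemma hexCenter_neg (m b q h y : ℝ) : hexCenter m b q h (-y) = -hexCenter m b q h y := by
  simp only [hexCenter, abs_neg, neg_div, mul_neg, neg_mul]
  split_ifs <;> simp

lemma measurable_hexCenter (m b q h : ℝ) : Measurable (hexCenter m b q h) := by
  unfold hexCenter
  exact Measurable.ite (measurableSet_le (by fun_prop) measurable_const) (by fun_prop)
    (Measurable.ite (measurableSet_le (by fun_prop) measurable_const) (by fun_prop)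
      measurable_const)

section Aligned

variable {m a b q h : ℝ}

lemma abs_hexCenter_le (y : ℝ) : |hexCenter m b q h y| ≤ |m| + |q| := by
  unfold hexCenter
  split_ifs with hband hcap
  · rw [abs_mul, abs_div]
    have : |y| / |b| ≤ 1 := div_le_one_of_le₀ (hband.trans (le_abs_self b)) (abs_nonneg b)
    nlinarith [abs_nonneg m, abs_nonneg q]
  · have hh : 0 < h := by linarith
    have hsign : |(y / |y|)| ≤ 1 := by rw [abs_div, abs_abs]; exact div_self_le_one _
    have hcenter : |((b + h - |y|) * m + (|y| - b) * q) / h| ≤ |m| + |q| := by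
      rw [abs_div, abs_of_pos hh, div_le_iff₀ hh]
      refine (abs_add_le _ _).trans ?_
      rw [abs_mul, abs_mul, abs_of_nonneg (sub_nonneg.2 hcap),
        abs_of_pos (sub_pos.2 (not_le.1 hband))]
      nlinarith [abs_nonneg m, abs_nonneg q]
    rw [abs_mul]
    nlinarith [abs_nonneg m, abs_nonneg q, abs_nonneg (y / |y|)]
  · rw [abs_zero]
    positivity

lemma mem_symmHull_of_band (ha : 0 < a) (hb : 0 < b) {x : E2} (hx1 : |x 1| ≤ b)
    (hx0 : |x 0 - m * (x 1 / b)| ≤ a) : x ∈ symmHull !₂[m + a, b] !₂[q, b + h] !₂[m - a, b] := by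
  obtain ⟨hp, -, hr⟩ := mem_symmHull !₂[m + a, b] !₂[q, b + h] !₂[m - a, b]
  set l := x 1 / b with hl
  set t := (x 0 - m * l) / a with ht
  have hl1 : |l| ≤ 1 := by rw [hl, abs_div, abs_of_pos hb]; exact (div_le_one hb).2 hx1
  have ht1 : |t| ≤ 1 := by rw [ht, abs_div, abs_of_pos ha]; exact (div_le_one ha).2 hx0
  have hlt : |(l + t) / 2| + |(l - t) / 2| ≤ 1 := by grind
  have hx : x = ((l + t) / 2) • !₂[m + a, b] + ((l - t) / 2) • !₂[m - a, b] := by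
    refine plane_ext ?_ ?_
    · simp only [ht, PiLp.add_apply, PiLp.smul_apply, Matrix.cons_val_zero, smul_eq_mul]
      field_simp
      ring
    · simp only [hl, PiLp.add_apply, PiLp.smul_apply, Matrix.cons_val_one, Matrix.cons_val_fin_one,
        smul_eq_mul]
      field_simp
      ring
  rw [hx]
  exact smul_add_smul_mem_of_convex_of_symm (convex_symmHull _ _ _) (fun _ => neg_mem_symmHull)
    hp hr hlt

lemma mem_symmHull_of_cap (ha : 0 < a) (hh : 0 < h) {x : E2} (hbx : b ≤ x 1)
    (hx0 : |x 0 - ((b + h - x 1) * m + (x 1 - b) * q) / h| ≤ a * (b + h - x 1) / h) :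
    x ∈ symmHull !₂[m + a, b] !₂[q, b + h] !₂[m - a, b] := by
  obtain ⟨hp, hq, hr⟩ := mem_symmHull !₂[m + a, b] !₂[q, b + h] !₂[m - a, b]
  set l := (x 1 - b) / h with hl
  set t := (x 0 - ((1 - l) * m + l * q)) / a with ht
  have hl0 : 0 ≤ l := div_nonneg (sub_nonneg.2 hbx) hh.le
  have ht1 : |t| ≤ 1 - l := by
    have hcenter : (1 - l) * m + l * q = ((b + h - x 1) * m + (x 1 - b) * q) / h := by
      rw [hl]; field_simp; ring
    have hwidth : (1 - l) * a = a * (b + h - x 1) / h := by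
      rw [hl]; field_simp; ring
    rwa [ht, abs_div, abs_of_pos ha, div_le_iff₀ ha, hcenter, hwidth]
  have hx : x = ((1 - l + t) / 2) • !₂[m + a, b] + ((1 - l - t) / 2) • !₂[m - a, b] +
      l • !₂[q, b + h] := by
    refine plane_ext ?_ ?_
    · simp only [ht, PiLp.add_apply, PiLp.smul_apply, Matrix.cons_val_zero, smul_eq_mul]
      field_simp
      ring
    · simp only [hl, PiLp.add_apply, PiLp.smul_apply, Matrix.cons_val_one, Matrix.cons_val_fin_one,
        smul_eq_mul]
      field_simp
      ring
  rw [abs_le] at ht1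
  have hsum := (convex_symmHull !₂[m + a, b] !₂[q, b + h] !₂[m - a, b]).sum_mem (t := Finset.univ)
    (w := ![(1 - l + t) / 2, (1 - l - t) / 2, l])
    (z := ![!₂[m + a, b], !₂[m - a, b], !₂[q, b + h]])
    (by simp [Fin.forall_fin_succ, hl0]; constructor <;> linarith)
    (by simp [Fin.sum_univ_three]; ring) (by simp [Fin.forall_fin_succ, hp, hq, hr])
  rw [hx]
  simpa [Fin.sum_univ_three] using hsum

lemma fiberSet_subset_symmHull (ha : 0 < a) (hb : 0 < b) :
    fiberSet (hexCenter m b q h) (hexWidth a b h) ⊆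
      symmHull !₂[m + a, b] !₂[q, b + h] !₂[m - a, b] := by
  intro x hx
  wlog hx1 : 0 ≤ x 1 generalizing x
  · simpa using neg_mem_symmHull (this (x := -x)
      ((neg_mem_fiberSet (hexCenter_neg _ _ _ _) (hexWidth_neg _ _ _)).2 hx)
      (by simpa using (not_le.1 hx1).le))
  rw [mem_fiberSet, hexCenter, hexWidth] at hx
  split_ifs at hx with hband hcap
  · exact mem_symmHull_of_band ha hb hband hx
  · rw [abs_of_nonneg hx1] at hband hcap hx
    rw [div_self (by linarith), one_mul] at hx
    exact mem_symmHull_of_cap ha (by linarith) (by linarith) hx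
  · linarith [abs_nonneg (x 0 - 0)]

lemma symmHull_subset_fiberSet (ha : 0 < a) (hb : 0 < b) (hh : 0 ≤ h)
    (hq : |(b + h) * m - b * q| ≤ a * (b - h)) :
    symmHull !₂[m + a, b] !₂[q, b + h] !₂[m - a, b] ⊆
      fiberSet (hexCenter m b q h) (hexWidth a b h) := by
  intro x hx
  wlog hx1 : 0 ≤ x 1 generalizing x
  · exact (neg_mem_fiberSet (hexCenter_neg _ _ _ _) (hexWidth_neg _ _ _)).1
      (this (neg_mem_symmHull hx) (by simpa using (not_le.1 hx1).le))
  have hah := mul_nonneg ha.le hh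
  rw [abs_le] at hq
  have hheight : |0 * x 0 + 1 * x 1| ≤ b + h := by
    refine abs_linear_le_of_mem_symmHull ?_ ?_ ?_ hx <;>
      simp [abs_of_pos hb, abs_of_nonneg (add_nonneg hb.le hh), hh]
  have hslab : |b * x 0 + -m * x 1| ≤ a * b := by
    refine abs_linear_le_of_mem_symmHull ?_ ?_ ?_ hx <;> simp [abs_le] <;> constructor <;> linarith
  have hright : |h * x 0 + (m + a - q) * x 1| ≤ a * (b + h) + ((b + h) * m - b * q) := by
    refine abs_linear_le_of_mem_symmHull ?_ ?_ ?_ hx <;> simp [abs_le] <;> constructor <;> linarith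
  have hleft : |h * x 0 + (m - a - q) * x 1| ≤ a * (b + h) - ((b + h) * m - b * q) := by
    refine abs_linear_le_of_mem_symmHull ?_ ?_ ?_ hx <;> simp [abs_le] <;> constructor <;> linarith
  rw [zero_mul, zero_add, one_mul] at hheight
  rw [mem_fiberSet, hexCenter, hexWidth]
  split_ifs with hband
  · rw [show x 0 - m * (x 1 / b) = (b * x 0 + -m * x 1) / b by field_simp; ring, abs_div,
      abs_of_pos hb]
    exact (div_le_iff₀ hb).2 hslab
  · rw [abs_of_nonneg hx1] at hband hheight ⊢
    have hpos : 0 < h := by linarith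
    rw [div_self (by linarith), one_mul, le_div_iff₀ hpos, ← abs_of_pos hpos, ← abs_mul, sub_mul,
      abs_of_pos hpos, div_mul_cancel₀ _ hpos.ne', abs_le]
    constructor <;> linarith [abs_le.1 hright, abs_le.1 hleft]

lemma HeatDominates.symmHull_aligned (ha : 0 < a) (hb : 0 < b) (hh : 0 ≤ h) {θ : ℝ} (hθ : 0 < θ)
    (hθ1 : θ < 1) : HeatDominates (symmHull !₂[m + a, b] !₂[q, b + h] !₂[m - a, b])
      (hexSet (θ * a) (θ * b) (θ * h)) :=
  ((HeatDominates.of_subset (fiberSet_subset_symmHull ha hb)).trans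
    (HeatDominates.fiberSet_steiner abs_hexCenter_le _ (mul_pos (sub_pos.2 hθ1) ha))).trans
    (HeatDominates.of_subset (hexSet_scale_subset ha hb.le hh hθ hθ1))

lemma volume_symmHull_aligned (ha : 0 < a) (hb : 0 < b) (hh : 0 ≤ h)
    (hq : |(b + h) * m - b * q| ≤ a * (b - h)) :
    volume (symmHull !₂[m + a, b] !₂[q, b + h] !₂[m - a, b]) =
      ENNReal.ofReal (4 * a * b + 2 * a * h) := by
  rw [(symmHull_subset_fiberSet ha hb hh hq).antisymm (fiberSet_subset_symmHull ha hb),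
    volume_fiberSet_hexWidth ha hb.le hh (measurable_hexCenter m b q h)]

end Aligned

lemma symmHull_swap_left (p q r : E2) : symmHull q p r = symmHull p q r := by
  unfold symmHull
  congr 1
  grind

lemma symmHull_swap_right (p q r : E2) : symmHull p r q = symmHull p q r := by
  unfold symmHull
  congr 1
  grind

lemma symmHull_neg_left (p q r : E2) : symmHull (-p) q r = symmHull p q r := by
  unfold symmHull
  rw [neg_neg]
  congr 1
  grind

lemma preimage_symm_symmHull (L : E2 ≃ₗᵢ[ℝ] E2) (p q r : E2) :
    L.symm ⁻¹' symmHull p q r = symmHull (L p) (L q) (L r) := by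
  rw [← L.image_eq_preimage_symm]
  refine (L.toLinearEquiv.toLinearMap.image_convexHull _).trans ?_
  simp [symmHull, image_insert_eq]

lemma det2_swap (p r : E2) : det2 r p = -det2 p r := by
  simp only [det2]
  ring

lemma det2_sq (p r : E2) : det2 p r ^ 2 = ‖p‖ ^ 2 * ‖r‖ ^ 2 - ⟪p, r⟫ ^ 2 := by
  simp only [det2, plane_norm_sq, PiLp.inner_apply, RCLike.inner_apply, ringHom_apply,
    Fin.sum_univ_two]
  ring

lemma abs_det2_map (L : E2 ≃ₗᵢ[ℝ] E2) (p r : E2) : |det2 (L p) (L r)| = |det2 p r| := by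
  rw [← sq_eq_sq_iff_abs_eq_abs, det2_sq, det2_sq, L.norm_map, L.norm_map, L.inner_map_map]

lemma sub_ne_zero_of_det2_ne_zero {p r : E2} (hD : det2 p r ≠ 0) : p - r ≠ 0 := by
  rintro h
  rw [sub_eq_zero.1 h, det2, mul_comm, sub_self] at hD
  exact hD rfl

lemma exists_linearIsometryEquiv_horizontal (p r : E2) : ∃ L : E2 ≃ₗᵢ[ℝ] E2, ∃ m t : ℝ, 0 ≤ t ∧
    L p = !₂[m + ‖p - r‖ / 2, t] ∧ L r = !₂[m - ‖p - r‖ / 2, t] := by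
  set n := ‖p - r‖ with hn
  obtain ⟨R, hR⟩ : ∃ R : E2 ≃ₗᵢ[ℝ] E2, R (p - r) = !₂[n, 0] :=
    ⟨_, Submodule.reflection_sub (by simp [EuclideanSpace.norm_eq, hn])⟩
  rw [map_sub] at hR
  have h0 : R p 0 - R r 0 = n := by simpa using congrArg (· 0) hR
  have h1 : R p 1 - R r 1 = 0 := by simpa using congrArg (· 1) hR
  rcases le_total 0 (R r 1) with ht | ht
  · refine ⟨R, R r 0 + n / 2, R r 1, ht, plane_ext ?_ ?_, plane_ext ?_ ?_⟩ <;> simp <;> linarith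
  · refine ⟨(R.trans (LinearIsometryEquiv.neg ℝ)).trans
      (hyperplaneReflection (EuclideanSpace.single 0 1)), R r 0 + n / 2, -R r 1, neg_nonneg.2 ht,
      plane_ext ?_ ?_, plane_ext ?_ ?_⟩ <;> simp [hyperplaneReflection_single_apply] <;> linarith

lemma exists_linearIsometryEquiv_align {p r : E2} (hD : det2 p r ≠ 0) :
    ∃ L : E2 ≃ₗᵢ[ℝ] E2, ∃ m : ℝ, L p = !₂[m + ‖p - r‖ / 2, |det2 p r| / ‖p - r‖] ∧
      L r = !₂[m - ‖p - r‖ / 2, |det2 p r| / ‖p - r‖] := by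
  obtain ⟨L, m, t, ht, hp, hr⟩ := exists_linearIsometryEquiv_horizontal p r
  have hn := norm_ne_zero_iff.2 (sub_ne_zero_of_det2_ne_zero hD)
  have hdet : |det2 p r| = t * ‖p - r‖ := by
    rw [← abs_det2_map L, hp, hr, ← abs_of_nonneg (mul_nonneg ht (norm_nonneg (p - r)))]
    congr 1
    simp only [det2, Matrix.cons_val_zero, Matrix.cons_val_one, Matrix.cons_val_fin_one]
    ring
  rw [hdet, mul_div_cancel_right₀ _ hn]
  exact ⟨L, m, hp, hr⟩

section Span

variable {p r : E2} {γ δ : ℝ}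

lemma exists_symmHull_aligned (hD : det2 p r ≠ 0) (γ δ : ℝ) : ∃ L : E2 ≃ₗᵢ[ℝ] E2, ∃ m : ℝ,
    L.symm ⁻¹' symmHull p (γ • p + δ • r) r =
      symmHull !₂[m + ‖p - r‖ / 2, |det2 p r| / ‖p - r‖]
        !₂[(γ + δ) * m + (γ - δ) * (‖p - r‖ / 2),
          |det2 p r| / ‖p - r‖ + (γ + δ - 1) * (|det2 p r| / ‖p - r‖)]
        !₂[m - ‖p - r‖ / 2, |det2 p r| / ‖p - r‖] := by
  obtain ⟨L, m, hp, hr⟩ := exists_linearIsometryEquiv_align hD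
  refine ⟨L, m, ?_⟩
  rw [preimage_symm_symmHull, map_add, map_smul, map_smul, hp, hr]
  congr 1
  refine plane_ext ?_ ?_ <;> simp <;> ring

lemma HeatDominates.symmHull_hexSet (hD : det2 p r ≠ 0) (hγδ : 1 ≤ γ + δ) {θ : ℝ} (hθ : 0 < θ)
    (hθ1 : θ < 1) : HeatDominates (symmHull p (γ • p + δ • r) r)
      (hexSet (θ * (‖p - r‖ / 2)) (θ * (|det2 p r| / ‖p - r‖))
        (θ * ((γ + δ - 1) * (|det2 p r| / ‖p - r‖)))) := by
  have hn := norm_pos_iff.2 (sub_ne_zero_of_det2_ne_zero hD)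
  have hb : 0 < |det2 p r| / ‖p - r‖ := div_pos (abs_pos.2 hD) hn
  obtain ⟨L, m, hL⟩ := exists_symmHull_aligned hD γ δ
  refine (HeatDominates.preimage L.symm.toAffineIsometryEquiv _).trans ?_
  rw [LinearIsometryEquiv.coe_toAffineIsometryEquiv, hL]
  exact HeatDominates.symmHull_aligned (half_pos hn) hb
    (mul_nonneg (sub_nonneg.2 hγδ) hb.le) hθ hθ1

lemma volume_symmHull (hD : det2 p r ≠ 0) (hγ : γ ≤ 1) (hδ : δ ≤ 1) (hγδ : 1 ≤ γ + δ) :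
    volume (symmHull p (γ • p + δ • r) r) = ENNReal.ofReal ((1 + γ + δ) * |det2 p r|) := by
  have hn := norm_pos_iff.2 (sub_ne_zero_of_det2_ne_zero hD)
  have hb : 0 < |det2 p r| / ‖p - r‖ := div_pos (abs_pos.2 hD) hn
  obtain ⟨L, m, hL⟩ := exists_symmHull_aligned hD γ δ
  rw [← L.symm.measurePreserving.measure_preimage_emb L.symm.toHomeomorph.measurableEmbedding, hL,
    volume_symmHull_aligned (half_pos hn) hb (mul_nonneg (sub_nonneg.2 hγδ) hb.le)]
  · congr 1
    field_simp
    ring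
  · generalize |det2 p r| / ‖p - r‖ = b at *
    rw [abs_le]
    constructor <;> nlinarith [mul_pos hn hb]

end Span

lemma volume_symmHull_eq_zero {w p q r : E2} (hw : w ≠ 0) (hp : det2 w p = 0) (hq : det2 w q = 0)
    (hr : det2 w r = 0) : volume (symmHull p q r) = 0 := by
  let φ : E2 →ₗ[ℝ] ℝ := w 0 • (EuclideanSpace.proj 1 : E2 →L[ℝ] ℝ).toLinearMap -
    w 1 • (EuclideanSpace.proj 0 : E2 →L[ℝ] ℝ).toLinearMap
  have hsub : symmHull p q r ⊆ LinearMap.ker φ :=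
    symmHull_subset (LinearMap.ker φ).convex (fun _ => neg_mem) hp hq hr
  have hne : LinearMap.ker φ ≠ ⊤ := by
    intro htop
    have hφ : φ !₂[-w 1, w 0] = 0 := LinearMap.mem_ker.1 (htop ▸ Submodule.mem_top)
    have hnorm : ‖w‖ ^ 2 = 0 := by
      rw [plane_norm_sq, ← hφ]
      simp only [φ, LinearMap.sub_apply, LinearMap.smul_apply, ContinuousLinearMap.coe_coe,
        PiLp.proj_apply, Matrix.cons_val_one, Matrix.cons_val_fin_one, smul_eq_mul,
        Matrix.cons_val_zero]
      ring
    exact hw (norm_eq_zero.1 (pow_eq_zero_iff two_ne_zero |>.1 hnorm))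
  exact measure_mono_null hsub (Measure.addHaar_submodule volume _ hne)

lemma volume_symmHull_eq_zero_of_det2 {p q r : E2} (hpq : det2 p q = 0) (hpr : det2 p r = 0)
    (hqr : det2 q r = 0) : volume (symmHull p q r) = 0 := by
  have hself : ∀ x : E2, det2 x x = 0 := fun x => by rw [det2, mul_comm, sub_self]
  have hzero : ∀ x : E2, det2 x 0 = 0 := fun x => by simp [det2]
  by_cases hp : p = 0
  · by_cases hq : q = 0
    · by_cases hr : r = 0
      · subst hp hq hr
        exact volume_symmHull_eq_zero (w := EuclideanSpace.single 0 1) (by simp) (hzero _) (hzero _)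
          (hzero _)
      · subst hp hq
        exact volume_symmHull_eq_zero hr (hzero r) (hzero r) (hself r)
    · subst hp
      exact volume_symmHull_eq_zero hq (hzero q) (hself q) hqr
  · exact volume_symmHull_eq_zero hp (hself p) hpq hpr

lemma exists_symmHull_eq_abs_det2_le (p q r : E2) : ∃ p' q' r', symmHull p q r = symmHull p' q' r' ∧
    |det2 p' q'| ≤ |det2 p' r'| ∧ |det2 q' r'| ≤ |det2 p' r'| := by
  have hswap : ∀ u v : E2, |det2 u v| = |det2 v u| := fun u v => by rw [det2_swap, abs_neg]
  by_cases hpr : |det2 p q| ≤ |det2 p r| ∧ |det2 q r| ≤ |det2 p r|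
  · exact ⟨p, q, r, rfl, hpr⟩
  by_cases hpq : |det2 p r| ≤ |det2 p q| ∧ |det2 q r| ≤ |det2 p q|
  · exact ⟨p, r, q, (symmHull_swap_right p q r).symm, hpq.1, by rw [hswap]; exact hpq.2⟩
  · refine ⟨q, p, r, (symmHull_swap_left p q r).symm, ?_, ?_⟩ <;> grind

lemma exists_symmHull_eq_abs_smul (p q r : E2) (γ : ℝ) :
    ∃ p', γ • p = |γ| • p' ∧ |det2 p' r| = |det2 p r| ∧ symmHull p' q r = symmHull p q r := by
  rcases abs_choice γ with h | h
  · exact ⟨p, by rw [h], rfl, rfl⟩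
  · refine ⟨-p, by rw [h, neg_smul_neg], ?_, symmHull_neg_left p q r⟩
    rw [← abs_neg]
    congr 1
    simp only [det2, PiLp.neg_apply]
    ring

lemma symmHull_reverse (p q r : E2) : symmHull r q p = symmHull p q r := by
  rw [symmHull_swap_left, symmHull_swap_right, symmHull_swap_left]

lemma symmHull_smul_add_smul_of_add_le_one {p r : E2} {γ δ : ℝ} (hγ : 0 ≤ γ) (hδ : 0 ≤ δ)
    (hγδ : γ + δ ≤ 1) :
    symmHull p (γ • p + δ • r) r = symmHull p ((1 : ℝ) • p + (0 : ℝ) • r) r := by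
  obtain ⟨hp, -, hr⟩ := mem_symmHull p (γ • p + δ • r) r
  obtain ⟨hp', -, hr'⟩ := mem_symmHull p ((1 : ℝ) • p + (0 : ℝ) • r) r
  refine (symmHull_subset (convex_symmHull _ _ _) (fun _ => neg_mem_symmHull) hp' ?_ hr').antisymm
    (symmHull_subset (convex_symmHull _ _ _) (fun _ => neg_mem_symmHull) hp (by simpa) hr)
  exact smul_add_smul_mem_of_convex_of_symm (convex_symmHull _ _ _) (fun _ => neg_mem_symmHull)
    hp' hr' (by rwa [abs_of_nonneg hγ, abs_of_nonneg hδ])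

/-- The pair of largest determinant is used as a basis: by Cramer's rule the third vertex then has
coordinates of absolute value at most `1`. -/
lemma exists_symmHull_eq_smul_add_smul {p q r : E2} (hvol : volume (symmHull p q r) ≠ 0) :
    ∃ p' r' : E2, ∃ γ δ : ℝ, det2 p' r' ≠ 0 ∧ γ ≤ 1 ∧ δ ≤ 1 ∧ 1 ≤ γ + δ ∧
      symmHull p q r = symmHull p' (γ • p' + δ • r') r' := by
  obtain ⟨p, q, r, heq, hpq, hqr⟩ := exists_symmHull_eq_abs_det2_le p q r
  rw [heq] at hvol ⊢
  have hD : det2 p r ≠ 0 := by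
    intro h0
    rw [h0, abs_zero, abs_nonpos_iff] at hpq hqr
    exact hvol (volume_symmHull_eq_zero_of_det2 hpq h0 hqr)
  set γ := det2 q r / det2 p r with hγ
  set δ := det2 p q / det2 p r with hδ
  have hγ1 : |γ| ≤ 1 := by rw [hγ, abs_div]; exact (div_le_one (abs_pos.2 hD)).2 hqr
  have hδ1 : |δ| ≤ 1 := by rw [hδ, abs_div]; exact (div_le_one (abs_pos.2 hD)).2 hpq
  have hcramer : q = γ • p + δ • r := by
    refine plane_ext ?_ ?_ <;> simp [hγ, hδ] <;> field_simp <;> simp only [det2] <;> ring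
  obtain ⟨p', hp', hdet, hhull⟩ := exists_symmHull_eq_abs_smul p q r γ
  obtain ⟨r', hr', hdet', hhull'⟩ := exists_symmHull_eq_abs_smul r q p' δ
  have hdet_ne : det2 p' r' ≠ 0 := by
    rwa [← abs_ne_zero, det2_swap, abs_neg, hdet', det2_swap, abs_neg, hdet, abs_ne_zero]
  have hnormal : symmHull p q r = symmHull p' (|γ| • p' + |δ| • r') r' := by
    rw [← hp', ← hr', ← hcramer, ← symmHull_reverse p' q r', hhull', symmHull_reverse p' q r, hhull]
  rcases le_total 1 (|γ| + |δ|) with hle | hle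
  · exact ⟨p', r', |γ|, |δ|, hdet_ne, hγ1, hδ1, hle, hnormal⟩
  · exact ⟨p', r', 1, 0, hdet_ne, le_rfl, zero_le_one, by simp, hnormal.trans
      (symmHull_smul_add_smul_of_add_le_one (abs_nonneg _) (abs_nonneg _) hle)⟩

/-! ### Iterated symmetrization -/

/-- The unit-area hexagon `hexSet a b h` with `a ^ 2 = A` whose central rectangle has area `s`
(so that `4 * a * b = s` and `2 * a * h = 1 - s`), scaled by `θ`. -/
def unitHex (θ A s : ℝ) : Set E2 :=
  hexSet (θ * √A) (θ * (s / (4 * √A))) (θ * ((1 - s) / (2 * √A)))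

/-- `H` heat-dominates every strictly smaller copy of the unit-area hexagon with parameters `A`
and `s`. The symmetrization steps only reach smaller copies. -/
def Reaches (H : Set E2) (A s : ℝ) : Prop :=
  ∀ θ : ℝ, 0 < θ → θ < 1 → HeatDominates H (unitHex θ A s)

lemma HeatDominates.image_add_left (x₀ : E2) (E : Set E2) :
    HeatDominates ((fun y => x₀ + y) '' E) E := by
  have hpre : AffineIsometryEquiv.constVAdd ℝ E2 x₀ ⁻¹' ((fun y => x₀ + y) '' E) = E :=
    (add_right_injective x₀).preimage_image E
  simpa only [hpre] using HeatDominates.preimage (AffineIsometryEquiv.constVAdd ℝ E2 x₀)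
    ((fun y => x₀ + y) '' E)

lemma reaches_symmHull {p r : E2} {γ δ : ℝ} (hD : det2 p r ≠ 0) (hγδ : 1 ≤ γ + δ)
    (harea : (1 + γ + δ) * |det2 p r| = 1) :
    Reaches (symmHull p (γ • p + δ • r) r) ((‖p - r‖ / 2) ^ 2) (2 * |det2 p r|) := by
  intro θ hθ hθ1
  have hL : 0 < ‖p - r‖ := norm_pos_iff.2 (sub_ne_zero_of_det2_ne_zero hD)
  have hs : 1 - 2 * |det2 p r| = (γ + δ - 1) * |det2 p r| := by linear_combination -harea
  have hhex := HeatDominates.symmHull_hexSet hD hγδ hθ hθ1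
  rw [unitHex, Real.sqrt_sq (by positivity), hs]
  convert hhex using 3 <;> field_simp
  norm_num

lemma Hex.exists_reaches {H : Set E2} (hH : Hex H) (hV : volume H = 1) :
    ∃ A s : ℝ, 0 < A ∧ 0 < s ∧ s ≤ 1 ∧ Reaches H A s := by
  obtain ⟨⟨x₀, p, q, r, rfl⟩, -⟩ := hH
  change volume ((fun y => x₀ + y) '' symmHull p q r) = 1 at hV
  rw [image_add_left, measure_preimage_add] at hV
  obtain ⟨p', r', γ, δ, hD, hγ, hδ, hγδ, heq⟩ :=
    exists_symmHull_eq_smul_add_smul (hV.trans_ne one_ne_zero)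
  rw [heq, volume_symmHull hD hγ hδ hγδ, ENNReal.ofReal_eq_one] at hV
  have hL : 0 < ‖p' - r'‖ := norm_pos_iff.2 (sub_ne_zero_of_det2_ne_zero hD)
  refine ⟨(‖p' - r'‖ / 2) ^ 2, 2 * |det2 p' r'|, by positivity, by positivity, ?_,
    fun θ hθ hθ1 => ?_⟩
  · rw [← hV]
    gcongr
    linarith
  · exact (HeatDominates.image_add_left x₀ (symmHull p q r)).trans
      (heq ▸ reaches_symmHull hD hγδ hV θ hθ hθ1)

lemma convex_hexSet {a b h : ℝ} (ha : 0 ≤ a) (hh : 0 ≤ h) : Convex ℝ (hexSet a b h) := by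
  have habs : ∀ i, ConvexOn ℝ univ fun x : E2 => |x i| := fun i =>
    (convexOn_univ_norm (E := ℝ)).comp_linearMap (EuclideanSpace.proj i : E2 →L[ℝ] ℝ).toLinearMap
  have hfun : ConvexOn ℝ univ fun x : E2 => h * |x 0| + a * |x 1| :=
    ((habs 0).smul hh).add ((habs 1).smul ha)
  have heq : hexSet a b h =
      {x ∈ univ | |x 0| ≤ a} ∩ {x ∈ univ | h * |x 0| + a * |x 1| ≤ a * (b + h)} := by
    ext x
    simp only [hexSet, mem_ofPred_eq, mem_inter_iff, mem_univ, true_and]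
    exact and_congr_right fun _ => by constructor <;> intro <;> linarith
  rw [heq]
  exact ((habs 0).convex_le a).inter (hfun.convex_le _)

lemma neg_mem_hexSet {a b h : ℝ} : ∀ x ∈ hexSet a b h, -x ∈ hexSet a b h := by
  rintro x ⟨h0, h1⟩
  exact ⟨by simpa using h0, by simpa using h1⟩

lemma symmHull_eq_hexSet {a b h : ℝ} (ha : 0 < a) (hb : 0 < b) (hh : 0 ≤ h) :
    symmHull !₂[a, -b] !₂[a, b] !₂[0, b + h] = hexSet a b h := by
  have hbh : 0 < b + h := by linarith
  apply Subset.antisymm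
  · refine symmHull_subset (convex_hexSet ha.le hh) neg_mem_hexSet ?_ ?_ ?_ <;>
      simp [hexSet, abs_of_pos ha, abs_of_pos hb, abs_of_pos hbh, ha.le, mul_comm]
  · obtain ⟨hp, hq, hr⟩ := mem_symmHull !₂[a, -b] !₂[a, b] !₂[0, b + h]
    have hcenter : hexCenter 0 b 0 h = 0 := by
      ext y
      simp [hexCenter]
    rw [hexSet_eq_fiberSet ha hh, ← hcenter]
    refine (fiberSet_subset_symmHull ha hb).trans
      (symmHull_subset (convex_symmHull _ _ _) (fun _ => neg_mem_symmHull) ?_ hr ?_)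
    · rwa [zero_add]
    · rw [show (!₂[0 - a, b] : E2) = -!₂[a, -b] from plane_ext (by simp) (by simp)]
      exact neg_mem_symmHull hp

/-- Steiner symmetrization along the diagonal from `(a, -b)` to `(0, b + h)`. -/
lemma HeatDominates.hexSet_step {a b h D : ℝ} (ha : 0 < a) (hb : 0 < b) (hh : 0 ≤ h) (hD : 0 < D)
    (hD2 : D ^ 2 = a ^ 2 + (2 * b + h) ^ 2) {θ : ℝ} (hθ : 0 < θ) (hθ1 : θ < 1) :
    HeatDominates (hexSet a b h)
      (hexSet (θ * (D / 2)) (θ * (a * (b + h) / D)) (θ * (2 * a * b / D))) := by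
  set δ := 2 * b / (b + h) with hδ
  have hδ0 : 0 < δ := by positivity
  have hvertex : !₂[a, b] = (1 : ℝ) • !₂[a, -b] + δ • !₂[0, b + h] := by
    refine plane_ext (by simp) ?_
    simp only [hδ, PiLp.add_apply, PiLp.smul_apply, Matrix.cons_val_one, Matrix.cons_val_fin_one,
      one_smul, smul_eq_mul]
    field_simp
    ring
  have hdet : det2 !₂[a, -b] !₂[0, b + h] = a * (b + h) := by simp [det2]
  have hnorm : ‖!₂[a, -b] - !₂[0, b + h]‖ = D := by
    rw [← sq_eq_sq₀ (norm_nonneg _) hD.le, plane_norm_sq, hD2]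
    simp only [PiLp.sub_apply, Matrix.cons_val_zero, Matrix.cons_val_one, Matrix.cons_val_fin_one,
      sub_zero]
    ring
  have hhex := HeatDominates.symmHull_hexSet (p := !₂[a, -b]) (r := !₂[0, b + h]) (γ := 1) (δ := δ)
    (by rw [hdet]; positivity) (by linarith) hθ hθ1
  rw [hnorm, hdet, abs_of_pos (by positivity), add_sub_cancel_left, ← hvertex,
    symmHull_eq_hexSet ha hb hh] at hhex
  have harea : δ * (a * (b + h) / D) = 2 * a * b / D := by
    rw [hδ]
    field_simp
  rwa [harea] at hhex

lemma Reaches.step {H : Set E2} {A s : ℝ} (hA : 0 < A) (hs : 0 < s) (hs1 : s ≤ 1)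
    (h : Reaches H A s) : Reaches H (A / 4 + 1 / (16 * A)) (1 - s / 2) := by
  intro θ hθ hθ1
  obtain ⟨η, hη, rfl⟩ : ∃ η, 0 < η ∧ θ = η ^ 2 :=
    ⟨√θ, Real.sqrt_pos.2 hθ, (Real.sq_sqrt hθ.le).symm⟩
  obtain ⟨R, hR, rfl⟩ : ∃ R, 0 < R ∧ A = R ^ 2 :=
    ⟨√A, Real.sqrt_pos.2 hA, (Real.sq_sqrt hA.le).symm⟩
  have hη1 : η < 1 := by rwa [sq_lt_one_iff₀ hη.le] at hθ1
  have hh : 0 ≤ η * ((1 - s) / (2 * R)) :=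
    mul_nonneg hη.le (div_nonneg (by linarith) (by positivity))
  have hA' : 0 < R ^ 2 / 4 + 1 / (16 * R ^ 2) := by positivity
  have hnew := h η hη hη1
  rw [unitHex, Real.sqrt_sq hR.le] at hnew
  rw [unitHex]
  set R' := √(R ^ 2 / 4 + 1 / (16 * R ^ 2))
  have hR'0 : 0 < R' := Real.sqrt_pos.2 hA'
  have hR'2 : (2 * η * R') ^ 2 =
      (η * R) ^ 2 + (2 * (η * (s / (4 * R))) + η * ((1 - s) / (2 * R))) ^ 2 := by
    rw [mul_pow, Real.sq_sqrt hA'.le]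
    field_simp
    ring
  have hhex := HeatDominates.hexSet_step (by positivity) (by positivity) hh (by positivity) hR'2
    hη hη1
  convert hnew.trans hhex using 2 <;> field_simp <;> ring

lemma mem_hexSet_mul {θ a b h : ℝ} (hθ : 0 < θ) {x : E2} :
    x ∈ hexSet (θ * a) (θ * b) (θ * h) ↔
      |x 0| ≤ θ * a ∧ h * |x 0| + a * |x 1| ≤ θ * (a * (b + h)) := by
  refine and_congr_right fun _ => ?_
  rw [mul_assoc, mul_assoc, mul_le_mul_iff_of_pos_left hθ]
  constructor <;> intro _ <;> linarith

lemma hexSet_mul_subset {θ η a b h a' b' h' : ℝ} (hθ : 0 < θ) (hη : 0 < η) (ha : 0 < a)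
    (hh : 0 ≤ h) (haa : θ * a ≤ η * a')
    (hle : θ * (a * (b + h) + |h' - h| * a + |a' - a| * (b + h)) ≤ η * (a' * (b' + h'))) :
    hexSet (θ * a) (θ * b) (θ * h) ⊆ hexSet (η * a') (η * b') (η * h') := by
  intro x hx
  rw [mem_hexSet_mul hθ] at hx
  obtain ⟨hx0, hx1⟩ := hx
  rw [mem_hexSet_mul hη]
  refine ⟨hx0.trans haa, ?_⟩
  have hheight : |x 1| ≤ θ * (b + h) := by
    have : 0 ≤ h * |x 0| := by positivity
    refine le_of_mul_le_mul_left ?_ ha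
    linarith
  have hdh : (h' - h) * |x 0| ≤ |h' - h| * (θ * a) :=
    mul_le_mul (le_abs_self _) hx0 (abs_nonneg _) (abs_nonneg _)
  have hda : (a' - a) * |x 1| ≤ |a' - a| * (θ * (b + h)) :=
    mul_le_mul (le_abs_self _) hheight (abs_nonneg _) (abs_nonneg _)
  linarith

lemma eventually_hexSet_mul_subset {ι : Type*} {l : Filter ι} {a b h : ι → ℝ} {a' b' h' θ η : ℝ}
    (ha' : 0 < a') (hb' : 0 < b') (hh' : 0 ≤ h') (hθ : 0 < θ) (hθη : θ < η)
    (ha : Tendsto a l (𝓝 a')) (hb : Tendsto b l (𝓝 b')) (hh : Tendsto h l (𝓝 h')) :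
    ∀ᶠ i in l, hexSet (θ * a') (θ * b') (θ * h') ⊆ hexSet (η * a i) (η * b i) (η * h i) := by
  have hwidth : ∀ᶠ i in l, θ * a' < η * a i := (ha.const_mul η).eventually_const_lt (by gcongr)
  have hslope_left : Tendsto (fun i => θ * (a' * (b' + h') + |h i - h'| * a' +
      |a i - a'| * (b' + h'))) l (𝓝 (θ * (a' * (b' + h') + |h' - h'| * a' +
        |a' - a'| * (b' + h')))) :=
    (((((hh.sub_const h').abs.mul_const a').const_add _).add
      ((ha.sub_const a').abs.mul_const _))).const_mul θ
  have hslope : ∀ᶠ i in l, θ * (a' * (b' + h') + |h i - h'| * a' + |a i - a'| * (b' + h')) <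
      η * (a i * (b i + h i)) := by
    refine hslope_left.eventually_lt ((ha.mul (hb.add hh)).const_mul η) ?_
    simp only [sub_self, abs_zero, zero_mul, add_zero]
    gcongr
  filter_upwards [hwidth, hslope] with i hwi hsi
  exact hexSet_mul_subset hθ (hθ.trans hθη) ha' hh' hwi.le hsi.le

lemma Reaches.of_tendsto {H : Set E2} {A s : ℕ → ℝ} {A' s' : ℝ} (hA' : 0 < A') (hs' : 0 < s')
    (hs1 : s' ≤ 1) (hA : Tendsto A atTop (𝓝 A')) (hs : Tendsto s atTop (𝓝 s'))
    (hr : ∀ n, Reaches H (A n) (s n)) : Reaches H A' s' := by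
  intro θ hθ hθ1
  have hR : 0 < √A' := Real.sqrt_pos.2 hA'
  have hθη : θ < (1 + θ) / 2 := by linarith
  obtain ⟨n, hn⟩ := (eventually_hexSet_mul_subset hR (by positivity)
    (div_nonneg (by linarith) (by positivity)) hθ hθη hA.sqrt
    (hs.div (hA.sqrt.const_mul 4) (by positivity))
    ((hs.const_sub 1).div (hA.sqrt.const_mul 2) (by positivity))).exists
  exact (hr n _ (hθ.trans hθη) (by linarith)).trans (HeatDominates.of_subset hn)

lemma tendsto_of_dist_succ_le_mul {X : Type*} [PseudoMetricSpace X] {u : ℕ → X} {l : X} {k : ℝ}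
    (hk0 : 0 ≤ k) (hk1 : k < 1) (h : ∀ n, dist (u (n + 1)) l ≤ k * dist (u n) l) :
    Tendsto u atTop (𝓝 l) := by
  have hgeom : ∀ n, dist (u n) l ≤ k ^ n * dist (u 0) l := fun n =>
    le_geom (u := fun n => dist (u n) l) hk0 n fun i _ => h i
  rw [tendsto_iff_dist_tendsto_zero]
  refine squeeze_zero (fun _ => dist_nonneg) hgeom ?_
  simpa using (tendsto_pow_atTop_nhds_zero_of_lt_one hk0 hk1).mul_const (dist (u 0) l)

lemma quarter_le_div_four_add {A : ℝ} (hA : 0 < A) : 1 / 4 ≤ A / 4 + 1 / (16 * A) := by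
  have hsq : A / 4 + 1 / (16 * A) - 1 / 4 = (2 * A - 1) ^ 2 / (16 * A) := by
    field_simp
    ring
  have : 0 ≤ (2 * A - 1) ^ 2 / (16 * A) := by positivity
  linarith

/-- `√3 / 6` is the fixed point of `A ↦ A / 4 + 1 / (16 * A)`. -/
lemma abs_div_four_add_sub_le {A : ℝ} (hA : 1 / 4 ≤ A) :
    |A / 4 + 1 / (16 * A) - √3 / 6| ≤ 3 / 4 * |A - √3 / 6| := by
  have h3 : √3 ^ 2 = 3 := Real.sq_sqrt (by norm_num)
  have hA0 : 0 < A := by linarith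
  have hfactor : A / 4 + 1 / (16 * A) - √3 / 6 = (1 / 4 - √3 / (8 * A)) * (A - √3 / 6) := by
    field_simp
    linear_combination (-64) * h3
  rw [hfactor, abs_mul]
  gcongr
  have hpos : 0 ≤ √3 / (8 * A) := by positivity
  have hle : √3 / (8 * A) ≤ 1 := (div_le_one (by positivity)).2 (by nlinarith)
  rw [abs_le]
  constructor <;> linarith

lemma Hex.reaches_regular {H : Set E2} (hH : Hex H) (hV : volume H = 1) :
    Reaches H (√3 / 6) (2 / 3) := by
  obtain ⟨A₀, s₀, hA₀, hs₀, hs₁, h₀⟩ := hH.exists_reaches hV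
  let A : ℕ → ℝ := fun n => (fun x => x / 4 + 1 / (16 * x))^[n] (A₀ / 4 + 1 / (16 * A₀))
  let s : ℕ → ℝ := fun n => (fun x => 1 - x / 2)^[n] (1 - s₀ / 2)
  have hA_succ : ∀ n, A (n + 1) = A n / 4 + 1 / (16 * A n) := fun n =>
    Function.iterate_succ_apply' _ _ _
  have hs_succ : ∀ n, s (n + 1) = 1 - s n / 2 := fun n => Function.iterate_succ_apply' _ _ _
  have hinv : ∀ n, 1 / 4 ≤ A n ∧ 0 < s n ∧ s n ≤ 1 ∧ Reaches H (A n) (s n) := by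
    intro n
    induction n with
    | zero =>
      exact ⟨quarter_le_div_four_add hA₀, by change 0 < 1 - s₀ / 2; linarith,
        by change 1 - s₀ / 2 ≤ 1; linarith, h₀.step hA₀ hs₀ hs₁⟩
    | succ n ih =>
      obtain ⟨hA, hs, hs1, hr⟩ := ih
      have hA0 : 0 < A n := by linarith
      rw [hA_succ, hs_succ]
      exact ⟨quarter_le_div_four_add hA0, by linarith, by linarith, hr.step hA0 hs hs1⟩
  refine Reaches.of_tendsto (by positivity) (by norm_num) (by norm_num)
    (tendsto_of_dist_succ_le_mul (k := 3 / 4) (by norm_num) (by norm_num) fun n => ?_)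
    (tendsto_of_dist_succ_le_mul (k := 1 / 2) (by norm_num) (by norm_num) fun n => ?_)
    fun n => (hinv n).2.2.2
  · rw [hA_succ]
    exact abs_div_four_add_sub_le (hinv n).1
  · rw [hs_succ, Real.dist_eq, Real.dist_eq,
      show 1 - s n / 2 - 2 / 3 = -(1 / 2) * (s n - 2 / 3) by ring, abs_mul]
    norm_num

/-! ### The regular hexagon -/

lemma hexVertex_zero : hexVertex 0 = !₂[1, 0] := by
  simp [hexVertex]

lemma hexVertex_one : hexVertex 1 = !₂[1 / 2, √3 / 2] := by
  simp [hexVertex]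

lemma hexVertex_two : hexVertex 2 = !₂[-(1 / 2), √3 / 2] := by
  have hangle : 2 * π / 3 = π - π / 3 := by ring
  simp [hexVertex, hangle, Real.cos_pi_sub, Real.sin_pi_sub]

lemma hexVertex_add_three (k : ℕ) : hexVertex (k + 3) = -hexVertex k := by
  have hangle : ((k : ℝ) + 3) * π / 3 = k * π / 3 + π := by ring
  refine plane_ext ?_ ?_ <;> simp [hexVertex, hangle]

lemma stdHexagon_eq_symmHull :
    stdHexagon = symmHull (hexVertex 0) (hexVertex 1) (hexVertex 2) := by
  have hrange : range (fun k : Fin 6 => hexVertex k) = {hexVertex 0, hexVertex 1, hexVertex 2,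
      -hexVertex 0, -hexVertex 1, -hexVertex 2} := by
    simp only [← hexVertex_add_three]
    ext x
    simp [Fin.exists_fin_succ, eq_comm]
  rw [stdHexagon, symmHull, hrange]

lemma preimage_symm_swapAxes_hexSet :
    swapAxes.symm ⁻¹' hexSet (√3 / 2) (1 / 2) (1 / 2) = stdHexagon := by
  have h0 : swapAxes !₂[√3 / 2, -(1 / 2)] = hexVertex 2 := by
    rw [hexVertex_two]
    exact plane_ext (by simp) (by simp)
  have h1 : swapAxes !₂[√3 / 2, 1 / 2] = hexVertex 1 := by
    rw [hexVertex_one]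
    exact plane_ext (by simp) (by simp)
  have h2 : swapAxes !₂[0, 1 / 2 + 1 / 2] = hexVertex 0 := by
    rw [hexVertex_zero]
    refine plane_ext ?_ (by simp)
    norm_num
  rw [← symmHull_eq_hexSet (by positivity) (by positivity) (by positivity),
    preimage_symm_symmHull, h0, h1, h2, symmHull_reverse, stdHexagon_eq_symmHull]

lemma smul_mem_hexSet {a b h θ : ℝ} (hθ : 0 < θ) {x : E2} :
    θ • x ∈ hexSet (θ * a) (θ * b) (θ * h) ↔ x ∈ hexSet a b h := by
  rw [mem_hexSet_mul hθ, ← one_mul a, ← one_mul b, ← one_mul h, mem_hexSet_mul one_pos]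
  simp only [PiLp.smul_apply, smul_eq_mul, abs_mul, abs_of_pos hθ, one_mul]
  rw [mul_le_mul_iff_right₀ hθ, mul_left_comm h, mul_left_comm a θ |x 1|, ← mul_add,
    mul_le_mul_iff_right₀ hθ]

lemma IsSimilarity.exists_affineIsometryEquiv {f : E2 → E2} (hf : IsSimilarity f) :
    ∃ s : ℝ, 0 < s ∧ ∃ e : E2 ≃ᵃⁱ[ℝ] E2, ∀ x, f x = e (s • x) := by
  obtain ⟨s, hs, hdist⟩ := hf
  have hiso : Isometry fun x => f (s⁻¹ • x) := by
    refine Isometry.of_dist_eq fun x y => ?_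
    rw [hdist, dist_smul₀, norm_inv, Real.norm_of_nonneg hs.le, mul_inv_cancel_left₀ hs.ne']
  refine ⟨s, hs, hiso.affineIsometryOfStrictConvexSpace.toAffineIsometryEquiv rfl, fun x => ?_⟩
  simp [inv_smul_smul₀ hs.ne']

lemma IsRegularHexagon.exists_eq_image_hexSet {H : Set E2} (hH : IsRegularHexagon H) :
    ∃ s : ℝ, 0 < s ∧ ∃ e : E2 ≃ᵃⁱ[ℝ] E2,
      H = e '' hexSet (s * (√3 / 2)) (s * (1 / 2)) (s * (1 / 2)) := by
  obtain ⟨f, hf, rfl⟩ := hH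
  obtain ⟨s, hs, e, hfe⟩ := hf.exists_affineIsometryEquiv
  have hscale : hexSet (s * (√3 / 2)) (s * (1 / 2)) (s * (1 / 2)) =
      (fun x => s • x) '' hexSet (√3 / 2) (1 / 2) (1 / 2) := by
    refine Subset.antisymm (fun x hx => ⟨s⁻¹ • x, ?_, smul_inv_smul₀ hs.ne' x⟩) ?_
    · rwa [← smul_mem_hexSet hs, smul_inv_smul₀ hs.ne']
    · rintro _ ⟨x, hx, rfl⟩
      exact (smul_mem_hexSet hs).2 hx
  refine ⟨s, hs, swapAxes.toAffineIsometryEquiv.trans e, ?_⟩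
  rw [← preimage_symm_swapAxes_hexSet, ← swapAxes.image_eq_preimage_symm, hscale, image_image,
    image_image]
  exact image_congr fun x _ => by simp [hfe]

lemma isCompact_symmHull (p q r : E2) : IsCompact (symmHull p q r) :=
  (show ({p, q, r, -p, -q, -r} : Set E2).Finite by simp).isCompact_convexHull ℝ

lemma isCompact_hexSet {a b h : ℝ} (ha : 0 < a) (hb : 0 < b) (hh : 0 ≤ h) :
    IsCompact (hexSet a b h) :=
  symmHull_eq_hexSet ha hb hh ▸ isCompact_symmHull _ _ _

lemma IsRegularHexagon.exists_eq_image_unitHex {H : Set E2} (hH : IsRegularHexagon H)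
    (hV : volume H = 1) : ∃ e : E2 ≃ᵃⁱ[ℝ] E2, H = e '' unitHex 1 (√3 / 6) (2 / 3) := by
  obtain ⟨s, hs, e, rfl⟩ := hH.exists_eq_image_hexSet
  have harea : volume (hexSet (s * (√3 / 2)) (s * (1 / 2)) (s * (1 / 2))) = 1 := by
    have hcompact := isCompact_hexSet (a := s * (√3 / 2)) (b := s * (1 / 2)) (h := s * (1 / 2))
      (by positivity) (by positivity) (by positivity)
    rw [← hV, ← (measurePreserving_affineIsometryEquiv e.symm).measure_preimage
      hcompact.measurableSet.nullMeasurableSet]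
    exact congrArg volume (e.toEquiv.image_eq_preimage_symm _).symm
  rw [volume_hexSet (by positivity) (by positivity) (by positivity),
    ENNReal.ofReal_eq_one] at harea
  have hwidth : √(√3 / 6) = s * (√3 / 2) := by
    rw [← Real.sqrt_sq (show 0 ≤ s * (√3 / 2) by positivity)]
    congr 1
    linear_combination (-√3 / 6) * harea
  refine ⟨e, ?_⟩
  rw [unitHex, hwidth]
  congr 2
  · ring
  · field_simp
    linear_combination 8 * harea
  · field_simp
    linear_combination 2 * harea

/-! ### Comparison of energies -/

section RieszEnergyMap

open Module (finrank)

variable {V : Type*} [NormedAddCommGroup V] [InnerProductSpace ℝ V] [MeasurableSpace V]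
  [BorelSpace V] [SecondCountableTopology V]

lemma rieszEnergy_map_of_dist_eq_mul {α k : ℝ} (hk : 0 < k) {f : V → V}
    (hf : ∀ x y, dist (f x) (f y) = k * dist x y) (μ : Measure V) [SFinite μ] :
    rieszEnergy α (μ.map f) = ENNReal.ofReal k ^ (α - finrank ℝ V) * rieszEnergy α μ := by
  have hfm : Measurable f :=
    (LipschitzWith.of_dist_le_mul (K := k.toNNReal) fun x y => by
      rw [hf, Real.coe_toNNReal _ hk.le]).continuous.measurable
  have hedist : ∀ x y, edist (f x) (f y) = ENNReal.ofReal k * edist x y := fun x y => by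
    rw [edist_dist, hf, ENNReal.ofReal_mul hk.le, edist_dist]
  have hmeas : ∀ ν : Measure V, ∀ [SFinite ν],
      Measurable fun x => ∫⁻ y, edist x y ^ (α - finrank ℝ V) ∂ν := fun ν _ =>
    Measurable.lintegral_prod_right (by fun_prop)
  rw [rieszEnergy, lintegral_map (hmeas _) hfm, rieszEnergy, ← lintegral_const_mul _ (hmeas _)]
  refine lintegral_congr fun x => ?_
  rw [lintegral_map (by fun_prop) hfm, ← lintegral_const_mul _ (by fun_prop)]
  refine lintegral_congr fun y => ?_
  rw [hedist, ENNReal.mul_rpow_of_ne_top ENNReal.ofReal_ne_top (edist_ne_top x y)]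

end RieszEnergyMap

lemma rieszW_eq_iInf_rieszEnergy (α : ℝ) {E : Set E2} (hE : MeasurableSet E) :
    rieszW α E = ⨅ (μ : Measure E2) (_ : IsProbabilityMeasure μ) (_ : μ E = 1),
      rieszEnergy α μ := by
  refine iInf_congr fun μ => iInf_congr fun _ => iInf_congr fun hμ => ?_
  rw [Measure.restrict_eq_self_of_ae_mem ((prob_compl_eq_zero_iff hE).2 hμ), rieszEnergy,
    finrank_euclideanSpace_fin, Nat.cast_ofNat]

lemma HeatDominates.rieszW_le_rieszEnergy {α δ : ℝ} {E F F' : Set E2} (hEF' : HeatDominates E F')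
    (hE : MeasurableSet E) (hEt : volume E ≠ ∞) (hE0 : volume E ≠ 0) (hα : α ∈ Ioo (0 : ℝ) 2)
    (hδ : 0 < δ) (hFF' : thickening δ F ⊆ F') {μ : Measure E2} [IsProbabilityMeasure μ]
    (hμ : ∀ᵐ x ∂μ, x ∈ F) : rieszW α E ≤ rieszEnergy α μ := by
  have hα2 : α < Module.finrank ℝ E2 := by simpa using hα.2
  obtain ⟨m, hm, hmμ⟩ := exists_mem_probDensities_rieszEnergy_le hα2 hδ hFF' hμ
  refine le_trans ?_ ((hEF'.iInf_rieszEnergy_le hE hEt hE0 hα hα2 hm).trans hmμ)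
  rw [rieszW_eq_iInf_rieszEnergy α hE]
  exact le_iInf₂ fun ν hν => iInf_le_of_le (densityMeasure ν) (iInf_le_of_le
    (isProbabilityMeasure_densityMeasure hν) (iInf_le _ (densityMeasure_apply_eq_one hE hν)))

lemma exists_thickening_hexSet_mul_subset {a b h θ η : ℝ} (ha : 0 < a) (hb : 0 < b) (hh : 0 ≤ h)
    (hθ : 0 < θ) (hθη : θ < η) : ∃ δ, 0 < δ ∧
      thickening δ (hexSet (θ * a) (θ * b) (θ * h)) ⊆ hexSet (η * a) (η * b) (η * h) := by
  have hopen₀ : IsOpen {x : E2 | |x 0| < η * a} := isOpen_lt (by fun_prop) (by fun_prop)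
  have hopen₁ : IsOpen {x : E2 | h * |x 0| + a * |x 1| < η * (a * (b + h))} :=
    isOpen_lt (by fun_prop) (by fun_prop)
  have hsub : hexSet (θ * a) (θ * b) (θ * h) ⊆
      {x : E2 | |x 0| < η * a ∧ h * |x 0| + a * |x 1| < η * (a * (b + h))} := by
    intro x hx
    rw [mem_hexSet_mul hθ] at hx
    exact ⟨hx.1.trans_lt (by gcongr), hx.2.trans_lt (by gcongr)⟩
  obtain ⟨δ, hδ, hδsub⟩ := (isCompact_hexSet (mul_pos hθ ha) (mul_pos hθ hb)
    (mul_nonneg hθ.le hh)).exists_thickening_subset_open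
    (hopen₀.inter hopen₁) hsub
  exact ⟨δ, hδ, hδsub.trans fun x hx => (mem_hexSet_mul (hθ.trans hθη)).2 ⟨hx.1.le, hx.2.le⟩⟩

lemma Hex.measurableSet {H : Set E2} (hH : Hex H) : MeasurableSet H := by
  obtain ⟨⟨x₀, p, q, r, rfl⟩, -⟩ := hH
  exact ((isCompact_symmHull p q r).image (by fun_prop)).measurableSet

section Comparison

variable {α : ℝ} {H Hstar : Set E2} {μ : Measure E2} [IsProbabilityMeasure μ]

lemma Hex.rieszW_le_rpow_mul_rieszEnergy (hH : Hex H) (hV : volume H = 1)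
    (hα : α ∈ Ioo (0 : ℝ) 2) {θ : ℝ} (hθ : 0 < θ) (hθ1 : θ < 1)
    (hμ : ∀ᵐ x ∂μ, x ∈ unitHex 1 (√3 / 6) (2 / 3)) :
    rieszW α H ≤ ENNReal.ofReal θ ^ (α - 2) * rieszEnergy α μ := by
  have hdist : ∀ x y : E2, dist (θ • x) (θ • y) = θ * dist x y := fun x y => by
    rw [dist_smul₀, Real.norm_of_nonneg hθ.le]
  have hsmul : Measurable fun x : E2 => θ • x := by fun_prop
  have := Measure.isProbabilityMeasure_map (μ := μ) hsmul.aemeasurable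
  have hθη : θ < (1 + θ) / 2 := by linarith
  obtain ⟨δ, hδ, hsub⟩ := exists_thickening_hexSet_mul_subset
    (a := √(√3 / 6)) (b := 2 / 3 / (4 * √(√3 / 6))) (h := (1 - 2 / 3) / (2 * √(√3 / 6)))
    (by positivity) (by positivity) (div_nonneg (by norm_num) (by positivity)) hθ hθη
  have hmap : ∀ᵐ y ∂μ.map (fun x : E2 => θ • x), y ∈ unitHex θ (√3 / 6) (2 / 3) := by
    refine (ae_map_iff hsmul.aemeasurable ?_).2 (hμ.mono fun x hx => ?_)
    · exact (isCompact_hexSet (by positivity) (by positivity)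
        (mul_nonneg hθ.le (div_nonneg (by norm_num) (by positivity)))).measurableSet
    · rw [unitHex, one_mul, one_mul, one_mul] at hx
      exact (smul_mem_hexSet hθ).2 hx
  have henergy := rieszEnergy_map_of_dist_eq_mul (α := α) hθ hdist μ
  rw [finrank_euclideanSpace_fin, Nat.cast_ofNat] at henergy
  rw [← henergy]
  exact (hH.reaches_regular hV _ (hθ.trans hθη) (by linarith)).rieszW_le_rieszEnergy
    hH.measurableSet (by simp [hV]) (by simp [hV]) hα hδ hsub hmap

lemma Hex.rieszW_le_rieszEnergy_of_unitHex (hH : Hex H) (hV : volume H = 1)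
    (hα : α ∈ Ioo (0 : ℝ) 2) (hμ : ∀ᵐ x ∂μ, x ∈ unitHex 1 (√3 / 6) (2 / 3)) :
    rieszW α H ≤ rieszEnergy α μ := by
  have hlim : Tendsto (fun θ : ℝ => ENNReal.ofReal θ ^ (α - 2) * rieszEnergy α μ) (𝓝[<] 1)
      (𝓝 (ENNReal.ofReal 1 ^ (α - 2) * rieszEnergy α μ)) := by
    refine ENNReal.Tendsto.mul_const (Tendsto.mono_left ?_ nhdsWithin_le_nhds) (Or.inl (by simp))
    exact (ENNReal.continuous_rpow_const.comp ENNReal.continuous_ofReal).tendsto 1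
  rw [ENNReal.ofReal_one, ENNReal.one_rpow, one_mul] at hlim
  refine ge_of_tendsto hlim ?_
  filter_upwards [Ioo_mem_nhdsLT (zero_lt_one' ℝ)] with θ hθ
  exact hH.rieszW_le_rpow_mul_rieszEnergy hV hα hθ.1 hθ.2 hμ

lemma Hex.rieszW_le (hH : Hex H) (hV : volume H = 1) (hα : α ∈ Ioo (0 : ℝ) 2)
    (hreg : IsRegularHexagon Hstar) (hvol : volume Hstar = 1) : rieszW α H ≤ rieszW α Hstar := by
  obtain ⟨e, rfl⟩ := hreg.exists_eq_image_unitHex hvol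
  have hK : MeasurableSet (unitHex 1 (√3 / 6) (2 / 3)) :=
    (isCompact_hexSet (by positivity) (by positivity)
      (mul_nonneg zero_le_one (div_nonneg (by norm_num) (by positivity)))).measurableSet
  have himage : MeasurableSet (e '' unitHex 1 (√3 / 6) (2 / 3)) :=
    e.toHomeomorph.measurableEmbedding.measurableSet_image.2 hK
  rw [rieszW_eq_iInf_rieszEnergy α himage]
  refine le_iInf fun μ => le_iInf fun _ => le_iInf fun hμ => ?_
  have hesymm : Measurable e.symm := e.symm.continuous.measurable
  have := Measure.isProbabilityMeasure_map (μ := μ) hesymm.aemeasurable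
  have henergy := rieszEnergy_map_of_dist_eq_mul (α := α) one_pos
    (fun x y => by rw [one_mul, e.symm.dist_map]) μ
  rw [ENNReal.ofReal_one, ENNReal.one_rpow, one_mul] at henergy
  rw [← henergy]
  refine hH.rieszW_le_rieszEnergy_of_unitHex hV hα ((ae_map_iff hesymm.aemeasurable hK).2 ?_)
  have hae : ∀ᵐ x ∂μ, x ∈ e '' unitHex 1 (√3 / 6) (2 / 3) := (prob_compl_eq_zero_iff himage).2 hμ
  filter_upwards [hae]
  rintro _ ⟨x, hx, rfl⟩
  rwa [e.symm_apply_apply]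

end Comparison

/-- For `α ∈ (0,2)`, among convex polygons of unit area tiling the plane
by translations, the regular hexagon minimizes the Riesz `α`-capacity (equivalently,
maximizes `W_α`). -/
theorem statement13 (α : ℝ) (hα : α ∈ Set.Ioo (0 : ℝ) 2)
    (Hstar : Set E2) (hreg : IsRegularHexagon Hstar) (hvolstar : volume Hstar = 1) :
    ∀ H : Set E2, Hex H → volume H = 1 →
      rieszCap α Hstar ≤ rieszCap α H ∧ rieszW α H ≤ rieszW α Hstar := by
  intro H hH hV
  have h := hH.rieszW_le hV hα hreg hvolstar
  exact ⟨ENNReal.div_le_div_left h 1, h⟩
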